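/- Let M > M₁(Ω₁) and let u^ε be the strictly k-convex solution of problem (2.1), assumed C² up to ∂Ω₁. Then there exists a constant C > 0, depending on n, k, Ω₁ and M but independent of ε, such that |D²u^ε(p)| < C for every p ∈ ∂Ω₁, where |D²u^ε(p)| denotes the operator norm of the Hessian matrix. -/

import Mathlib

open Set Metric Filter Topology Bornology
open scoped RealInnerProductSpace

noncomputable section

/-- Euclidean `n`-space. -/
abbrev Euc (n : ℕ) := EuclideanSpace ℝ (Fin n)

/-- The `k`-th elementary symmetric polynomial of a vector `lam ∈ ℝⁿ`. -/
def esymmVec {n : ℕ} (k : ℕ) (lam : Fin n → ℝ) : ℝ :=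
  ∑ S ∈ Finset.powersetCard k (Finset.univ : Finset (Fin n)), ∏ i ∈ S, lam i

/-- `σ_k(A)`: the `k`-th elementary symmetric polynomial of the eigenvalues of a
symmetric matrix `A` (junk value `0` if `A` is not symmetric). -/
noncomputable def sigmaMat {n : ℕ} (k : ℕ) (A : Matrix (Fin n) (Fin n) ℝ) : ℝ := by
  classical exact if h : A.IsHermitian then esymmVec k h.eigenvalues else 0

/-- The eigenvalues of the symmetric matrix `A` lie in the Gårding cone
`Γ_k = {λ : σ_j(λ) > 0, j = 1, …, k}`. -/
def InGardingCone {n : ℕ} (k : ℕ) (A : Matrix (Fin n) (Fin n) ℝ) : Prop :=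
  ∃ h : A.IsHermitian, ∀ j : ℕ, 1 ≤ j → j ≤ k → 0 < esymmVec j h.eigenvalues

/-- The Hessian matrix of `u` at `x`, with derivatives taken within the set `s`. -/
noncomputable def hessianWithin {n : ℕ} (u : Euc n → ℝ) (s : Set (Euc n)) (x : Euc n) :
    Matrix (Fin n) (Fin n) ℝ :=
  fun i j => iteratedFDerivWithin ℝ 2 u s x
    ![EuclideanSpace.single i (1:ℝ), EuclideanSpace.single j (1:ℝ)]

/-- The Hessian matrix `D²u(x)` of `u` at `x`. -/
noncomputable def hessian {n : ℕ} (u : Euc n → ℝ) (x : Euc n) : Matrix (Fin n) (Fin n) ℝ :=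
  fun i j => iteratedFDeriv ℝ 2 u x
    ![EuclideanSpace.single i (1:ℝ), EuclideanSpace.single j (1:ℝ)]

/-- Operator norm of the Hessian matrix of `u` at `x` (derivatives within `s`). -/
noncomputable def hessOpNormWithin {n : ℕ} (u : Euc n → ℝ) (s : Set (Euc n)) (x : Euc n) : ℝ :=
  ‖Matrix.toEuclideanCLM (𝕜 := ℝ) (hessianWithin u s x)‖

/-- A set has smooth boundary: it is the sublevel set of a smooth defining function
with nonvanishing differential on the boundary. -/
def HasSmoothBoundary {n : ℕ} (Ω : Set (Euc n)) : Prop :=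
  ∃ ρ : Euc n → ℝ, ContDiff ℝ (⊤ : ℕ∞) ρ ∧ Ω = {x | ρ x < 0} ∧
    ∀ x ∈ frontier Ω, fderiv ℝ ρ x ≠ 0

/-- `c_{n,k} = (C(n,k))^{1/k}` where `C(n,k)` is the binomial coefficient. -/
noncomputable def cnk (n k : ℕ) : ℝ := (n.choose k : ℝ) ^ ((1:ℝ)/(k:ℝ))

/-- The radially symmetric subsolution `|x - x₀|²/(2c_{n,k}) − ε²/(2c_{n,k}) − M`. -/
noncomputable def underSol {n : ℕ} (k : ℕ) (x₀ : Euc n) (ε M : ℝ) (x : Euc n) : ℝ :=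
  ‖x - x₀‖^2 / (2 * cnk n k) - ε^2 / (2 * cnk n k) - M

/-- The closed ring `Ω̄^ε = closure (Ω₁ \ B̄_ε(x₀))`. -/
def ringSet {n : ℕ} (Ω₁ : Set (Euc n)) (x₀ : Euc n) (ε : ℝ) : Set (Euc n) :=
  closure (Ω₁ \ closedBall x₀ ε)

/-- `u` is a strictly `k`-convex solution of problem (2.1):
`σ_k(D²u) = 1` in `Ω^ε = Ω₁ \ B̄_ε(x₀)`, `u = 0` on `∂Ω₁`, `u = −M` on `∂B_ε(x₀)`,
with `u ∈ C²(Ω̄^ε)`. -/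
def IsSol {n : ℕ} (k : ℕ) (Ω₁ : Set (Euc n)) (x₀ : Euc n) (ε M : ℝ) (u : Euc n → ℝ) : Prop :=
  ContDiffOn ℝ 2 u (ringSet Ω₁ x₀ ε) ∧
  (∀ x ∈ Ω₁ \ closedBall x₀ ε,
      InGardingCone k (hessianWithin u (ringSet Ω₁ x₀ ε) x) ∧
      sigmaMat k (hessianWithin u (ringSet Ω₁ x₀ ε) x) = 1) ∧
  (∀ x ∈ frontier Ω₁, u x = 0) ∧
  (∀ x ∈ sphere x₀ ε, u x = -M)

/-- `ψ` is a strictly `k`-convex solution of problem (2.2):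
`σ_k(D²ψ) = 1` in `Ω₁`, `ψ = 0` on `∂Ω₁`, with `ψ ∈ C^∞(Ω̄₁)`. -/
def IsSol22 {n : ℕ} (k : ℕ) (Ω₁ : Set (Euc n)) (ψ : Euc n → ℝ) : Prop :=
  ContDiffOn ℝ (⊤ : ℕ∞) ψ (closure Ω₁) ∧
  (∀ x ∈ Ω₁, InGardingCone k (hessianWithin ψ (closure Ω₁) x) ∧
      sigmaMat k (hessianWithin ψ (closure Ω₁) x) = 1) ∧
  (∀ x ∈ frontier Ω₁, ψ x = 0)

/-- `u` is a strictly `k`-convex solution of the Dirichlet problem on the convex ring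
`Ω = Ω₁ \ Ω̄₂`: `σ_k(D²u) = 1` in `Ω`, `u = 0` on `∂Ω₁`, `u = −M` on `∂Ω₂`,
with `u ∈ C²(Ω̄)`. -/
def IsSolRing {n : ℕ} (k : ℕ) (Ω₁ Ω₂ : Set (Euc n)) (M : ℝ) (u : Euc n → ℝ) : Prop :=
  ContDiffOn ℝ 2 u (closure (Ω₁ \ closure Ω₂)) ∧
  (∀ x ∈ Ω₁ \ closure Ω₂,
      InGardingCone k (hessianWithin u (closure (Ω₁ \ closure Ω₂)) x) ∧
      sigmaMat k (hessianWithin u (closure (Ω₁ \ closure Ω₂)) x) = 1) ∧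
  (∀ x ∈ frontier Ω₁, u x = 0) ∧
  (∀ x ∈ frontier Ω₂, u x = -M)

/-- The extension `ũ` of `u`, equal to `−M` on the closed ball `B̄_ε(x₀)`. -/
noncomputable def extendBy {n : ℕ} (u : Euc n → ℝ) (x₀ : Euc n) (ε M : ℝ) (x : Euc n) : ℝ := by
  classical exact if x ∈ closedBall x₀ ε then -M else u x

/-- The extension `ũ` of `u`, equal to `−M` on the set `Ω₂`. -/
noncomputable def extendOn {n : ℕ} (u : Euc n → ℝ) (Ω₂ : Set (Euc n)) (M : ℝ) (x : Euc n) : ℝ := by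
  classical exact if x ∈ Ω₂ then -M else u x

/-- The quadratic polynomial with Hessian `A`, linear part `b` and constant term `c`. -/
noncomputable def quadPoly {n : ℕ} (A : Matrix (Fin n) (Fin n) ℝ) (b : Euc n) (c : ℝ)
    (x : Euc n) : ℝ :=
  (∑ i, ∑ j, A i j * x i * x j) / 2 + ⟪b, x⟫ + c

/-!
Everything rests on the set `K` of symmetric forms with `σ_j ≥ 1` for `j ≤ k`. By Gårding's
concavity theorem `K` is convex; it is invariant under rotations, under adding nonnegative forms,
and under multiplication by constants `≥ 1`. A function whose second-order expansions lie in `K`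
therefore satisfies the comparison principle against one whose expansions are never of the form
`s • B` with `s > 1` and `B ∈ K`.

Comparison with multiples of `ψ`, with the radial subsolution and with a radial barrier near the
inner sphere gives `-M ≤ u ≤ ψ`, `A ψ ≤ u` and a bound on the growth of `u` off the inner sphere.
Scaled and rotated copies of `u` are again subsolutions, and comparing them with `u` bounds the
gradient away from the inner ball. Since the domain is not round, the mixed second derivatives need
a Killing field tangent to `∂Ω₁` to second order at the boundary point: moving `u` along it changes
the boundary values by `O(|x - p|²)` only, which the barrier built from `u - A ψ` and `|x - p|²`
absorbs. It follows that on `∂Ω₁`, where `Du = r Dψ`, the form `D²u - r D²ψ` is bounded up to its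
double normal entry `m`. Since `D²ψ` stays in the interior of the Gårding cone, a large `m` would
give `D²u = s • B` with `s > 1` and `B ∈ K`, contradicting `σ_k(D²u) = 1`; a very negative `m` would
make the trace of `D²u` negative. The Hopf lemma ensures `Dψ ≠ 0` on `∂Ω₁`.
-/

namespace KHessian

/-! ### Elementary symmetric polynomials and the Gårding cone -/

section

section Newton

open Polynomial

lemma splits_derivative {p : ℝ[X]} (hp : p.Splits) : (derivative p).Splits := by
  rw [splits_iff_card_roots] at hp ⊢
  have h_rolle := card_roots_le_derivative p
  have h_card := card_roots' (derivative p)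
  have h_degree := natDegree_derivative_le p
  omega

lemma splits_iterate_derivative {p : ℝ[X]} (hp : p.Splits) (j : ℕ) :
    (derivative^[j] p).Splits := by
  induction j with
  | zero => exact hp
  | succ j ih => rw [Function.iterate_succ_apply']; exact splits_derivative ih

lemma eval_mul_eval_derivative_derivative_le_sq {R : Type*} [Field R] [LinearOrder R]
    [IsStrictOrderedRing R] {p : R[X]} (hp : p.Splits) (x : R) :
    p.eval x * (derivative (derivative p)).eval x ≤ (derivative p).eval x ^ 2 := by
  induction hp using Submonoid.closure_induction with
  | mem y hy => rcases hy with ⟨a, rfl⟩ | ⟨a, rfl⟩ <;> simp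
  | one => simp
  | mul q r _ _ hq hr =>
    simp only [derivative_mul, eval_mul, eval_add, derivative_add]
    nlinarith [mul_nonneg (sq_nonneg (q.eval x)) (sub_nonneg.2 hr),
      mul_nonneg (sq_nonneg (r.eval x)) (sub_nonneg.2 hq)]

lemma coeff_mul_coeff_le_sq {p : ℝ[X]} (hp : p.Splits) (j : ℕ) :
    p.coeff j * p.coeff (j + 2) ≤ p.coeff (j + 1) ^ 2 := by
  have h := eval_mul_eval_derivative_derivative_le_sq (splits_iterate_derivative hp j) 0
  simp only [← Function.iterate_succ_apply' derivative, ← coeff_zero_eq_eval_zero,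
    coeff_iterate_derivative, Nat.succ_eq_add_one, zero_add, Nat.descFactorial_self,
    nsmul_eq_mul, add_assoc, one_add_one_eq_two] at h
  have h_fact₁ : ((j + 1).factorial : ℝ) = (j + 1) * j.factorial := by
    rw [Nat.factorial_succ]; push_cast; ring
  have h_fact₂ : ((j + 2).factorial : ℝ) = (j + 2) * ((j + 1) * j.factorial) := by
    rw [Nat.factorial_succ (j + 1), h_fact₁.symm]; push_cast; ring
  rw [h_fact₁, h_fact₂] at h
  have h_newton : (j + 2) * (p.coeff j * p.coeff (j + 2)) ≤ (j + 1) * p.coeff (j + 1) ^ 2 := by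
    have h_pos : (0 : ℝ) < (j + 1) * j.factorial ^ 2 := by positivity
    refine le_of_mul_le_mul_left ?_ h_pos
    linarith
  nlinarith [sq_nonneg (p.coeff (j + 1)), (Nat.cast_nonneg j : (0 : ℝ) ≤ j)]

end Newton

section ElementarySymmetric

variable {ι : Type*}

/-- The `j`-th elementary symmetric polynomial of the entries of `x` indexed by `s`. Arbitrary
index sets are allowed so that one can induct by erasing an index. -/
def esymmOn (s : Finset ι) (j : ℕ) (x : ι → ℝ) : ℝ :=
  ∑ t ∈ s.powersetCard j, ∏ i ∈ t, x i

/-- The polynomial `∏ (1 + xᵢ X)`, whose coefficients are the elementary symmetric polynomials. -/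
def esymmGen (s : Finset ι) (x : ι → ℝ) : Polynomial ℝ :=
  ∏ i ∈ s, (1 + Polynomial.C (x i) * Polynomial.X)

lemma coeff_esymmGen (s : Finset ι) (x : ι → ℝ) (j : ℕ) :
    (esymmGen s x).coeff j = esymmOn s j x := by
  classical
  have h_coeff (t : Finset ι) : (∏ i ∈ t, (Polynomial.C (x i) * Polynomial.X)).coeff j
      = if t.card = j then ∏ i ∈ t, x i else 0 := by
    rw [Finset.prod_mul_distrib, Finset.prod_const, ← map_prod, Polynomial.coeff_C_mul,
      Polynomial.coeff_X_pow]
    simp [eq_comm]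
  rw [esymmGen, Finset.prod_one_add, Polynomial.finsetSum_coeff, esymmOn,
    Finset.powersetCard_eq_filter, Finset.sum_filter]
  exact Finset.sum_congr rfl fun t _ => h_coeff t

lemma splits_esymmGen (s : Finset ι) (x : ι → ℝ) : (esymmGen s x).Splits := by
  refine Polynomial.Splits.prod fun i _ => Polynomial.Splits.of_natDegree_le_one ?_
  rw [add_comm, ← Polynomial.C_1]
  exact Polynomial.natDegree_linear_le

lemma esymmOn_mul_esymmOn_le_sq (s : Finset ι) (x : ι → ℝ) (j : ℕ) :
    esymmOn s j x * esymmOn s (j + 2) x ≤ esymmOn s (j + 1) x ^ 2 := by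
  simpa only [coeff_esymmGen] using coeff_mul_coeff_le_sq (splits_esymmGen s x) j

@[simp] lemma esymmOn_zero (s : Finset ι) (x : ι → ℝ) : esymmOn s 0 x = 1 := by
  simp [esymmOn]

lemma esymmOn_one (s : Finset ι) (x : ι → ℝ) : esymmOn s 1 x = ∑ i ∈ s, x i := by
  simp [esymmOn, Finset.powersetCard_one]

lemma esymmOn_smul (s : Finset ι) (j : ℕ) (c : ℝ) (x : ι → ℝ) :
    esymmOn s j (c • x) = c ^ j * esymmOn s j x := by
  rw [esymmOn, esymmOn, Finset.mul_sum]
  refine Finset.sum_congr rfl fun t ht => ?_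
  simp [Finset.prod_mul_distrib, (Finset.mem_powersetCard.1 ht).2]

lemma esymmOn_comp_perm [Fintype ι] (σ : Equiv.Perm ι) (j : ℕ) (x : ι → ℝ) :
    esymmOn Finset.univ j (x ∘ σ) = esymmOn Finset.univ j x := by
  rw [← coeff_esymmGen, ← coeff_esymmGen, esymmGen, esymmGen]
  exact congrArg (Polynomial.coeff · j)
    (Equiv.prod_comp σ fun i => 1 + Polynomial.C (x i) * Polynomial.X)

variable [DecidableEq ι] {s : Finset ι}

lemma esymmOn_succ_eq_erase {i : ι} (hi : i ∈ s) (x : ι → ℝ) (j : ℕ) :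
    esymmOn s (j + 1) x = esymmOn (s.erase i) (j + 1) x + x i * esymmOn (s.erase i) j x := by
  have h_gen : esymmGen s x = (1 + Polynomial.C (x i) * Polynomial.X) * esymmGen (s.erase i) x :=
    (Finset.mul_prod_erase s _ hi).symm
  simp only [← coeff_esymmGen, h_gen, add_mul, one_mul, Polynomial.coeff_add, mul_assoc,
    Polynomial.coeff_C_mul, Polynomial.coeff_X_mul]

/-- Euler's identity: the two sides are the `j`-th coefficients of `esymmGen s x` differentiated
in `X`. -/
lemma succ_mul_esymmOn_succ (s : Finset ι) (x : ι → ℝ) (j : ℕ) :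
    (j + 1) * esymmOn s (j + 1) x = ∑ i ∈ s, x i * esymmOn (s.erase i) j x := by
  have h_deriv : Polynomial.derivative (esymmGen s x)
      = ∑ i ∈ s, esymmGen (s.erase i) x * Polynomial.C (x i) := by
    rw [esymmGen, Polynomial.derivative_prod_finset]
    exact Finset.sum_congr rfl fun i _ => by simp [esymmGen]
  have h_coeff := congrArg (Polynomial.coeff · j) h_deriv
  simp only [Polynomial.coeff_derivative, Polynomial.finsetSum_coeff, Polynomial.coeff_mul_C,
    coeff_esymmGen] at h_coeff
  rw [mul_comm, h_coeff]
  exact Finset.sum_congr rfl fun i _ => mul_comm _ _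

end ElementarySymmetric

section GardingCone

variable {ι : Type*} {s : Finset ι} {j k : ℕ} {x y : ι → ℝ}

/-- The Gårding cone `Γ_k` of vectors indexed by `s`. The condition at `j = 0` is automatic. -/
def gardingCone (k : ℕ) (s : Finset ι) : Set (ι → ℝ) := {x | ∀ j ≤ k, 0 < esymmOn s j x}

/-- The quotient `σ_{j+1} / σ_j`, the building block of Gårding's concavity theorem. -/
def esymmQuot (s : Finset ι) (j : ℕ) (x : ι → ℝ) : ℝ := esymmOn s (j + 1) x / esymmOn s j x

/-- The vectors with `σ_j ≥ 1` for all `j ≤ k`. On `Γ_k` this is the superlevel set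
`{σ_k ≥ 1}`. -/
def unitSuperlevel (k : ℕ) (s : Finset ι) : Set (ι → ℝ) := {x | ∀ j ≤ k, 1 ≤ esymmOn s j x}

lemma gardingCone_anti (hjk : j ≤ k) : gardingCone k s ⊆ gardingCone j s :=
  fun _ hx i hi => hx i (hi.trans hjk)

lemma unitSuperlevel_subset_gardingCone : unitSuperlevel k s ⊆ gardingCone k s :=
  fun _ hx j hj => zero_lt_one.trans_le (hx j hj)

lemma smul_mem_gardingCone (hx : x ∈ gardingCone k s) {c : ℝ} (hc : 0 < c) :
    c • x ∈ gardingCone k s := fun j hj => by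
  rw [esymmOn_smul]
  exact mul_pos (pow_pos hc j) (hx j hj)

lemma esymmQuot_pos (hx : x ∈ gardingCone k s) (hj : j < k) : 0 < esymmQuot s j x :=
  div_pos (hx (j + 1) hj) (hx j hj.le)

lemma esymmQuot_smul (hx : x ∈ gardingCone j s) {c : ℝ} (hc : 0 < c) :
    esymmQuot s j (c • x) = c * esymmQuot s j x := by
  have := hx j le_rfl
  rw [esymmQuot, esymmQuot, esymmOn_smul, esymmOn_smul, pow_succ]
  field_simp

lemma esymmOn_eq_prod_esymmQuot (hx : x ∈ gardingCone k s) :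
    esymmOn s k x = ∏ j ∈ Finset.range k, esymmQuot s j x := by
  induction k with
  | zero => simp
  | succ k ih =>
    have := hx k k.le_succ
    rw [Finset.prod_range_succ, ← ih (gardingCone_anti k.le_succ hx), esymmQuot]
    field_simp

lemma esymmQuot_succ_le (hx : x ∈ gardingCone (k + 1) s) :
    esymmQuot s (k + 1) x ≤ esymmQuot s k x := by
  rw [esymmQuot, esymmQuot, div_le_div_iff₀ (hx (k + 1) le_rfl) (hx k k.le_succ)]
  linarith [esymmOn_mul_esymmOn_le_sq s x k]

lemma esymmQuot_anti (hx : x ∈ gardingCone k s) (hjk : j ≤ k) :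
    esymmQuot s k x ≤ esymmQuot s j x := by
  induction k, hjk using Nat.le_induction with
  | base => exact le_rfl
  | succ k _ ih => exact (esymmQuot_succ_le hx).trans (ih (gardingCone_anti k.le_succ hx))

lemma mem_unitSuperlevel_of_one_le (hx : x ∈ gardingCone k s) (h_one : 1 ≤ esymmOn s k x) :
    x ∈ unitSuperlevel k s := by
  induction k with
  | zero => intro j hj; rwa [Nat.le_zero.1 hj]
  | succ k ih =>
    have hx' := gardingCone_anti k.le_succ hx
    have h_one' : 1 ≤ esymmOn s k x := by
      by_contra! h_lt
      have h_quot : 1 < esymmQuot s k x := by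
        rw [esymmQuot, one_lt_div (hx' k le_rfl)]
        exact h_lt.trans_le h_one
      refine h_lt.not_ge ?_
      rw [esymmOn_eq_prod_esymmQuot hx']
      exact Finset.one_le_prod fun j hj =>
        h_quot.le.trans (esymmQuot_anti hx' (Finset.mem_range.1 hj).le)
    intro j hj
    rcases hj.lt_or_eq with hj | rfl
    · exact ih hx' h_one' j (Nat.lt_succ_iff.1 hj)
    · exact h_one

section Erase

variable [DecidableEq ι]

lemma mem_gardingCone_erase (hx : x ∈ gardingCone (k + 1) s) {i : ι} (hi : i ∈ s) :
    x ∈ gardingCone k (s.erase i) := by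
  intro j
  induction j with
  | zero => intro _; simp
  | succ j ih =>
    intro hj
    have h_prev := ih (by omega)
    by_contra! h_nonpos
    have h_pos₁ := hx (j + 1) (by omega)
    have h_pos₂ := hx (j + 1 + 1) (by omega)
    rw [esymmOn_succ_eq_erase hi] at h_pos₁ h_pos₂
    have h_newton := esymmOn_mul_esymmOn_le_sq (s.erase i) x j
    have hxi : 0 < x i := (pos_iff_pos_of_mul_pos (by linarith)).2 h_prev
    nlinarith [mul_pos hxi h_prev, mul_pos h_prev h_pos₂,
      mul_nonneg (neg_nonneg.2 h_nonpos) h_pos₁.le]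

lemma add_esymmQuot_erase_pos (hx : x ∈ gardingCone (k + 1) s) {i : ι} (hi : i ∈ s) :
    0 < x i + esymmQuot (s.erase i) k x := by
  have h_erase := mem_gardingCone_erase hx hi k le_rfl
  have h_succ := hx (k + 1) le_rfl
  rw [esymmOn_succ_eq_erase hi] at h_succ
  rw [esymmQuot, ← mul_lt_mul_iff_of_pos_right h_erase, zero_mul, add_mul,
    div_mul_cancel₀ _ h_erase.ne']
  linarith

lemma mul_esymmQuot_succ (hx : x ∈ gardingCone (k + 1) s) :
    ((k : ℝ) + 2) * esymmQuot s (k + 1) x = ∑ i ∈ s,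
      x i * esymmQuot (s.erase i) k x / (x i + esymmQuot (s.erase i) k x) := by
  have h_euler := succ_mul_esymmOn_succ s x (k + 1)
  rw [Nat.cast_succ, add_assoc, one_add_one_eq_two] at h_euler
  rw [esymmQuot, ← mul_div_assoc, h_euler, Finset.sum_div]
  refine Finset.sum_congr rfl fun i hi => ?_
  have h_erase := mem_gardingCone_erase hx hi k le_rfl
  have h_succ : esymmOn s (k + 1) x
      = (x i + esymmQuot (s.erase i) k x) * esymmOn (s.erase i) k x := by
    rw [esymmOn_succ_eq_erase hi, esymmQuot, add_mul, div_mul_cancel₀ _ h_erase.ne', add_comm]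
  have h_num : esymmOn (s.erase i) (k + 1) x
      = esymmQuot (s.erase i) k x * esymmOn (s.erase i) k x :=
    (div_mul_cancel₀ _ h_erase.ne').symm
  rw [h_succ, h_num, ← mul_assoc, mul_div_mul_right _ _ h_erase.ne']

end Erase

lemma mul_div_add_superadditive {a b c d : ℝ} (hab : 0 < a + b) (hcd : 0 < c + d) :
    a * b / (a + b) + c * d / (c + d) ≤ (a + c) * (b + d) / ((a + c) + (b + d)) := by
  rw [div_add_div _ _ hab.ne' hcd.ne', div_le_div_iff₀ (mul_pos hab hcd) (by linarith)]
  nlinarith [sq_nonneg (a * d - b * c)]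

lemma mul_div_add_mono {a b d : ℝ} (hab : 0 < a + b) (hbd : b ≤ d) :
    a * b / (a + b) ≤ a * d / (a + d) := by
  rw [div_le_div_iff₀ hab (by linarith)]
  nlinarith [mul_nonneg (sq_nonneg a) (sub_nonneg.2 hbd)]

/-- Both claims go through one induction: by `mul_esymmQuot_succ` each quotient is a sum of
parallel sums of quotients of lower degree, and the parallel sum is monotone and superadditive. -/
lemma add_mem_gardingCone_and_esymmQuot_add_le (k : ℕ) : ∀ (s : Finset ι) (x y : ι → ℝ),
    x ∈ gardingCone k s → y ∈ gardingCone k s →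
    x + y ∈ gardingCone k s ∧ esymmQuot s k x + esymmQuot s k y ≤ esymmQuot s k (x + y) := by
  classical
  induction k with
  | zero =>
    intro s x y _ _
    refine ⟨fun j hj => by simp [Nat.le_zero.1 hj], ?_⟩
    simp [esymmQuot, esymmOn_one, Finset.sum_add_distrib]
  | succ k ih =>
    intro s x y hx hy
    obtain ⟨h_add, h_quot⟩ :=
      ih s x y (gardingCone_anti k.le_succ hx) (gardingCone_anti k.le_succ hy)
    have h_add_succ : x + y ∈ gardingCone (k + 1) s := by
      intro j hj
      rcases hj.lt_or_eq with hj | rfl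
      · exact h_add j (Nat.lt_succ_iff.1 hj)
      · have h_pos := esymmQuot_pos hx k.lt_succ_self
        have h_pos' := esymmQuot_pos hy k.lt_succ_self
        exact (div_pos_iff_of_pos_right (h_add k le_rfl)).1
          (show 0 < esymmQuot s k (x + y) by linarith)
    refine ⟨h_add_succ, le_of_mul_le_mul_left ?_ (by positivity : (0 : ℝ) < k + 2)⟩
    rw [mul_add, mul_esymmQuot_succ hx, mul_esymmQuot_succ hy, mul_esymmQuot_succ h_add_succ,
      ← Finset.sum_add_distrib]
    refine Finset.sum_le_sum fun i hi => ?_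
    have h_den := add_esymmQuot_erase_pos hx hi
    have h_den' := add_esymmQuot_erase_pos hy hi
    exact (mul_div_add_superadditive h_den h_den').trans <| mul_div_add_mono (by linarith)
      (ih _ x y (mem_gardingCone_erase hx hi) (mem_gardingCone_erase hy hi)).2

lemma rpow_mul_rpow_le_esymmQuot (hx : x ∈ gardingCone k s) (hy : y ∈ gardingCone k s) {a b : ℝ}
    (ha : 0 < a) (hb : 0 < b) (hab : a + b = 1) (hj : j < k) :
    esymmQuot s j x ^ a * esymmQuot s j y ^ b ≤ esymmQuot s j (a • x + b • y) := by
  have hxj := gardingCone_anti hj.le hx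
  have hyj := gardingCone_anti hj.le hy
  calc esymmQuot s j x ^ a * esymmQuot s j y ^ b
      ≤ a * esymmQuot s j x + b * esymmQuot s j y :=
        Real.geom_mean_le_arith_mean2_weighted ha.le hb.le (esymmQuot_pos hx hj).le
          (esymmQuot_pos hy hj).le hab
    _ = esymmQuot s j (a • x) + esymmQuot s j (b • y) := by
        rw [esymmQuot_smul hxj ha, esymmQuot_smul hyj hb]
    _ ≤ esymmQuot s j (a • x + b • y) :=
        (add_mem_gardingCone_and_esymmQuot_add_le j s _ _ (smul_mem_gardingCone hxj ha)
          (smul_mem_gardingCone hyj hb)).2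

lemma esymmOn_log_concave (hx : x ∈ gardingCone k s) (hy : y ∈ gardingCone k s) {a b : ℝ}
    (ha : 0 < a) (hb : 0 < b) (hab : a + b = 1) :
    esymmOn s k x ^ a * esymmOn s k y ^ b ≤ esymmOn s k (a • x + b • y) := by
  have hxy := (add_mem_gardingCone_and_esymmQuot_add_le k s _ _ (smul_mem_gardingCone hx ha)
    (smul_mem_gardingCone hy hb)).1
  have h_nonneg {z : ι → ℝ} (hz : z ∈ gardingCone k s) : ∀ j ∈ Finset.range k,
      0 ≤ esymmQuot s j z := fun j hj => (esymmQuot_pos hz (Finset.mem_range.1 hj)).le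
  rw [esymmOn_eq_prod_esymmQuot hx, esymmOn_eq_prod_esymmQuot hy, esymmOn_eq_prod_esymmQuot hxy,
    ← Real.finsetProd_rpow _ _ (h_nonneg hx), ← Real.finsetProd_rpow _ _ (h_nonneg hy),
    ← Finset.prod_mul_distrib]
  exact Finset.prod_le_prod
    (fun j hj => mul_nonneg (Real.rpow_nonneg (h_nonneg hx j hj) _)
      (Real.rpow_nonneg (h_nonneg hy j hj) _))
    fun j hj => rpow_mul_rpow_le_esymmQuot hx hy ha hb hab (Finset.mem_range.1 hj)

lemma convex_unitSuperlevel (k : ℕ) (s : Finset ι) : Convex ℝ (unitSuperlevel k s) := by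
  rw [convex_iff_forall_pos]
  intro x hx y hy a b ha hb hab
  have hx' := unitSuperlevel_subset_gardingCone hx
  have hy' := unitSuperlevel_subset_gardingCone hy
  refine mem_unitSuperlevel_of_one_le (add_mem_gardingCone_and_esymmQuot_add_le k s _ _
    (smul_mem_gardingCone hx' ha) (smul_mem_gardingCone hy' hb)).1 ?_
  exact (one_le_mul_of_one_le_of_one_le (Real.one_le_rpow (hx k le_rfl) ha.le)
    (Real.one_le_rpow (hy k le_rfl) hb.le)).trans (esymmOn_log_concave hx' hy' ha hb hab)

end GardingCone

end

/-! ### Admissible matrices -/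

section

section SymmetricFunctions

variable {ι : Type*} [Fintype ι] {k : ℕ} {x : ι → ℝ}

lemma comp_perm_mem_unitSuperlevel (hx : x ∈ unitSuperlevel k Finset.univ) (σ : Equiv.Perm ι) :
    x ∘ σ ∈ unitSuperlevel k Finset.univ := fun j hj => by
  rw [esymmOn_comp_perm]
  exact hx j hj

open Matrix in
lemma mulVec_mem_unitSuperlevel [DecidableEq ι] (hx : x ∈ unitSuperlevel k Finset.univ)
    {S : Matrix ι ι ℝ} (hS : S ∈ doublyStochastic ℝ ι) :
    S *ᵥ x ∈ unitSuperlevel k Finset.univ := by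
  rw [← SetLike.mem_coe, doublyStochastic_eq_convexHull_permMatrix] at hS
  have h_convex : Convex ℝ ((fun S : Matrix ι ι ℝ => S *ᵥ x) ⁻¹' unitSuperlevel k Finset.univ) :=
    (convex_unitSuperlevel k Finset.univ).linear_preimage ((Matrix.mulVecBilin ℝ ℝ).flip x)
  refine convexHull_min ?_ h_convex hS
  rintro _ ⟨σ, rfl⟩
  rw [mem_preimage, Matrix.permMatrix_mulVec]
  exact comp_perm_mem_unitSuperlevel hx σ

lemma mem_unitSuperlevel_of_le {η T : ℝ} (hk : k ≤ Fintype.card ι) (hη : 0 < η)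
    (hηx : ∀ i, η ≤ x i) {i₀ : ι} (hT : T ≤ x i₀) (hTη : ∀ j < k, 1 ≤ T * η ^ j) :
    x ∈ unitSuperlevel k Finset.univ := by
  classical
  have hx_pos : ∀ i, 0 < x i := fun i => hη.trans_le (hηx i)
  rintro (_ | j) hj
  · rw [esymmOn_zero]
  obtain ⟨t, hi₀t, -, ht_card⟩ := Finset.exists_subsuperset_card_eq (Finset.subset_univ {i₀})
    (n := j + 1) (by simp) (hj.trans hk)
  rw [Finset.singleton_subset_iff] at hi₀t
  have h_erase : η ^ j ≤ ∏ i ∈ t.erase i₀, x i := by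
    have h := Finset.prod_le_prod (s := t.erase i₀) (fun _ _ => hη.le) (fun i _ => hηx i)
    rwa [Finset.prod_const, Finset.card_erase_of_mem hi₀t, ht_card, Nat.add_sub_cancel] at h
  calc 1 ≤ T * η ^ j := hTη j hj
    _ ≤ x i₀ * ∏ i ∈ t.erase i₀, x i := mul_le_mul hT h_erase (by positivity) (hx_pos i₀).le
    _ = ∏ i ∈ t, x i := Finset.mul_prod_erase t x hi₀t
    _ ≤ esymmOn Finset.univ (j + 1) x :=
        Finset.single_le_sum (f := fun t => ∏ i ∈ t, x i)
          (fun t _ => Finset.prod_nonneg fun i _ => (hx_pos i).le) (by simp [ht_card])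

end SymmetricFunctions

section Matrices

open Matrix

variable {ι : Type*} [Fintype ι] [DecidableEq ι] {k : ℕ} {A B V : Matrix ι ι ℝ}

/-- The `j`-th coefficient of `det (1 + X A)`: the `j`-th elementary symmetric polynomial of the
eigenvalues of `A`, as a function that is visibly polynomial in the entries of `A`. -/
def sigmaCoeff (j : ℕ) (A : Matrix ι ι ℝ) : ℝ := (-A).charpolyRev.coeff j

lemma sigmaCoeff_diagonal (j : ℕ) (d : ι → ℝ) :
    sigmaCoeff j (diagonal d) = esymmOn Finset.univ j d := by
  have h_diag : (1 : Matrix ι ι (Polynomial ℝ)) - (Polynomial.X : Polynomial ℝ) •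
      (-diagonal d).map Polynomial.C =
      diagonal fun i => 1 + Polynomial.C (d i) * Polynomial.X := by
    rw [diagonal_neg, diagonal_map (map_zero _), ← diagonal_smul, ← diagonal_one, diagonal_sub]
    congr 1
    ext1 i
    rw [Pi.smul_apply, map_neg, smul_eq_mul, mul_neg, sub_neg_eq_add, mul_comm]
  rw [sigmaCoeff, ← coeff_esymmGen, charpolyRev, h_diag, det_diagonal, esymmGen]

lemma sigmaCoeff_conj (hV : V ∈ unitaryGroup ι ℝ) (j : ℕ) (A : Matrix ι ι ℝ) :
    sigmaCoeff j (star V * A * V) = sigmaCoeff j A := by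
  have h_neg : -(star V * A * V) = star V * -A * V := by rw [mul_neg, neg_mul]
  rw [sigmaCoeff, sigmaCoeff, ← reverse_charpoly, ← reverse_charpoly, h_neg,
    Matrix.charpoly_mul_comm, ← mul_assoc, (mem_unitaryGroup_iff).1 hV, one_mul]

lemma eq_conj_diagonal (hA : A.IsHermitian) :
    A = hA.eigenvectorUnitary * diagonal hA.eigenvalues *
      star (hA.eigenvectorUnitary : Matrix ι ι ℝ) := by
  have h := hA.spectral_theorem
  rwa [Unitary.conjStarAlgAut_apply] at h

lemma star_conj_eq_diagonal (hA : A.IsHermitian) :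
    star (hA.eigenvectorUnitary : Matrix ι ι ℝ) * A * hA.eigenvectorUnitary =
      diagonal hA.eigenvalues := by
  have hV : star (hA.eigenvectorUnitary : Matrix ι ι ℝ) * hA.eigenvectorUnitary = 1 :=
    mem_unitaryGroup_iff'.1 (SetLike.coe_mem _)
  conv_lhs => enter [1, 2]; rw [eq_conj_diagonal hA]
  rw [mul_assoc, mul_assoc, hV, mul_one, ← mul_assoc, hV, one_mul]

lemma sigmaCoeff_eq_esymmOn_eigenvalues (hA : A.IsHermitian) (j : ℕ) :
    sigmaCoeff j A = esymmOn Finset.univ j hA.eigenvalues := by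
  rw [← sigmaCoeff_diagonal, ← star_conj_eq_diagonal hA, sigmaCoeff_conj (SetLike.coe_mem _)]

lemma continuous_sigmaCoeff (j : ℕ) : Continuous (sigmaCoeff j : Matrix ι ι ℝ → ℝ) := by
  have h_eval : ∀ A : Matrix ι ι ℝ, sigmaCoeff j A =
      MvPolynomial.eval (fun p : ι × ι => (-A) p.1 p.2)
        ((charpoly.univ ℝ ι).coeff (Polynomial.revAt (Fintype.card ι) j)) := fun A => by
    rw [sigmaCoeff, ← reverse_charpoly, Polynomial.coeff_reverse, charpoly_natDegree_eq_dim]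
    exact (charpoly.univ_coeff_eval₂Hom ι (RingHom.id ℝ) (fun p => (-A) p.1 p.2) _).symm
  simp only [funext h_eval]
  exact (MvPolynomial.continuous_eval _).comp (by fun_prop)

lemma sigmaCoeff_smul (hA : A.IsHermitian) (c : ℝ) (j : ℕ) :
    sigmaCoeff j (c • A) = c ^ j * sigmaCoeff j A := by
  have hV := SetLike.coe_mem hA.eigenvectorUnitary
  have h_diag : star (hA.eigenvectorUnitary : Matrix ι ι ℝ) * (c • A) * hA.eigenvectorUnitary =
      diagonal (c • hA.eigenvalues) := by
    rw [mul_smul_comm, smul_mul_assoc, star_conj_eq_diagonal, diagonal_smul]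
  rw [← sigmaCoeff_conj hV, h_diag, sigmaCoeff_diagonal, esymmOn_smul,
    sigmaCoeff_eq_esymmOn_eigenvalues hA]

/-- The symmetric matrices with `σ_j ≥ 1` for all `j ≤ k`: the superlevel set `σ_k ≥ 1` of the
`k`-Hessian operator in its ellipticity cone `Γ_k`. -/
def admissibleMat (k : ℕ) (ι : Type*) [Fintype ι] [DecidableEq ι] : Set (Matrix ι ι ℝ) :=
  {A | A.IsHermitian ∧ ∀ j ≤ k, 1 ≤ sigmaCoeff j A}

lemma mem_admissibleMat_iff (hA : A.IsHermitian) :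
    A ∈ admissibleMat k ι ↔ hA.eigenvalues ∈ unitSuperlevel k Finset.univ := by
  simp only [admissibleMat, unitSuperlevel, mem_ofPred_eq, hA, true_and,
    sigmaCoeff_eq_esymmOn_eigenvalues hA]

lemma sq_apply_mem_doublyStochastic (hV : V ∈ unitaryGroup ι ℝ) :
    (of fun i j => V i j ^ 2) ∈ doublyStochastic ℝ ι := by
  rw [mem_doublyStochastic_iff_sum]
  refine ⟨fun i j => sq_nonneg (V i j), fun i => ?_, fun j => ?_⟩
  · simpa [Matrix.mul_apply, sq] using congrFun₂ (mem_unitaryGroup_iff.1 hV) i i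
  · simpa [Matrix.mul_apply, sq] using congrFun₂ (mem_unitaryGroup_iff'.1 hV) j j

lemma conj_diagonal_apply_self (V : Matrix ι ι ℝ) (d : ι → ℝ) (i : ι) :
    (V * diagonal d * star V) i i = ((of fun i j => V i j ^ 2) *ᵥ d) i := by
  rw [Matrix.mul_apply]
  refine Finset.sum_congr rfl fun j _ => ?_
  simp only [mul_diagonal, star_apply, star_trivial, of_apply]
  ring

-- Schur: in any orthonormal basis the diagonal is a doubly stochastic average of the eigenvalues.
lemma diag_conj_mem_unitSuperlevel (hA : A ∈ admissibleMat k ι) (hV : V ∈ unitaryGroup ι ℝ) :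
    diag (star V * A * V) ∈ unitSuperlevel k Finset.univ := by
  obtain ⟨hA_herm, -⟩ := id hA
  set Y : Matrix ι ι ℝ := star V * hA_herm.eigenvectorUnitary
  have hY : Y ∈ unitaryGroup ι ℝ :=
    mul_mem (Unitary.star_mem hV) (SetLike.coe_mem hA_herm.eigenvectorUnitary)
  have h_conj : star V * A * V = Y * diagonal hA_herm.eigenvalues * star Y := by
    conv_lhs => rw [eq_conj_diagonal hA_herm]
    simp only [Y, star_mul, star_star, mul_assoc]
  have h_diag : diag (star V * A * V) = (of fun i j => Y i j ^ 2) *ᵥ hA_herm.eigenvalues :=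
    funext fun i => by rw [diag_apply, h_conj, conj_diagonal_apply_self]
  rw [h_diag]
  exact mulVec_mem_unitSuperlevel ((mem_admissibleMat_iff hA_herm).1 hA)
    (sq_apply_mem_doublyStochastic hY)

lemma convex_admissibleMat (k : ℕ) (ι : Type*) [Fintype ι] [DecidableEq ι] :
    Convex ℝ (admissibleMat k ι) := by
  intro A hA B hB a b ha hb hab
  have hC : (a • A + b • B).IsHermitian :=
    (hA.1.smul (IsSelfAdjoint.all a)).add (hB.1.smul (IsSelfAdjoint.all b))
  obtain ⟨V, hV, hVC⟩ : ∃ V ∈ unitaryGroup ι ℝ,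
      star V * (a • A + b • B) * V = diagonal hC.eigenvalues :=
    ⟨_, SetLike.coe_mem _, star_conj_eq_diagonal hC⟩
  have h_eig : hC.eigenvalues = a • diag (star V * A * V) + b • diag (star V * B * V) := by
    have h := congrArg diag hVC
    rw [mul_add, add_mul, mul_smul_comm, mul_smul_comm, smul_mul_assoc, smul_mul_assoc, diag_add,
      diag_smul, diag_smul, diag_diagonal] at h
    exact h.symm
  rw [mem_admissibleMat_iff hC, h_eig]
  exact convex_unitSuperlevel k Finset.univ (diag_conj_mem_unitSuperlevel hA hV)
    (diag_conj_mem_unitSuperlevel hB hV) ha hb hab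

lemma smul_mem_admissibleMat (hA : A ∈ admissibleMat k ι) {c : ℝ} (hc : 1 ≤ c) :
    c • A ∈ admissibleMat k ι := by
  refine ⟨hA.1.smul (IsSelfAdjoint.all c), fun j hj => ?_⟩
  rw [sigmaCoeff_smul hA.1]
  exact one_le_mul_of_one_le_of_one_le (one_le_pow₀ hc) (hA.2 j hj)

lemma isClosed_admissibleMat (k : ℕ) (ι : Type*) [Fintype ι] [DecidableEq ι] :
    IsClosed (admissibleMat k ι) := by
  have h_eq : admissibleMat k ι =
      {A | Aᴴ = A} ∩ ⋂ j ∈ {j | j ≤ k}, {A | 1 ≤ sigmaCoeff j A} := by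
    ext A
    simp [admissibleMat, Matrix.IsHermitian]
  rw [h_eq]
  exact (isClosed_eq (by fun_prop) continuous_id).inter <|
    isClosed_biInter fun j _ => isClosed_le continuous_const (continuous_sigmaCoeff j)

lemma conj_mem_admissibleMat (hA : A ∈ admissibleMat k ι) (hV : V ∈ unitaryGroup ι ℝ) :
    star V * A * V ∈ admissibleMat k ι :=
  ⟨isHermitian_conjTranspose_mul_mul V hA.1, fun j hj => by
    rw [sigmaCoeff_conj hV]
    exact hA.2 j hj⟩

lemma one_le_trace (hk : 1 ≤ k) (hA : A ∈ admissibleMat k ι) : 1 ≤ A.trace := by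
  have h := hA.2 1 hk
  rw [sigmaCoeff_eq_esymmOn_eigenvalues hA.1, esymmOn_one] at h
  rw [hA.1.trace_eq_sum_eigenvalues]
  simpa using h

lemma le_eigenvalues (hA : A.IsHermitian) {η : ℝ} (hη : ∀ v, η * (v ⬝ᵥ v) ≤ v ⬝ᵥ A *ᵥ v) (i : ι) :
    η ≤ hA.eigenvalues i := by
  have h_unit : (hA.eigenvectorBasis i).ofLp ⬝ᵥ (hA.eigenvectorBasis i).ofLp = 1 := by
    have h := EuclideanSpace.real_norm_sq_eq (hA.eigenvectorBasis i)
    rw [hA.eigenvectorBasis.norm_eq_one i] at h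
    simpa [dotProduct, sq] using h.symm
  simpa [hA.eigenvalues_eq, h_unit] using hη (hA.eigenvectorBasis i).ofLp

lemma mem_admissibleMat_of_trace_le (hkn : k ≤ Fintype.card ι) (hA : A.IsHermitian)
    {η T : ℝ} (hη : 0 < η) (hηA : ∀ v, η * (v ⬝ᵥ v) ≤ v ⬝ᵥ A *ᵥ v)
    (hT : Fintype.card ι * T ≤ A.trace) (hTη : ∀ j < k, 1 ≤ T * η ^ j) :
    A ∈ admissibleMat k ι := by
  rcases k.eq_zero_or_pos with rfl | hk
  · refine ⟨hA, fun j hj => ?_⟩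
    rw [sigmaCoeff_eq_esymmOn_eigenvalues hA, Nat.le_zero.1 hj, esymmOn_zero]
  have hι : (Finset.univ : Finset ι).Nonempty := by
    rw [← Finset.card_pos, Finset.card_univ]
    exact hk.trans_le hkn
  obtain ⟨i₀, -, hi₀⟩ : ∃ i ∈ Finset.univ, T ≤ hA.eigenvalues i := by
    apply Finset.exists_le_of_sum_le hι
    rw [hA.trace_eq_sum_eigenvalues] at hT
    simpa using hT
  exact (mem_admissibleMat_iff hA).2 <|
    mem_unitSuperlevel_of_le hkn hη (le_eigenvalues hA hηA) hi₀ hTη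

lemma mem_admissibleMat_of_inGardingCone {n : ℕ} {A : Matrix (Fin n) (Fin n) ℝ}
    (hA : InGardingCone k A) (h_sigma : sigmaMat k A = 1) :
    A ∈ admissibleMat k (Fin n) ∧ sigmaCoeff k A = 1 := by
  obtain ⟨hA_herm, hA_pos⟩ := hA
  rw [sigmaMat, dif_pos hA_herm] at h_sigma
  have h_cone : hA_herm.eigenvalues ∈ gardingCone k Finset.univ := by
    rintro (_ | j) hj
    · simp
    · exact hA_pos (j + 1) j.succ_pos hj
  exact ⟨(mem_admissibleMat_iff hA_herm).2 (mem_unitSuperlevel_of_one_le h_cone h_sigma.ge),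
    (sigmaCoeff_eq_esymmOn_eigenvalues hA_herm k).trans h_sigma⟩

lemma eventually_one_le_sigmaCoeff_two_smul_sub {S : Set (Matrix ι ι ℝ)} (hS : IsCompact S)
    (hSk : S ⊆ admissibleMat k ι) {j : ℕ} (hj : j ≤ k) :
    ∀ᶠ η in 𝓝 (0 : ℝ), ∀ A ∈ S, 1 ≤ sigmaCoeff j ((2 : ℝ) • (A - η • (1 : Matrix ι ι ℝ))) := by
  rcases Nat.eq_zero_or_pos j with rfl | hj_pos
  · refine Eventually.of_forall fun η A hA => ?_
    have h_herm : ((2 : ℝ) • (A - η • (1 : Matrix ι ι ℝ))).IsHermitian :=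
      ((hSk hA).1.sub (isHermitian_one.smul (IsSelfAdjoint.all η))).smul (IsSelfAdjoint.all _)
    rw [sigmaCoeff_eq_esymmOn_eigenvalues h_herm, esymmOn_zero]
  have h_open : IsOpen {p : ℝ × Matrix ι ι ℝ |
      (1 : ℝ) < sigmaCoeff j ((2 : ℝ) • (p.2 - p.1 • (1 : Matrix ι ι ℝ)))} :=
    isOpen_lt continuous_const ((continuous_sigmaCoeff j).comp (by fun_prop))
  have h_zero : ({0} : Set ℝ) ×ˢ S ⊆ {p : ℝ × Matrix ι ι ℝ |
      (1 : ℝ) < sigmaCoeff j ((2 : ℝ) • (p.2 - p.1 • (1 : Matrix ι ι ℝ)))} := by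
    rintro ⟨η, A⟩ ⟨rfl : η = 0, hA : A ∈ S⟩
    rw [mem_ofPred_eq, zero_smul, sub_zero, sigmaCoeff_smul (hSk hA).1]
    exact one_lt_mul_of_lt_of_le (one_lt_pow₀ one_lt_two hj_pos.ne') ((hSk hA).2 j hj)
  obtain ⟨u, v, hu, -, hu0, hvS, huv⟩ :=
    generalized_tube_lemma isCompact_singleton hS h_open h_zero
  filter_upwards [hu.mem_nhds (hu0 rfl)] with η hη A hA
  have h_mem := huv (show (η, A) ∈ u ×ˢ v from ⟨hη, hvS hA⟩)
  exact h_mem.le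

lemma exists_two_smul_sub_mem_admissibleMat {S : Set (Matrix ι ι ℝ)} (hS : IsCompact S)
    (hSk : S ⊆ admissibleMat k ι) :
    ∃ η > (0 : ℝ), ∀ A ∈ S, (2 : ℝ) • (A - η • (1 : Matrix ι ι ℝ)) ∈ admissibleMat k ι := by
  have h_all : ∀ᶠ η in 𝓝 (0 : ℝ), ∀ j ∈ Finset.range (k + 1), ∀ A ∈ S,
      1 ≤ sigmaCoeff j ((2 : ℝ) • (A - η • (1 : Matrix ι ι ℝ))) := by
    rw [eventually_all_finset]
    exact fun j hj =>
      eventually_one_le_sigmaCoeff_two_smul_sub hS hSk (Finset.mem_range_succ_iff.1 hj)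
  obtain ⟨η, hη, hη_pos⟩ :=
    ((h_all.filter_mono nhdsWithin_le_nhds).and (self_mem_nhdsWithin (s := Ioi 0))).exists
  refine ⟨η, hη_pos, fun A hA => ⟨?_, fun j hj => hη j (Finset.mem_range_succ_iff.2 hj) A hA⟩⟩
  exact ((hSk hA).1.sub (isHermitian_one.smul (IsSelfAdjoint.all η))).smul (IsSelfAdjoint.all _)

lemma one_lt_sigmaCoeff_smul (hk : 1 ≤ k) (hB : B ∈ admissibleMat k ι) {s : ℝ} (hs : 1 < s) :
    1 < sigmaCoeff k (s • B) := by
  rw [sigmaCoeff_smul hB.1]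
  exact one_lt_mul_of_lt_of_le (one_lt_pow₀ hs (by omega)) (hB.2 k le_rfl)

end Matrices

end

/-! ### Admissible bilinear forms -/

section

open Matrix

/-- Continuous bilinear forms on `ℝⁿ`, the coordinate-free home of Hessians. -/
abbrev Bil (n : ℕ) := Euc n →L[ℝ] Euc n →L[ℝ] ℝ

variable {n k : ℕ}

-- Shortcut instances: synthesis through two layers of continuous linear maps is too slow without.
instance : AddCommGroup (Bil n) := inferInstance
instance : AddMonoid (Bil n) := inferInstance
instance : AddCommMonoid (Bil n) := inferInstance
instance : SubtractionMonoid (Bil n) := inferInstance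
instance : Add (Bil n) := inferInstance
instance : Module ℝ (Bil n) := inferInstance
instance : SMul ℝ (Bil n) := inferInstance
instance : DistribSMul ℝ (Bil n) := inferInstance
instance : TopologicalSpace (Bil n) := inferInstance

/-- The `i`-th standard basis vector of `ℝⁿ`. -/
abbrev stdVec {n : ℕ} (i : Fin n) : Euc n := EuclideanSpace.single i (1 : ℝ)

variable {B C P : Bil n}

/-- The Gram matrix of a bilinear form in the standard basis. -/
def bilMatrix : Bil n →ₗ[ℝ] Matrix (Fin n) (Fin n) ℝ where
  toFun B := of fun i j => B (stdVec i) (stdVec j)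
  map_add' _ _ := rfl
  map_smul' _ _ := rfl

@[simp] lemma bilMatrix_apply (B : Bil n) (i j : Fin n) :
    bilMatrix B i j = B (stdVec i) (stdVec j) := rfl

lemma continuous_bilMatrix : Continuous (bilMatrix : Bil n → Matrix (Fin n) (Fin n) ℝ) :=
  continuous_matrix fun i j => by
    simp only [bilMatrix_apply]
    fun_prop

lemma sum_smul_stdVec (x : Euc n) : ∑ i, x i • stdVec i = x := by
  simpa using (EuclideanSpace.basisFun (Fin n) ℝ).sum_repr x

lemma bil_apply_eq_dotProduct (B : Bil n) (x y : Euc n) :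
    B x y = x.ofLp ⬝ᵥ (bilMatrix B *ᵥ y.ofLp) := by
  conv_lhs => rw [← sum_smul_stdVec x, ← sum_smul_stdVec y]
  simp only [map_sum, map_smul, _root_.sum_apply, _root_.smul_apply, smul_eq_mul, dotProduct,
    mulVec, bilMatrix_apply, Finset.mul_sum]
  rw [Finset.sum_comm]
  exact Finset.sum_congr rfl fun i _ => Finset.sum_congr rfl fun j _ => by ring

lemma isHermitian_bilMatrix_iff : (bilMatrix B).IsHermitian ↔ ∀ x y, B x y = B y x := by
  refine ⟨fun h x y => ?_, fun h => ?_⟩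
  · have h_transpose : (bilMatrix B)ᵀ = bilMatrix B := by
      rw [← conjTranspose_eq_transpose_of_trivial, h.eq]
    rw [bil_apply_eq_dotProduct, bil_apply_eq_dotProduct, dotProduct_mulVec, ← mulVec_transpose,
      dotProduct_comm, h_transpose]
  · ext i j
    simp [h (stdVec i)]

/-- The Euclidean inner product as a bilinear form. -/
def innerBil (n : ℕ) : Bil n := innerSL ℝ

@[simp] lemma innerBil_apply (x y : Euc n) : innerBil n x y = ⟪x, y⟫ := rfl

lemma bilMatrix_innerBil : bilMatrix (innerBil n) = 1 := by
  ext i j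
  simp [Matrix.one_apply, EuclideanSpace.inner_single_left]

/-- The trace of a bilinear form with respect to the Euclidean structure. -/
def bilTrace (B : Bil n) : ℝ := (bilMatrix B).trace

lemma bilTrace_eq_sum (B : Bil n) : bilTrace B = ∑ i, B (stdVec i) (stdVec i) := rfl

@[simp] lemma bilTrace_add (B C : Bil n) : bilTrace (B + C) = bilTrace B + bilTrace C := by
  simp [bilTrace]

@[simp] lemma bilTrace_smul (c : ℝ) (B : Bil n) : bilTrace (c • B) = c * bilTrace B := by
  simp [bilTrace]

@[simp] lemma bilTrace_innerBil : bilTrace (innerBil n) = n := by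
  simp [bilTrace, bilMatrix_innerBil]

lemma mul_le_bilTrace {η : ℝ} (hB : ∀ v, η * ‖v‖ ^ 2 ≤ B v v) : n * η ≤ bilTrace B := by
  have h : ∑ _i : Fin n, η ≤ bilTrace B :=
    Finset.sum_le_sum fun i _ => by simpa using hB (stdVec i)
  simpa using h

/-- The tensor product `a ⊗ b` of two linear forms, as a bilinear form. -/
def tensorBil {E : Type*} [NormedAddCommGroup E] [NormedSpace ℝ E] (a b : E →L[ℝ] ℝ) :
    E →L[ℝ] E →L[ℝ] ℝ := a.smulRight b

@[simp] lemma tensorBil_apply {E : Type*} [NormedAddCommGroup E] [NormedSpace ℝ E]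
    (a b : E →L[ℝ] ℝ) (x y : E) : tensorBil a b x y = a x * b y := rfl

lemma bilTrace_tensorBil_self (a : Euc n →L[ℝ] ℝ) : bilTrace (tensorBil a a) = ‖a‖ ^ 2 := by
  obtain ⟨x, rfl⟩ := (InnerProductSpace.toDual ℝ (Euc n)).surjective a
  rw [LinearIsometryEquiv.norm_map, EuclideanSpace.real_norm_sq_eq, bilTrace_eq_sum]
  simp [EuclideanSpace.inner_single_right, sq]

section Admissible

/-- The bilinear forms whose Gram matrix is admissible: those with `σ_j ≥ 1` for all `j ≤ k`. -/
def admissible (k n : ℕ) : Set (Bil n) := bilMatrix ⁻¹' admissibleMat k (Fin n)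

/-- The admissible forms with `σ_k = 1`: the Hessians of solutions of `σ_k(D²u) = 1`. -/
def admissibleLevel (k n : ℕ) : Set (Bil n) :=
  {B | B ∈ admissible k n ∧ sigmaCoeff k (bilMatrix B) = 1}

/-- The forms `s • B` with `s > 1` and `B` admissible. A symmetric form outside this set is the
pointwise notion of supersolution, as it makes no reference to the sign of `σ_j` for `j < k`. -/
def strictlyAdmissible (k n : ℕ) : Set (Bil n) :=
  {C | ∃ s > (1 : ℝ), ∃ B ∈ admissible k n, s • B = C}

lemma admissibleLevel_subset_admissible : admissibleLevel k n ⊆ admissible k n := fun _ hB => hB.1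

lemma convex_admissible (k n : ℕ) : Convex ℝ (admissible k n) :=
  (convex_admissibleMat k (Fin n)).linear_preimage bilMatrix

lemma isClosed_admissible (k n : ℕ) : IsClosed (admissible k n) :=
  (isClosed_admissibleMat k (Fin n)).preimage continuous_bilMatrix

lemma isClosed_admissibleLevel (k n : ℕ) : IsClosed (admissibleLevel k n) :=
  (isClosed_admissible k n).inter <|
    isClosed_eq ((continuous_sigmaCoeff k).comp continuous_bilMatrix) continuous_const

lemma smul_mem_admissible (hB : B ∈ admissible k n) {c : ℝ} (hc : 1 ≤ c) :
    c • B ∈ admissible k n := by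
  rw [admissible, mem_preimage, map_smul]
  exact smul_mem_admissibleMat hB hc

lemma symm_of_mem_admissible (hB : B ∈ admissible k n) (x y : Euc n) : B x y = B y x :=
  isHermitian_bilMatrix_iff.1 hB.1 x y

lemma one_le_bilTrace (hk : 1 ≤ k) (hB : B ∈ admissible k n) : 1 ≤ bilTrace B :=
  one_le_trace hk hB

lemma mem_admissible_of_bilTrace_le (hkn : k ≤ n) (hB : ∀ x y, B x y = B y x) {η T : ℝ}
    (hη : 0 < η) (hηB : ∀ v, η * ‖v‖ ^ 2 ≤ B v v) (hT : n * T ≤ bilTrace B)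
    (hTη : ∀ j < k, 1 ≤ T * η ^ j) : B ∈ admissible k n := by
  refine mem_admissibleMat_of_trace_le (by simpa using hkn) (isHermitian_bilMatrix_iff.2 hB) hη
    (fun v => ?_) (by simpa [bilTrace] using hT) hTη
  have h := hηB (WithLp.toLp 2 v)
  rw [bil_apply_eq_dotProduct, EuclideanSpace.real_norm_sq_eq] at h
  simpa [dotProduct, sq] using h

lemma bilinearComp_mem_admissible (hB : B ∈ admissible k n) (L : Euc n →ₗᵢ[ℝ] Euc n) :
    B.bilinearComp L.toContinuousLinearMap L.toContinuousLinearMap ∈ admissible k n := by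
  set V : Matrix (Fin n) (Fin n) ℝ := of fun i j => L (stdVec j) i
  have hV : V ∈ unitaryGroup (Fin n) ℝ := by
    rw [mem_unitaryGroup_iff']
    ext i j
    have h : ⟪L (stdVec j), L (stdVec i)⟫ = ⟪(stdVec j : Euc n), stdVec i⟫ := L.inner_map_map _ _
    simp only [PiLp.inner_apply] at h
    simpa [mul_apply, star_apply, V, Matrix.one_apply, eq_comm] using h
  have h_conj : bilMatrix (B.bilinearComp L.toContinuousLinearMap L.toContinuousLinearMap) =
      star V * bilMatrix B * V := by
    ext i j
    change B (L (stdVec i)) (L (stdVec j)) = _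
    rw [bil_apply_eq_dotProduct, mul_assoc, mul_apply]
    simp [dotProduct, V, mulVec, mul_apply]
  rw [admissible, mem_preimage, h_conj]
  exact conj_mem_admissibleMat hB hV

lemma innerBil_mem_admissible (hkn : k ≤ n) : innerBil n ∈ admissible k n :=
  mem_admissible_of_bilTrace_le hkn (fun x y => by simp [real_inner_comm]) one_pos
    (fun v => by simp) (T := 1) (by simp) (by simp)

lemma exists_smul_mem_admissible_of_posDef (hkn : k ≤ n) (hP : ∀ x y, P x y = P y x) {η : ℝ}
    (hη : 0 < η) (hηP : ∀ v, η * ‖v‖ ^ 2 ≤ P v v) : ∃ s > (1 : ℝ), s • P ∈ admissible k n := by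
  have hs : 1 ≤ (1 + 1 / η) * η := by
    rw [add_mul, one_div_mul_cancel hη.ne']
    linarith
  have hsP : ∀ v, 1 * ‖v‖ ^ 2 ≤ ((1 + 1 / η) • P) v v := fun v =>
    calc 1 * ‖v‖ ^ 2 ≤ (1 + 1 / η) * η * ‖v‖ ^ 2 := by gcongr
      _ ≤ (1 + 1 / η) * P v v := by
        rw [mul_assoc]
        gcongr
        exact hηP v
  exact ⟨1 + 1 / η, by simp [hη], mem_admissible_of_bilTrace_le hkn (by simp [hP]) one_pos hsP
    (T := 1) (mul_le_bilTrace hsP) (by simp)⟩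

lemma add_mem_admissible_of_posDef (hkn : k ≤ n) (hB : B ∈ admissible k n)
    (hP : ∀ x y, P x y = P y x) {η : ℝ} (hη : 0 < η) (hηP : ∀ v, η * ‖v‖ ^ 2 ≤ P v v) :
    B + P ∈ admissible k n := by
  obtain ⟨s, hs, hsP⟩ := exists_smul_mem_admissible_of_posDef hkn hP hη hηP
  have hs_pos : 0 < s := one_pos.trans hs
  have hs_inv : 0 < 1 - s⁻¹ := sub_pos.2 (inv_lt_one_of_one_lt₀ hs)
  have h_scaled : (1 - s⁻¹)⁻¹ • B ∈ admissible k n := smul_mem_admissible hB <|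
    (one_le_inv₀ hs_inv).2 (by simp [hs_pos.le])
  have h := convex_admissible k n h_scaled hsP hs_inv.le (inv_nonneg.2 hs_pos.le) (by ring)
  rwa [smul_smul, smul_smul, mul_inv_cancel₀ hs_inv.ne', inv_mul_cancel₀ hs_pos.ne', one_smul,
    one_smul] at h

lemma add_mem_admissible_of_posSemidef (hkn : k ≤ n) (hB : B ∈ admissible k n)
    (hP : ∀ x y, P x y = P y x) (hP_nonneg : ∀ v, 0 ≤ P v v) : B + P ∈ admissible k n := by
  have h_lim : Tendsto (fun η : ℝ => B + (P + η • innerBil n)) (𝓝[>] 0) (𝓝 (B + P)) := by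
    have h_cont : Continuous fun η : ℝ => B + (P + η • innerBil n) := by fun_prop
    simpa only [zero_smul, add_zero] using (h_cont.tendsto 0).mono_left nhdsWithin_le_nhds
  refine (isClosed_admissible k n).mem_of_tendsto h_lim ?_
  filter_upwards [self_mem_nhdsWithin] with η hη
  exact add_mem_admissible_of_posDef hkn hB (fun x y => by simp [hP x y, real_inner_comm]) hη
    fun v => by simpa using hP_nonneg v

lemma notMem_strictlyAdmissible_of_mem_admissibleLevel (hk : 1 ≤ k)
    (hB : B ∈ admissibleLevel k n) : B ∉ strictlyAdmissible k n := by
  rintro ⟨s, hs, B', hB', rfl⟩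
  have h := hB.2
  rw [map_smul] at h
  exact (one_lt_sigmaCoeff_smul hk hB' hs).ne' h

lemma notMem_strictlyAdmissible_of_bilTrace_nonpos (hk : 1 ≤ k) (hB : bilTrace B ≤ 0) :
    B ∉ strictlyAdmissible k n := by
  rintro ⟨s, hs, B', hB', rfl⟩
  rw [bilTrace_smul] at hB
  nlinarith [one_le_bilTrace hk hB']

lemma mem_strictlyAdmissible_of_smul_add_smul_le {B' : Bil n} (hkn : k ≤ n)
    (hB : B ∈ admissible k n) (hB' : B' ∈ admissible k n) (hC : ∀ x y, C x y = C y x) {a b : ℝ}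
    (ha : 0 ≤ a) (hb : 0 ≤ b) (hab : 1 < a + b) (h_le : ∀ v, a * B v v + b * B' v v ≤ C v v) :
    C ∈ strictlyAdmissible k n := by
  have hab₀ : 0 < a + b := one_pos.trans hab
  set Z := (a / (a + b)) • B + (b / (a + b)) • B'
  have hZ : Z ∈ admissible k n :=
    convex_admissible k n hB hB' (by positivity) (by positivity) (by field_simp)
  have hZ_smul : (a + b) • Z = a • B + b • B' := by
    rw [smul_add, smul_smul, smul_smul, mul_div_cancel₀ a hab₀.ne', mul_div_cancel₀ b hab₀.ne']
  have h_diff : C - (a + b) • Z = C - (a • B + b • B') := by rw [hZ_smul]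
  refine ⟨a + b, hab, Z + (a + b)⁻¹ • (C - (a + b) • Z), ?_, ?_⟩
  · refine add_mem_admissible_of_posSemidef hkn hZ (fun x y => ?_) (fun v => ?_)
    · simp [hC x y, symm_of_mem_admissible hZ x y]
    · rw [h_diff]
      refine mul_nonneg (by positivity) (sub_nonneg.2 ?_)
      simpa using h_le v
  · rw [smul_add, smul_inv_smul₀ hab₀.ne', add_sub_cancel]

lemma mem_strictlyAdmissible_of_add_le (hkn : k ≤ n) (hB : B ∈ admissible k n)
    (hC : ∀ x y, C x y = C y x) {η : ℝ} (hη : 0 < η) (hBC : ∀ v, B v v + η * ‖v‖ ^ 2 ≤ C v v) :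
    C ∈ strictlyAdmissible k n :=
  mem_strictlyAdmissible_of_smul_add_smul_le hkn hB (innerBil_mem_admissible hkn) hC zero_le_one
    hη.le (lt_add_of_pos_right 1 hη) fun v => by simpa using hBC v

lemma exists_two_smul_sub_mem_admissible {S : Set (Bil n)} (hS : IsCompact S)
    (hSk : S ⊆ admissible k n) :
    ∃ η > (0 : ℝ), ∀ B ∈ S, (2 : ℝ) • (B - η • innerBil n) ∈ admissible k n := by
  obtain ⟨η, hη, h⟩ := exists_two_smul_sub_mem_admissibleMat (hS.image continuous_bilMatrix)
    (image_subset_iff.2 hSk)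
  refine ⟨η, hη, fun B hB => ?_⟩
  rw [admissible, mem_preimage, map_smul, map_sub, map_smul, bilMatrix_innerBil]
  exact h _ (mem_image_of_mem _ hB)

lemma exists_smul_innerBil_add_tensorBil_mem_admissible (hkn : k ≤ n) {η : ℝ} (hη : 0 < η) :
    ∃ b₀ > (0 : ℝ), ∀ ν : Euc n →L[ℝ] ℝ, ‖ν‖ = 1 → ∀ b ≥ b₀,
      η • innerBil n + b • tensorBil ν ν ∈ admissible k n := by
  set T := ∑ j ∈ Finset.range k, η⁻¹ ^ j
  have hT : 0 ≤ T := Finset.sum_nonneg fun _ _ => by positivity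
  have hTη : ∀ j < k, 1 ≤ T * η ^ j := fun j hj =>
    calc (1 : ℝ) = η⁻¹ ^ j * η ^ j := by rw [← mul_pow, inv_mul_cancel₀ hη.ne', one_pow]
      _ ≤ T * η ^ j := by
        gcongr
        exact Finset.single_le_sum (f := fun j => η⁻¹ ^ j) (fun _ _ => by positivity)
          (Finset.mem_range.2 hj)
  refine ⟨n * T + 1, by positivity, fun ν hν b hb => ?_⟩
  have hb_nonneg : 0 ≤ b := le_trans (by positivity) hb
  refine mem_admissible_of_bilTrace_le hkn (fun x y => ?_) hη (fun v => ?_) (T := T) ?_ hTη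
  · simp [real_inner_comm, mul_comm (ν x)]
  · simpa using mul_nonneg hb_nonneg (mul_self_nonneg (ν v))
  · rw [bilTrace_add, bilTrace_smul, bilTrace_smul, bilTrace_tensorBil_self, hν,
      bilTrace_innerBil]
    have : 0 ≤ η * n := by positivity
    linarith

lemma cnk_pos (hkn : k ≤ n) : 0 < cnk n k :=
  Real.rpow_pos_of_pos (by exact_mod_cast Nat.choose_pos hkn) _

lemma inv_cnk_smul_innerBil_mem_admissible (hk : 1 ≤ k) (hkn : k ≤ n) :
    (cnk n k)⁻¹ • innerBil n ∈ admissible k n := by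
  set c := (cnk n k)⁻¹ with hc
  have hc_pos : 0 < c := inv_pos.2 (cnk_pos hkn)
  have h_matrix : bilMatrix (c • innerBil n) = Matrix.diagonal fun _ => c := by
    rw [map_smul, bilMatrix_innerBil, smul_one_eq_diagonal]
  have h_esymm : ∀ j, esymmOn Finset.univ j (fun _ : Fin n => c) = n.choose j * c ^ j := fun j => by
    rw [esymmOn, Finset.sum_congr rfl fun t ht => by
      rw [Finset.prod_const, (Finset.mem_powersetCard.1 ht).2]]
    simp
  have h_cone : (fun _ : Fin n => c) ∈ gardingCone k Finset.univ := fun j hj => by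
    have : 0 < (n.choose j : ℝ) := by exact_mod_cast Nat.choose_pos (hj.trans hkn)
    rw [h_esymm]
    positivity
  have h_one : n.choose k * c ^ k = 1 := by
    have : 0 < (n.choose k : ℝ) := by exact_mod_cast Nat.choose_pos hkn
    rw [hc, inv_pow, cnk, one_div, Real.rpow_inv_natCast_pow this.le (by omega),
      mul_inv_cancel₀ this.ne']
  rw [admissible, mem_preimage, h_matrix]
  refine ⟨by simp [Matrix.IsHermitian], fun j hj => ?_⟩
  rw [sigmaCoeff_diagonal]
  exact mem_unitSuperlevel_of_one_le h_cone ((h_esymm k).trans h_one).ge j hj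

end Admissible

end

/-! ### Pointwise sub- and supersolutions and the comparison principle -/

section

open Asymptotics

lemma tendsto_add_left_nhds {E : Type*} [NormedAddCommGroup E] (x : E) :
    Tendsto (fun h => x + h) (𝓝 0) (𝓝 x) := by
  simpa using (continuous_const_add x).tendsto 0

lemma isLittleO_norm_one {E : Type*} [NormedAddCommGroup E] :
    (fun h : E => ‖h‖) =o[𝓝 0] fun _ => (1 : ℝ) := by
  rw [isLittleO_one_iff]
  simpa using (continuous_norm (E := E)).tendsto 0

section QuadExpansion

variable {E F : Type*} [NormedAddCommGroup E] [NormedSpace ℝ E]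
  [NormedAddCommGroup F] [NormedSpace ℝ F]

/-- `f (x + h) = f x + ℓ h + B h h / 2 + o(‖h‖²)`: second-order differentiability at a point, in the
form stable under composition that the comparison principle needs. -/
def HasQuadExpansionAt (f : E → ℝ) (ℓ : E →L[ℝ] ℝ) (B : E →L[ℝ] E →L[ℝ] ℝ) (x : E) : Prop :=
  (fun h => f (x + h) - f x - ℓ h - 1 / 2 * B h h) =o[𝓝 0] fun h => ‖h‖ ^ 2

variable {f g : E → ℝ} {x : E} {ℓ ℓ' : E →L[ℝ] ℝ} {B B' : E →L[ℝ] E →L[ℝ] ℝ}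

namespace HasQuadExpansionAt

protected lemma add (hf : HasQuadExpansionAt f ℓ B x) (hg : HasQuadExpansionAt g ℓ' B' x) :
    HasQuadExpansionAt (fun y => f y + g y) (ℓ + ℓ') (B + B') x :=
  (IsLittleO.add hf hg).congr_left fun h => by
    simp only [_root_.add_apply]
    ring

protected lemma const_mul (hf : HasQuadExpansionAt f ℓ B x) (c : ℝ) :
    HasQuadExpansionAt (fun y => c * f y) (c • ℓ) (c • B) x :=
  (IsLittleO.const_mul_left hf c).congr_left fun h => by
    simp only [_root_.smul_apply, smul_eq_mul]
    ring

protected lemma add_const (hf : HasQuadExpansionAt f ℓ B x) (c : ℝ) :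
    HasQuadExpansionAt (fun y => f y + c) ℓ B x :=
  IsLittleO.congr_left hf fun h => by ring

protected lemma congr (hf : HasQuadExpansionAt f ℓ B x) (hfg : f =ᶠ[𝓝 x] g) :
    HasQuadExpansionAt g ℓ B x := by
  refine IsLittleO.congr' hf ?_ EventuallyEq.rfl
  filter_upwards [(tendsto_add_left_nhds x).eventually hfg] with h hh
  rw [hh, hfg.self_of_nhds]

lemma comp_affine {f : F → ℝ} {ℓ : F →L[ℝ] ℝ} {B : F →L[ℝ] F →L[ℝ] ℝ} {T : E → F} {L : E →L[ℝ] F}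
    (hT : ∀ h, T (x + h) = T x + L h) (hf : HasQuadExpansionAt f ℓ B (T x)) :
    HasQuadExpansionAt (fun y => f (T y)) (ℓ.comp L) (B.bilinearComp L L) x := by
  have hL : Tendsto L (𝓝 0) (𝓝 0) := by simpa using L.continuous.tendsto 0
  have hL_sq : (fun h => ‖L h‖ ^ 2) =O[𝓝 0] fun h => ‖h‖ ^ 2 := (L.isBigO_id _).norm_norm.pow 2
  exact ((IsLittleO.comp_tendsto hf hL).trans_isBigO hL_sq).congr_left fun h => by simp [hT]

lemma isBigO_sub_linear (hf : HasQuadExpansionAt f ℓ B x) :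
    (fun h => f (x + h) - f x - ℓ h) =O[𝓝 0] fun h => ‖h‖ ^ 2 := by
  have hB : (fun h => 1 / 2 * B h h) =O[𝓝 0] fun h : E => ‖h‖ ^ 2 := by
    refine (IsBigO.of_bound ‖B‖ (Eventually.of_forall fun h => ?_)).const_mul_left _
    simpa [sq, mul_assoc] using B.le_opNorm₂ h h
  exact ((IsLittleO.isBigO hf).add hB).congr_left fun h => by ring

lemma isBigO_sub (hf : HasQuadExpansionAt f ℓ B x) :
    (fun h => f (x + h) - f x) =O[𝓝 0] fun h => ‖h‖ := by
  have h_sq : (fun h : E => ‖h‖ ^ 2) =O[𝓝 0] fun h => ‖h‖ := by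
    simpa [sq] using
      ((isBigO_refl (fun h : E => ‖h‖) (𝓝 0)).mul_isLittleO isLittleO_norm_one).isBigO
  exact ((hf.isBigO_sub_linear.trans h_sq).add (ℓ.isBigO_id _).norm_right).congr_left
    fun h => by ring

lemma isLittleO_exp_sub_quad :
    (fun s : ℝ => Real.exp s - 1 - s - 1 / 2 * s ^ 2) =o[𝓝 0] fun s : ℝ => s ^ 2 := by
  refine IsBigO.trans_isLittleO (g := fun s : ℝ => s ^ 3) (IsBigO.of_bound 1 ?_)
    (isLittleO_pow_pow (by norm_num))
  filter_upwards [Metric.ball_mem_nhds (0 : ℝ) one_pos] with s hs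
  have h := Real.exp_bound (x := s) (by simpa using (mem_ball_zero_iff.1 hs).le)
    (n := 3) (by norm_num)
  norm_num [Finset.sum_range_succ, Nat.factorial] at h
  rw [Real.norm_eq_abs, norm_pow, Real.norm_eq_abs,
    show Real.exp s - 1 - s - 1 / 2 * s ^ 2 = Real.exp s - (1 + s + s ^ 2 / 2) by ring]
  linarith [pow_nonneg (abs_nonneg s) 3]

protected lemma exp (hf : HasQuadExpansionAt f ℓ B x) :
    HasQuadExpansionAt (fun y => Real.exp (f y)) (Real.exp (f x) • ℓ)
      (Real.exp (f x) • (B + tensorBil ℓ ℓ)) x := by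
  set d : E → ℝ := fun h => f (x + h) - f x
  have hd : d =O[𝓝 0] fun h => ‖h‖ := hf.isBigO_sub
  have hd_zero : Tendsto d (𝓝 0) (𝓝 0) :=
    hd.trans_tendsto (by simpa using (continuous_norm (E := E)).tendsto 0)
  have h_exp : (fun h => Real.exp (d h) - 1 - d h - 1 / 2 * d h ^ 2) =o[𝓝 0] fun h => ‖h‖ ^ 2 :=
    (isLittleO_exp_sub_quad.comp_tendsto hd_zero).trans_isBigO (hd.pow 2)
  have h_sq : (fun h => (d h - ℓ h) * (d h + ℓ h)) =o[𝓝 0] fun h => ‖h‖ ^ 2 := by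
    refine (hf.isBigO_sub_linear.mul (hd.add (ℓ.isBigO_id _).norm_right)).trans_isLittleO ?_
    simpa using (isBigO_refl (fun h : E => ‖h‖ ^ 2) (𝓝 0)).mul_isLittleO isLittleO_norm_one
  have h_sum := ((h_exp.add hf).add (h_sq.const_mul_left (1 / 2))).const_mul_left (Real.exp (f x))
  refine h_sum.congr_left fun h => ?_
  have h_split : Real.exp (f (x + h)) = Real.exp (f x) * Real.exp (d h) := by
    rw [← Real.exp_add, add_sub_cancel]
  simp only [_root_.smul_apply, _root_.add_apply, tensorBil_apply, smul_eq_mul, h_split, d]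
  ring

lemma apply_self_nonpos_of_isLocalMax (hf : HasQuadExpansionAt f ℓ B x) (hx : IsLocalMax f x)
    (v : E) : B v v ≤ 0 := by
  by_contra! hv_pos
  have hv : 0 < ‖v‖ := norm_pos_iff.2 fun h => by simp [h] at hv_pos
  set c := B v v / (4 * ‖v‖ ^ 2)
  have h_near : ∀ᶠ h in 𝓝 (0 : E), |f (x + h) - f x - ℓ h - 1 / 2 * B h h| ≤ c * ‖h‖ ^ 2 ∧
      f (x + h) ≤ f x := by
    filter_upwards [IsLittleO.bound hf (by positivity : 0 < c),
      (tendsto_add_left_nhds x).eventually hx] with h h_bound h_max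
    exact ⟨by simpa using h_bound, h_max⟩
  have h_ray : Tendsto (fun t : ℝ => t • v) (𝓝[>] 0) (𝓝 0) := by
    have h_cont : Continuous fun t : ℝ => t • v := by fun_prop
    simpa using (h_cont.tendsto 0).mono_left nhdsWithin_le_nhds
  have h_ray_neg : Tendsto (fun t : ℝ => -(t • v)) (𝓝[>] 0) (𝓝 0) := by simpa using h_ray.neg
  -- Adding the expansions along `t v` and `-t v` cancels the linear term.
  obtain ⟨t, ⟨⟨h_pos, h_pos_max⟩, h_neg, h_neg_max⟩, ht : 0 < t⟩ :=
    (((h_ray.eventually h_near).and (h_ray_neg.eventually h_near)).and self_mem_nhdsWithin).exists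
  rw [abs_le] at h_pos h_neg
  have hc : c * ‖t • v‖ ^ 2 = t ^ 2 * B v v / 4 := by
    rw [norm_smul, mul_pow, Real.norm_eq_abs, sq_abs]
    simp only [c]
    field_simp
  simp only [norm_neg, map_neg, _root_.neg_apply, hc, map_smul, _root_.smul_apply,
    smul_eq_mul] at h_pos h_neg
  have : 0 < t ^ 2 * B v v := by positivity
  nlinarith [h_pos.1, h_neg.1]

end HasQuadExpansionAt

lemma hasQuadExpansionAt_of_hasFDerivAt_fderiv (hB : ∀ v w, B v w = B w v)
    (hf : ∀ᶠ y in 𝓝 x, DifferentiableAt ℝ f y) (hB_fderiv : HasFDerivAt (fderiv ℝ f) B x) :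
    HasQuadExpansionAt f (fderiv ℝ f x) B x := by
  rw [HasQuadExpansionAt, isLittleO_iff]
  intro c hc
  obtain ⟨r, hr, h_ball⟩ := Metric.eventually_nhds_iff_ball.1
    (hf.and (isLittleO_iff.1 hB_fderiv.isLittleO hc))
  filter_upwards [Metric.ball_mem_nhds (0 : E) hr] with h hh
  set R : E → ℝ := fun z => f (x + z) - f x - fderiv ℝ f x z - 1 / 2 * B z z
  have h_mem : ∀ z ∈ closedBall (0 : E) ‖h‖, x + z ∈ ball x r := fun z hz => by
    simpa using (mem_closedBall_zero_iff.1 hz).trans_lt (mem_ball_zero_iff.1 hh)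
  have hR : ∀ z ∈ closedBall (0 : E) ‖h‖, HasFDerivWithinAt R
      (fderiv ℝ f (x + z) - fderiv ℝ f x - B z) (closedBall (0 : E) ‖h‖) z := fun z hz => by
    have h_comp : HasFDerivAt (fun z => f (x + z)) (fderiv ℝ f (x + z)) z :=
      (hasFDerivAt_comp_add_left x).2 (h_ball _ (h_mem z hz)).1.hasFDerivAt
    have h_quad : HasFDerivAt (fun z : E => 1 / 2 * B z z) (B z) z := by
      refine ((B.hasFDerivAt.clm_apply (hasFDerivAt_id z)).const_mul (1 / 2)).congr_fderiv ?_
      ext v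
      simp only [_root_.smul_apply, _root_.add_apply, ContinuousLinearMap.comp_apply,
        ContinuousLinearMap.flip_apply, ContinuousLinearMap.id_apply, id_eq, smul_eq_mul, hB v z]
      ring
    exact (((h_comp.sub_const _).sub (fderiv ℝ f x).hasFDerivAt).sub h_quad).hasFDerivWithinAt
  have hR_bound : ∀ z ∈ closedBall (0 : E) ‖h‖,
      ‖fderiv ℝ f (x + z) - fderiv ℝ f x - B z‖ ≤ c * ‖h‖ := fun z hz => by
    have h_bound := (h_ball _ (h_mem z hz)).2
    rw [add_sub_cancel_left] at h_bound
    exact h_bound.trans (by gcongr; exact mem_closedBall_zero_iff.1 hz)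
  have h_mvt := (convex_closedBall (0 : E) ‖h‖).norm_image_sub_le_of_norm_hasFDerivWithin_le hR
    hR_bound (x := 0) (y := h) (by simp) (by simp)
  calc ‖R h‖ = ‖R h - R 0‖ := by simp [R]
    _ ≤ c * ‖h‖ * ‖h - 0‖ := h_mvt
    _ = c * ‖‖h‖ ^ 2‖ := by rw [sub_zero, norm_pow, norm_norm, sq, mul_assoc]

lemma hasQuadExpansionAt_of_contDiffAt (hf : ContDiffAt ℝ 2 f x) :
    HasQuadExpansionAt f (fderiv ℝ f x) (fderiv ℝ (fderiv ℝ f) x) x := by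
  refine hasQuadExpansionAt_of_hasFDerivAt_fderiv
    (hf.isSymmSndFDerivAt (by simp)).eq ?_ ?_
  · filter_upwards [hf.eventually (by simp)] with y hy
    exact hy.differentiableAt two_ne_zero
  · exact ((hf.fderiv_right (m := 1) (by norm_num)).differentiableAt one_ne_zero).hasFDerivAt

lemma hasQuadExpansionAt_const (c : ℝ) (x : E) : HasQuadExpansionAt (fun _ => c) 0 0 x :=
  (isLittleO_zero _ _).congr_left fun h => by simp

end QuadExpansion

variable {n k : ℕ} {f g : Euc n → ℝ}

lemma hasQuadExpansionAt_norm_sub_sq (p x : Euc n) :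
    HasQuadExpansionAt (fun y => ‖y - p‖ ^ 2) ((2 : ℝ) • innerSL ℝ (x - p))
      ((2 : ℝ) • innerBil n) x :=
  (isLittleO_zero _ _).congr_left fun h => by
    simp only [add_sub_right_comm x h p, _root_.smul_apply, smul_eq_mul, innerBil_apply,
      innerSL_apply_apply, norm_add_sq_real, real_inner_self_eq_norm_sq]
    ring

/-- Pointwise subsolutions of `σ_k(D²f) = 1`: some second-order expansion at `x` is admissible. -/
def SubsolAt (k : ℕ) (f : Euc n → ℝ) (x : Euc n) : Prop :=
  ∃ ℓ, ∃ B ∈ admissible k n, HasQuadExpansionAt f ℓ B x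

/-- Pointwise supersolutions of `σ_k(D²f) = 1`: some second-order expansion at `x` is symmetric and
not strictly admissible. -/
def SupersolAt (k : ℕ) (f : Euc n → ℝ) (x : Euc n) : Prop :=
  ∃ ℓ, ∃ B ∉ strictlyAdmissible k n, (∀ v w, B v w = B w v) ∧ HasQuadExpansionAt f ℓ B x

protected lemma SubsolAt.const_mul {x : Euc n} (hf : SubsolAt k f x) {c : ℝ} (hc : 1 ≤ c) :
    SubsolAt k (fun y => c * f y) x := by
  obtain ⟨ℓ, B, hB, hfB⟩ := hf
  exact ⟨_, _, smul_mem_admissible hB hc, hfB.const_mul c⟩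

protected lemma SupersolAt.add_const {x : Euc n} (hf : SupersolAt k f x) (c : ℝ) :
    SupersolAt k (fun y => f y + c) x := by
  obtain ⟨ℓ, B, hB, hB_symm, hfB⟩ := hf
  exact ⟨ℓ, B, hB, hB_symm, hfB.add_const c⟩

section LinearFunctional

variable {x : Euc n} {ℓ : Euc n →L[ℝ] ℝ} {B : Bil n}

lemma HasQuadExpansionAt.supersolAt_of_bilTrace_nonpos (hk : 1 ≤ k)
    (hf : HasQuadExpansionAt f ℓ B x) (hB_symm : ∀ v w, B v w = B w v) (hB : bilTrace B ≤ 0) :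
    SupersolAt k f x :=
  ⟨ℓ, B, notMem_strictlyAdmissible_of_bilTrace_nonpos hk hB, hB_symm, hf⟩

lemma supersolAt_const (hk : 1 ≤ k) (c : ℝ) (x : Euc n) : SupersolAt k (fun _ => c) x :=
  (hasQuadExpansionAt_const c x).supersolAt_of_bilTrace_nonpos hk (by simp)
    (by simp [bilTrace_eq_sum])

lemma HasQuadExpansionAt.supersolAt_neg_mul_exp (hk : 1 ≤ k) (hf : HasQuadExpansionAt f ℓ B x)
    (hB_symm : ∀ v w, B v w = B w v) (hB : 0 ≤ bilTrace B + ‖ℓ‖ ^ 2) {a : ℝ} (ha : 0 ≤ a) (b : ℝ) :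
    SupersolAt k (fun y => -a * Real.exp (f y) + b) x := by
  refine ((hf.exp.const_mul (-a)).add_const b).supersolAt_of_bilTrace_nonpos hk (fun v w => ?_) ?_
  · simp only [_root_.smul_apply, _root_.add_apply, tensorBil_apply, hB_symm v w, mul_comm (ℓ v)]
  · simp only [bilTrace_smul, bilTrace_add, bilTrace_tensorBil_self, neg_mul, neg_nonpos]
    positivity

end LinearFunctional

lemma not_isLocalMax_sub_add_norm_sq (hkn : k ≤ n) {x : Euc n} (hf : SubsolAt k f x)
    (hg : SupersolAt k g x) {η : ℝ} (hη : 0 < η) :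
    ¬ IsLocalMax (fun y => f y + -1 * g y + η * ‖y - 0‖ ^ 2) x := fun h_max => by
  obtain ⟨ℓ, B, hB, hfB⟩ := hf
  obtain ⟨ℓ', C, hC, hC_symm, hgC⟩ := hg
  refine hC (mem_strictlyAdmissible_of_add_le hkn hB hC_symm (η := 2 * η) (by positivity)
    fun v => ?_)
  have h := ((hfB.add (hgC.const_mul (-1))).add
    ((hasQuadExpansionAt_norm_sub_sq 0 x).const_mul η)).apply_self_nonpos_of_isLocalMax h_max v
  simp only [_root_.add_apply, _root_.smul_apply, smul_eq_mul, innerBil_apply,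
    real_inner_self_eq_norm_sq] at h
  linarith

theorem comparison_principle (hkn : k ≤ n) {D : Set (Euc n)} (hD : IsOpen D)
    (hD_bdd : IsBounded D) (hf : ContinuousOn f (closure D)) (hg : ContinuousOn g (closure D))
    (h_bdry : ∀ x ∈ closure D, x ∉ D → f x ≤ g x) (hf_sub : ∀ x ∈ D, SubsolAt k f x)
    (hg_super : ∀ x ∈ D, SupersolAt k g x) : ∀ x ∈ closure D, f x ≤ g x := by
  intro x₀ hx₀
  by_contra! h_gap
  obtain ⟨R, hR⟩ := hD_bdd.closure.exists_norm_le
  obtain ⟨η, hη, hηR⟩ : ∃ η > 0, η * R ^ 2 < f x₀ - g x₀ := by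
    refine ⟨(f x₀ - g x₀) / (R ^ 2 + 1), div_pos (sub_pos.2 h_gap) (by positivity), ?_⟩
    rw [div_mul_eq_mul_div, div_lt_iff₀ (by positivity)]
    linarith
  obtain ⟨y, hy, hy_max⟩ := hD_bdd.isCompact_closure.exists_isMaxOn ⟨x₀, hx₀⟩
    (f := fun y => f y + -1 * g y + η * ‖y - 0‖ ^ 2) (by fun_prop)
  by_cases hyD : y ∈ D
  · refine not_isLocalMax_sub_add_norm_sq hkn (hf_sub y hyD) (hg_super y hyD) hη ?_
    filter_upwards [hD.mem_nhds hyD] with z hz using hy_max (subset_closure hz)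
  · have h_le : f x₀ + -1 * g x₀ + η * ‖x₀ - 0‖ ^ 2 ≤ f y + -1 * g y + η * ‖y - 0‖ ^ 2 :=
      hy_max hx₀
    have hyR : η * ‖y - 0‖ ^ 2 ≤ η * R ^ 2 := by
      rw [sub_zero]
      gcongr
      exact hR y hy
    have : 0 ≤ η * ‖x₀ - 0‖ ^ 2 := by positivity
    linarith [h_bdry y hy hyD]

end

/-! ### The Dirichlet problem on rings -/

section

lemma uniqueDiffOn_closure {E : Type*} [NormedAddCommGroup E] [NormedSpace ℝ E] {Ω : Set E}
    (hΩ : IsOpen Ω) (hΩ_convex : Convex ℝ Ω) (hΩ_ne : Ω.Nonempty) :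
    UniqueDiffOn ℝ (closure Ω) :=
  uniqueDiffOn_convex hΩ_convex.closure (hΩ_ne.mono (interior_maximal subset_closure hΩ))

variable {n k : ℕ}

lemma hessianWithin_eq_bilMatrix {S : Set (Euc n)} (hS : UniqueDiffOn ℝ S) {w : Euc n → ℝ}
    {x : Euc n} (hx : x ∈ S) :
    hessianWithin w S x = bilMatrix (fderivWithin ℝ (fderivWithin ℝ w S) S x) := by
  ext i j
  rw [hessianWithin, iteratedFDerivWithin_two_apply w hS hx]
  rfl

/-- `w` is a `k`-admissible solution of `σ_k(D²w) = 1` in the open set `D`, twice continuously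
differentiable up to the part of the boundary contained in `S`, with derivatives `G` and `H`. -/
structure IsC2Solution (k : ℕ) (D S : Set (Euc n)) (w : Euc n → ℝ) (G : Euc n → Euc n →L[ℝ] ℝ)
    (H : Euc n → Bil n) : Prop where
  hasFDerivWithinAt : ∀ x ∈ S, HasFDerivWithinAt w (G x) S x
  hasFDerivWithinAt_gradient : ∀ x ∈ S, HasFDerivWithinAt G (H x) S x
  continuousOn_hessian : ContinuousOn H S
  hessian_mem : ∀ x ∈ S, H x ∈ admissibleLevel k n
  hasQuadExpansionAt : ∀ x ∈ D, HasQuadExpansionAt w (G x) (H x) x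

lemma isC2Solution_of_contDiffOn {D S : Set (Euc n)} (hD : IsOpen D) (hDS : D ⊆ S)
    (hSD : S ⊆ closure D) (hS : UniqueDiffOn ℝ S) {w : Euc n → ℝ} (hw : ContDiffOn ℝ 2 w S)
    (hw_sol : ∀ x ∈ D, InGardingCone k (hessianWithin w S x) ∧
      sigmaMat k (hessianWithin w S x) = 1) :
    IsC2Solution k D S w (fderivWithin ℝ w S) (fderivWithin ℝ (fderivWithin ℝ w S) S) := by
  have hw₁ : ContDiffOn ℝ 1 (fderivWithin ℝ w S) S := hw.fderivWithin hS (by norm_num)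
  have hw₂ : ContDiffOn ℝ 0 (fderivWithin ℝ (fderivWithin ℝ w S) S) S :=
    hw₁.fderivWithin hS (by norm_num)
  refine ⟨fun x hx => ((hw x hx).differentiableWithinAt two_ne_zero).hasFDerivWithinAt,
    fun x hx => ((hw₁ x hx).differentiableWithinAt one_ne_zero).hasFDerivWithinAt,
    hw₂.continuousOn, fun x hx => ?_, fun x hx => ?_⟩
  · refine closure_minimal ?_ (isClosed_admissibleLevel k n)
      (((hw₂.continuousOn x hx).mono hDS).mem_closure_image (hSD hx))
    rintro _ ⟨y, hy, rfl⟩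
    have h := mem_admissibleMat_of_inGardingCone (hw_sol y hy).1 (hw_sol y hy).2
    rwa [hessianWithin_eq_bilMatrix hS (hDS hy)] at h
  · have h_nhds : ∀ y ∈ D, S ∈ 𝓝 y := fun y hy => mem_of_superset (hD.mem_nhds hy) hDS
    have h_fderiv : fderivWithin ℝ w S =ᶠ[𝓝 x] fderiv ℝ w := by
      filter_upwards [hD.mem_nhds hx] with y hy using fderivWithin_of_mem_nhds (h_nhds y hy)
    rw [fderivWithin_of_mem_nhds (h_nhds x hx), fderivWithin_of_mem_nhds (h_nhds x hx),
      h_fderiv.fderiv_eq]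
    exact hasQuadExpansionAt_of_contDiffAt (hw.contDiffAt (h_nhds x hx))

namespace IsC2Solution

variable {D S : Set (Euc n)} {w : Euc n → ℝ} {G : Euc n → Euc n →L[ℝ] ℝ} {H : Euc n → Bil n}
  {x : Euc n}

protected lemma continuousOn (h : IsC2Solution k D S w G H) : ContinuousOn w S :=
  fun x hx => (h.hasFDerivWithinAt x hx).continuousWithinAt

lemma continuousOn_gradient (h : IsC2Solution k D S w G H) : ContinuousOn G S :=
  fun x hx => (h.hasFDerivWithinAt_gradient x hx).continuousWithinAt

lemma hessian_mem_admissible (h : IsC2Solution k D S w G H) (hx : x ∈ S) :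
    H x ∈ admissible k n :=
  admissibleLevel_subset_admissible (h.hessian_mem x hx)

lemma hessian_symm (h : IsC2Solution k D S w G H) (hx : x ∈ S) (v v' : Euc n) :
    H x v v' = H x v' v :=
  symm_of_mem_admissible (h.hessian_mem_admissible hx) v v'

lemma subsolAt (h : IsC2Solution k D S w G H) (hDS : D ⊆ S) (hx : x ∈ D) : SubsolAt k w x :=
  ⟨_, _, h.hessian_mem_admissible (hDS hx), h.hasQuadExpansionAt x hx⟩

lemma hessian_notMem_strictlyAdmissible (h : IsC2Solution k D S w G H) (hk : 1 ≤ k)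
    (hx : x ∈ S) : H x ∉ strictlyAdmissible k n :=
  notMem_strictlyAdmissible_of_mem_admissibleLevel hk (h.hessian_mem x hx)

lemma supersolAt (h : IsC2Solution k D S w G H) (hk : 1 ≤ k) (hDS : D ⊆ S) (hx : x ∈ D) :
    SupersolAt k w x :=
  ⟨_, _, h.hessian_notMem_strictlyAdmissible hk (hDS hx), h.hessian_symm (hDS hx),
    h.hasQuadExpansionAt x hx⟩

end IsC2Solution

/-- `ρ` is a `C²` function with `Ω = {ρ < 0}` whose differential does not vanish on `∂Ω`. -/
structure IsDefiningFunction {E : Type*} [NormedAddCommGroup E] [NormedSpace ℝ E] (ρ : E → ℝ)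
    (Ω : Set E) : Prop where
  contDiff : ContDiff ℝ 2 ρ
  eq_setOf_neg : Ω = {x | ρ x < 0}
  fderiv_ne_zero : ∀ x ∈ frontier Ω, fderiv ℝ ρ x ≠ 0

protected lemma IsDefiningFunction.isOpen {E : Type*} [NormedAddCommGroup E] [NormedSpace ℝ E]
    {ρ : E → ℝ} {Ω : Set E} (h : IsDefiningFunction ρ Ω) : IsOpen Ω := by
  rw [h.eq_setOf_neg]
  exact isOpen_lt h.contDiff.continuous continuous_const

/-- The data of the Dirichlet problem on the rings `Ω \ B̄_ε(0)`, `0 < ε < ε₀`: the convex domain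
`Ω` with a defining function `ρ`, the height `M`, and the solution `ψ` on the whole of `Ω` with its
gradient `G` and its Lipschitz Hessian `H`. -/
structure RingProblem (n k : ℕ) where
  one_le : 1 ≤ k
  le_dim : k ≤ n
  Ω : Set (Euc n)
  convex : Convex ℝ Ω
  isBounded : IsBounded Ω
  ρ : Euc n → ℝ
  isDefiningFunction : IsDefiningFunction ρ Ω
  ε₀ : ℝ
  ε₀_pos : 0 < ε₀
  closedBall_subset : closedBall (0 : Euc n) ε₀ ⊆ Ω
  ψ : Euc n → ℝ
  G : Euc n → Euc n →L[ℝ] ℝ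
  H : Euc n → Bil n
  isC2Solution : IsC2Solution k Ω (closure Ω) ψ G H
  hessianLip : ℝ
  norm_hessian_sub_le : ∀ x ∈ closure Ω, ∀ y ∈ closure Ω, ‖H y - H x‖ ≤ hessianLip * ‖y - x‖
  ψ_eq_zero : ∀ x ∈ frontier Ω, ψ x = 0
  M : ℝ
  M_pos : 0 < M
  neg_M_le_ψ : ∀ x ∈ closure Ω, -M ≤ ψ x
  underSol_nonpos : ∀ ε ∈ Ioo (0 : ℝ) ε₀, ∀ x ∈ frontier Ω, underSol k 0 ε M x ≤ 0

namespace RingProblem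

/-- The open ring `Ω \ B̄_ε(0)`. -/
def annulus (P : RingProblem n k) (ε : ℝ) : Set (Euc n) := P.Ω \ closedBall 0 ε

/-- The ring `Ω̄ \ B̄_ε(0)`, which contains its outer boundary but not its inner one. -/
def outerClosedAnnulus (P : RingProblem n k) (ε : ℝ) : Set (Euc n) :=
  closure P.Ω \ closedBall 0 ε

/-- `u` solves the Dirichlet problem on `Ω \ B̄_ε(0)` with values `0` on `∂Ω` and `-M` on `∂B_ε(0)`;
`Gu` and `Hu` are its gradient and Hessian. -/
structure IsRingSol (P : RingProblem n k) (ε : ℝ) (u : Euc n → ℝ) (Gu : Euc n → Euc n →L[ℝ] ℝ)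
    (Hu : Euc n → Bil n) : Prop where
  mem_Ioo : ε ∈ Ioo (0 : ℝ) P.ε₀
  isC2Solution : IsC2Solution k (P.annulus ε) (P.outerClosedAnnulus ε) u Gu Hu
  continuousOn : ContinuousOn u (closure (P.annulus ε))
  eq_zero : ∀ x ∈ frontier P.Ω, u x = 0
  eq_neg_M : ∀ x, ‖x‖ = ε → u x = -P.M

variable (P : RingProblem n k) {ε : ℝ}

lemma nonempty : P.Ω.Nonempty := ⟨0, P.closedBall_subset (by simp [P.ε₀_pos.le])⟩

lemma isOpen : IsOpen P.Ω := P.isDefiningFunction.isOpen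

lemma mem_frontier_iff {x : Euc n} : x ∈ frontier P.Ω ↔ x ∈ closure P.Ω ∧ x ∉ P.Ω := by
  rw [P.isOpen.frontier_eq, Set.mem_sdiff]

lemma isCompact_closure : IsCompact (closure P.Ω) := P.isBounded.isCompact_closure

lemma isOpen_annulus : IsOpen (P.annulus ε) := P.isOpen.sdiff isClosed_closedBall

lemma isBounded_annulus : IsBounded (P.annulus ε) := P.isBounded.subset sdiff_subset

lemma annulus_subset_outerClosedAnnulus : P.annulus ε ⊆ P.outerClosedAnnulus ε :=
  sdiff_subset_sdiff_left subset_closure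

lemma mem_outerClosedAnnulus_of_mem_frontier (hε : ε < P.ε₀) {p : Euc n}
    (hp : p ∈ frontier P.Ω) : p ∈ P.outerClosedAnnulus ε :=
  ⟨frontier_subset_closure hp, fun hp_ball => (P.mem_frontier_iff.1 hp).2
    (P.closedBall_subset (closedBall_subset_closedBall hε.le hp_ball))⟩

lemma outerClosedAnnulus_subset_closure_annulus :
    P.outerClosedAnnulus ε ⊆ closure (P.annulus ε) := fun x hx => by
  have h := isClosed_closedBall.isOpen_compl.inter_closure (t := P.Ω) ⟨hx.2, hx.1⟩
  rwa [inter_comm] at h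

lemma outerClosedAnnulus_eq_inter :
    P.outerClosedAnnulus ε = ringSet P.Ω 0 ε ∩ (closedBall (0 : Euc n) ε)ᶜ :=
  Subset.antisymm (fun _ hx => ⟨P.outerClosedAnnulus_subset_closure_annulus hx, hx.2⟩)
    fun _ hx => ⟨closure_mono sdiff_subset hx.1, hx.2⟩

lemma hessianWithin_ringSet (u : Euc n → ℝ) {x : Euc n} (hx : x ∈ P.outerClosedAnnulus ε) :
    hessianWithin u (ringSet P.Ω 0 ε) x = hessianWithin u (P.outerClosedAnnulus ε) x := by
  ext i j
  rw [hessianWithin, hessianWithin, P.outerClosedAnnulus_eq_inter,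
    iteratedFDerivWithin_inter_open isClosed_closedBall.isOpen_compl hx.2]

lemma exists_isRingSol (hε : ε ∈ Ioo (0 : ℝ) P.ε₀) {u : Euc n → ℝ}
    (hu : IsSol k P.Ω 0 ε P.M u) :
    ∃ Gu Hu, P.IsRingSol ε u Gu Hu ∧
      ∀ p ∈ frontier P.Ω, hessianWithin u (ringSet P.Ω 0 ε) p = bilMatrix (Hu p) := by
  obtain ⟨hu_diff, hu_eq, hu_outer, hu_inner⟩ := hu
  have h_sub : P.outerClosedAnnulus ε ⊆ ringSet P.Ω 0 ε := by
    rw [P.outerClosedAnnulus_eq_inter]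
    exact inter_subset_left
  have h_unique : UniqueDiffOn ℝ (P.outerClosedAnnulus ε) :=
    (uniqueDiffOn_closure P.isOpen P.convex P.nonempty).inter isClosed_closedBall.isOpen_compl
  have hu_sol := isC2Solution_of_contDiffOn (k := k) P.isOpen_annulus
    P.annulus_subset_outerClosedAnnulus h_sub h_unique (hu_diff.mono h_sub) fun x hx => by
      rw [← P.hessianWithin_ringSet u (P.annulus_subset_outerClosedAnnulus hx)]
      exact hu_eq x hx
  refine ⟨_, _, ⟨hε, hu_sol, hu_diff.continuousOn, hu_outer, fun x hx => hu_inner x (by simpa)⟩,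
    fun p hp => ?_⟩
  have hpV := P.mem_outerClosedAnnulus_of_mem_frontier hε.2 hp
  rw [P.hessianWithin_ringSet u hpV, hessianWithin_eq_bilMatrix h_unique hpV]

end RingProblem

end

/-! ### The Hopf lemma -/

section

section DefiningFunction

variable {E : Type*} [NormedAddCommGroup E] [NormedSpace ℝ E]

lemma exists_smul_eq_of_forall_neg {a b : E →L[ℝ] ℝ} {c : ℝ} (ha : a ≠ 0)
    (h : ∀ v, a v < 0 → b v ≤ c * a v) : ∃ r ≥ c, b = r • a := by
  obtain ⟨v₀, hv₀⟩ : ∃ v, a v = -1 := by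
    obtain ⟨w, hw⟩ : ∃ w, a w ≠ 0 := by
      contrapose! ha
      exact ContinuousLinearMap.ext ha
    exact ⟨(-1 / a w) • w, by simp [hw]⟩
  have h_ker : ∀ v, a v = 0 → b v ≤ 0 := fun v hv => by
    have h_ray : ∀ᶠ s in 𝓝[>] (0 : ℝ), b v + s * b v₀ ≤ c * -s := by
      filter_upwards [self_mem_nhdsWithin] with s (hs : 0 < s)
      simpa [hv, hv₀] using h (v + s • v₀) (by simp [hv, hv₀, hs])
    have h_lhs : Tendsto (fun s : ℝ => b v + s * b v₀) (𝓝[>] 0) (𝓝 (b v + 0 * b v₀)) :=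
      (Continuous.tendsto (by fun_prop) 0).mono_left nhdsWithin_le_nhds
    have h_rhs : Tendsto (fun s : ℝ => c * -s) (𝓝[>] 0) (𝓝 (c * -0)) :=
      (Continuous.tendsto (by fun_prop) 0).mono_left nhdsWithin_le_nhds
    simpa using le_of_tendsto_of_tendsto h_lhs h_rhs h_ray
  refine ⟨-b v₀, ?_, ContinuousLinearMap.ext fun v => ?_⟩
  · have h₀ := h v₀ (by rw [hv₀]; norm_num)
    rw [hv₀] at h₀
    linarith
  · have h_le := h_ker (v + a v • v₀) (by simp [hv₀])
    have h_ge := h_ker (-(v + a v • v₀)) (by simp [hv₀])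
    simp only [map_neg, map_add, map_smul, smul_eq_mul, _root_.smul_apply] at h_le h_ge ⊢
    linarith

lemma tendsto_slope_of_hasFDerivWithinAt {f : E → ℝ} {f' : E →L[ℝ] ℝ} {S : Set E} {p v : E}
    (hf : HasFDerivWithinAt f f' S p) (hS : ∀ᶠ s in 𝓝[>] (0 : ℝ), p + s • v ∈ S) :
    Tendsto (fun s : ℝ => s⁻¹ • (f (p + s • v) - f p)) (𝓝[>] 0) (𝓝 (f' v)) := by
  refine hf.lim ?_ hS ?_
  · have h_cont : Continuous fun t : ℝ => t • v := by fun_prop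
    simpa using (h_cont.tendsto 0).mono_left nhdsWithin_le_nhds
  · refine tendsto_const_nhds.congr' ?_
    filter_upwards [self_mem_nhdsWithin] with s (hs : 0 < s)
    rw [inv_smul_smul₀ hs.ne']

lemma apply_le_apply_of_hasFDerivWithinAt {f g : E → ℝ} {f' g' : E →L[ℝ] ℝ} {S T : Set E}
    {p v : E} (hf : HasFDerivWithinAt f f' S p) (hg : HasFDerivWithinAt g g' T p)
    (hS : ∀ᶠ s in 𝓝[>] (0 : ℝ), p + s • v ∈ S) (hT : ∀ᶠ s in 𝓝[>] (0 : ℝ), p + s • v ∈ T)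
    (h_eq : f p = g p) (h_le : ∀ᶠ s in 𝓝[>] (0 : ℝ), f (p + s • v) ≤ g (p + s • v)) :
    f' v ≤ g' v := by
  refine le_of_tendsto_of_tendsto (tendsto_slope_of_hasFDerivWithinAt hf hS)
    (tendsto_slope_of_hasFDerivWithinAt hg hT) ?_
  filter_upwards [h_le, self_mem_nhdsWithin] with s hs (hs₀ : 0 < s)
  rw [h_eq, smul_eq_mul, smul_eq_mul]
  gcongr

namespace IsDefiningFunction

variable {ρ : E → ℝ} {Ω : Set E}

lemma nonneg_of_notMem (h : IsDefiningFunction ρ Ω) {x : E} (hx : x ∉ Ω) : 0 ≤ ρ x := by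
  simpa [h.eq_setOf_neg] using hx

lemma nonpos_of_mem_closure (h : IsDefiningFunction ρ Ω) {x : E} (hx : x ∈ closure Ω) :
    ρ x ≤ 0 := by
  have h_sub : closure Ω ⊆ {x | ρ x ≤ 0} :=
    closure_minimal (h.eq_setOf_neg.le.trans fun x (hx : ρ x < 0) => hx.le)
      (isClosed_le h.contDiff.continuous continuous_const)
  exact h_sub hx

lemma eq_zero_of_mem_frontier (h : IsDefiningFunction ρ Ω) {x : E} (hx : x ∈ frontier Ω) :
    ρ x = 0 := by
  rw [h.isOpen.frontier_eq] at hx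
  exact le_antisymm (h.nonpos_of_mem_closure hx.1) (h.nonneg_of_notMem hx.2)

lemma exists_le_norm_fderiv (h : IsDefiningFunction ρ Ω) (hΩ : IsCompact (closure Ω))
    (hΩ_ne : Ω.Nonempty) : ∃ m > 0, ∀ x ∈ closure Ω, -m < ρ x → m ≤ ‖fderiv ℝ ρ x‖ := by
  have h_cont : Continuous fun x => max ‖fderiv ℝ ρ x‖ (-ρ x) :=
    (h.contDiff.continuous_fderiv two_ne_zero).norm.max h.contDiff.continuous.neg
  obtain ⟨x, hx, hx_min⟩ := hΩ.exists_isMinOn hΩ_ne.closure h_cont.continuousOn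
  refine ⟨max ‖fderiv ℝ ρ x‖ (-ρ x), ?_, fun y hy hyρ => ?_⟩
  · by_cases hxΩ : x ∈ Ω
    · rw [h.eq_setOf_neg] at hxΩ
      exact lt_max_of_lt_right (neg_pos.2 hxΩ)
    · refine lt_max_of_lt_left (norm_pos_iff.2 (h.fderiv_ne_zero x ?_))
      rw [h.isOpen.frontier_eq]
      exact ⟨hx, hxΩ⟩
  · exact (le_max_iff.1 (hx_min hy)).resolve_right fun h_le => by linarith

lemma eventually_mem_of_fderiv_neg (h : IsDefiningFunction ρ Ω) {p v : E} (hp : p ∈ frontier Ω)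
    (hv : fderiv ℝ ρ p v < 0) : ∀ᶠ s in 𝓝[>] (0 : ℝ), p + s • v ∈ Ω := by
  have h_slope := tendsto_slope_of_hasFDerivWithinAt (v := v)
    ((h.contDiff.differentiable two_ne_zero) p).hasFDerivAt.hasFDerivWithinAt
    (Eventually.of_forall fun s => mem_univ (p + s • v))
  filter_upwards [h_slope.eventually (gt_mem_nhds hv), self_mem_nhdsWithin] with s hs (hs₀ : 0 < s)
  rw [h.eq_zero_of_mem_frontier hp, sub_zero, smul_eq_mul, inv_mul_lt_iff₀ hs₀, mul_zero] at hs
  rwa [h.eq_setOf_neg]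

end IsDefiningFunction

end DefiningFunction

namespace IsDefiningFunction

variable {n k : ℕ} {ρ : Euc n → ℝ} {Ω : Set (Euc n)}

lemma exists_nonneg_bilTrace_add_norm_sq (h : IsDefiningFunction ρ Ω) (hΩ : IsCompact (closure Ω))
    (hΩ_ne : Ω.Nonempty) : ∃ δ > (0 : ℝ), ∃ K > (0 : ℝ), ∀ x ∈ closure Ω, -δ ≤ ρ x →
      0 ≤ bilTrace ((-K) • fderiv ℝ (fderiv ℝ ρ) x) + ‖(-K) • fderiv ℝ ρ x‖ ^ 2 := by
  obtain ⟨m, hm, hm_le⟩ := h.exists_le_norm_fderiv hΩ hΩ_ne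
  have h_hess : Continuous fun x => bilTrace (fderiv ℝ (fderiv ℝ ρ) x) := by
    have := (h.contDiff.fderiv_right (m := 1) (by norm_num)).continuous_fderiv one_ne_zero
    simp only [bilTrace_eq_sum]
    fun_prop
  obtain ⟨T, hT⟩ := hΩ.exists_bound_of_continuousOn h_hess.continuousOn
  refine ⟨m / 2, half_pos hm, |T| / m ^ 2 + 1, by positivity, fun x hx hxρ => ?_⟩
  set K := |T| / m ^ 2 + 1
  have hK : 0 < K := by positivity
  have hKm : |T| ≤ K * m ^ 2 := by
    rw [add_mul, div_mul_cancel₀ _ (by positivity)]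
    nlinarith
  have h_grad : m ^ 2 ≤ ‖fderiv ℝ ρ x‖ ^ 2 := by
    gcongr
    exact hm_le x hx (by linarith)
  have h_trace : bilTrace (fderiv ℝ (fderiv ℝ ρ) x) ≤ K * ‖fderiv ℝ ρ x‖ ^ 2 :=
    calc bilTrace (fderiv ℝ (fderiv ℝ ρ) x) ≤ T := (le_abs_self _).trans (hT x hx)
      _ ≤ K * m ^ 2 := (le_abs_self T).trans hKm
      _ ≤ K * ‖fderiv ℝ ρ x‖ ^ 2 := by gcongr
  rw [bilTrace_smul, norm_smul, mul_pow, norm_neg, Real.norm_of_nonneg hK.le]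
  nlinarith [mul_le_mul_of_nonneg_left h_trace hK.le]

lemma supersolAt_neg_mul_exp (h : IsDefiningFunction ρ Ω) (hk : 1 ≤ k) {K : ℝ} {x : Euc n}
    (hx : 0 ≤ bilTrace ((-K) • fderiv ℝ (fderiv ℝ ρ) x) + ‖(-K) • fderiv ℝ ρ x‖ ^ 2) {a : ℝ}
    (ha : 0 ≤ a) (b : ℝ) : SupersolAt k (fun y => -a * Real.exp (-K * ρ y) + b) x := by
  refine ((hasQuadExpansionAt_of_contDiffAt h.contDiff.contDiffAt).const_mul (-K)
    ).supersolAt_neg_mul_exp hk (fun v w => ?_) hx ha b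
  simp only [_root_.smul_apply, (h.contDiff.contDiffAt.isSymmSndFDerivAt (by simp)).eq v w]

lemma exists_le_neg_of_forall_neg (h : IsDefiningFunction ρ Ω) (hΩ : IsCompact (closure Ω))
    {f : Euc n → ℝ} (hf : ContinuousOn f (closure Ω)) (hf_neg : ∀ x ∈ Ω, f x < 0) {δ : ℝ}
    (hδ : 0 < δ) : ∃ c > (0 : ℝ), ∀ x ∈ closure Ω, ρ x ≤ -δ → f x ≤ -c := by
  set S := closure Ω ∩ {x | ρ x ≤ -δ}
  have hS : IsCompact S :=
    hΩ.inter_right (isClosed_le h.contDiff.continuous continuous_const)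
  rcases S.eq_empty_or_nonempty with hS_empty | hS_ne
  · exact ⟨1, one_pos, fun x hx hxρ => (hS_empty.le ⟨hx, hxρ⟩).elim⟩
  · obtain ⟨x, hx, hx_max⟩ := hS.exists_isMaxOn hS_ne (hf.mono inter_subset_left)
    have hxΩ : x ∈ Ω := by
      rw [h.eq_setOf_neg]
      exact hx.2.trans_lt (neg_lt_zero.2 hδ)
    exact ⟨-f x, neg_pos.2 (hf_neg x hxΩ), fun y hy hyρ => by simpa using hx_max ⟨hy, hyρ⟩⟩

lemma le_neg_mul_exp_of_subsolAt (h : IsDefiningFunction ρ Ω) (hk : 1 ≤ k) (hkn : k ≤ n)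
    (hΩ : IsBounded Ω) {f : Euc n → ℝ} (hf : ContinuousOn f (closure Ω))
    (hf_sub : ∀ x ∈ Ω, SubsolAt k f x) (hf_bdry : ∀ x ∈ frontier Ω, f x ≤ 0) {δ K a : ℝ}
    (ha : 0 ≤ a) (hK : ∀ x ∈ closure Ω, -δ ≤ ρ x →
      0 ≤ bilTrace ((-K) • fderiv ℝ (fderiv ℝ ρ) x) + ‖(-K) • fderiv ℝ ρ x‖ ^ 2)
    (hf_le : ∀ x ∈ closure Ω, ρ x ≤ -δ → f x ≤ -(a * Real.exp (K * δ))) :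
    ∀ x ∈ closure (Ω ∩ {x | -δ < ρ x}), f x ≤ -a * Real.exp (-K * ρ x) + a := by
  set D := Ω ∩ {x | -δ < ρ x}
  have hρ : Continuous ρ := h.contDiff.continuous
  have hD : IsOpen D := h.isOpen.inter (isOpen_lt continuous_const hρ)
  have hD_closure : closure D ⊆ closure Ω := closure_mono inter_subset_left
  have hρ_ge : closure D ⊆ {x | -δ ≤ ρ x} :=
    closure_minimal (fun x hx => mem_ofPred.2 hx.2.le) (isClosed_le continuous_const hρ)
  refine comparison_principle hkn hD (hΩ.subset inter_subset_left) (hf.mono hD_closure)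
    (by fun_prop) (fun x hx hxD => ?_) (fun x hx => hf_sub x hx.1) fun x hx =>
    h.supersolAt_neg_mul_exp hk (hK x (subset_closure hx.1) hx.2.le) ha a
  by_cases hxΩ : x ∈ Ω
  · have hxρ : ρ x = -δ := le_antisymm (not_lt.1 fun hx' => hxD ⟨hxΩ, hx'⟩) (hρ_ge hx)
    have hfx := hf_le x (hD_closure hx) hxρ.le
    rw [hxρ, neg_mul_neg]
    linarith
  · have hx_bdry : x ∈ frontier Ω := by
      rw [h.isOpen.frontier_eq]
      exact ⟨hD_closure hx, hxΩ⟩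
    simpa [h.eq_zero_of_mem_frontier hx_bdry] using hf_bdry x hx_bdry

/-- The Hopf lemma, with barrier `a (1 - exp (-K ρ))`. -/
lemma exists_le_mul_of_subsolAt (h : IsDefiningFunction ρ Ω) (hk : 1 ≤ k) (hkn : k ≤ n)
    (hΩ : IsBounded Ω) (hΩ_ne : Ω.Nonempty) {f : Euc n → ℝ} (hf : ContinuousOn f (closure Ω))
    (hf_sub : ∀ x ∈ Ω, SubsolAt k f x) (hf_bdry : ∀ x ∈ frontier Ω, f x ≤ 0)
    (hf_neg : ∀ x ∈ Ω, f x < 0) :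
    ∃ c > (0 : ℝ), ∃ δ > (0 : ℝ), ∀ x ∈ Ω, -δ < ρ x → f x ≤ c * ρ x := by
  obtain ⟨δ, hδ, K, hK, h_barrier⟩ :=
    h.exists_nonneg_bilTrace_add_norm_sq hΩ.isCompact_closure hΩ_ne
  obtain ⟨c, hc, hc_le⟩ := h.exists_le_neg_of_forall_neg hΩ.isCompact_closure hf hf_neg hδ
  set a := c / Real.exp (K * δ)
  have ha : 0 < a := by positivity
  have ha_mul : a * Real.exp (K * δ) = c := div_mul_cancel₀ c (Real.exp_ne_zero _)
  refine ⟨a * K, by positivity, δ, hδ, fun x hx hxδ => ?_⟩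
  have h_le := h.le_neg_mul_exp_of_subsolAt hk hkn hΩ hf hf_sub hf_bdry ha.le h_barrier
    (by rwa [ha_mul]) x (subset_closure ⟨hx, hxδ⟩)
  nlinarith [Real.add_one_le_exp (-K * ρ x)]

end IsDefiningFunction

namespace RingProblem

variable (P : RingProblem n k)

lemma ψ_continuousOn : ContinuousOn P.ψ (closure P.Ω) := P.isC2Solution.continuousOn

lemma exists_two_smul_hessian_sub_mem_admissible :
    ∃ η > (0 : ℝ), ∀ x ∈ closure P.Ω, (2 : ℝ) • (P.H x - η • innerBil n) ∈ admissible k n := by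
  obtain ⟨η, hη, h_mem⟩ := exists_two_smul_sub_mem_admissible
    (P.isCompact_closure.image_of_continuousOn P.isC2Solution.continuousOn_hessian)
    (image_subset_iff.2 fun x hx => P.isC2Solution.hessian_mem_admissible hx)
  exact ⟨η, hη, fun x hx => h_mem _ (mem_image_of_mem _ hx)⟩

lemma ψ_neg {x : Euc n} (hx : x ∈ P.Ω) : P.ψ x < 0 := by
  obtain ⟨η, hη, h_mem⟩ := P.exists_two_smul_hessian_sub_mem_admissible
  obtain ⟨r, hr, h_ball⟩ := Metric.isOpen_iff.1 P.isOpen x hx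
  have h_le := comparison_principle P.le_dim (f := fun y => 2 * P.ψ y + -η * ‖y - x‖ ^ 2)
    (g := fun _ => -η * r ^ 2) P.isOpen P.isBounded
    (by have := P.ψ_continuousOn; fun_prop) (by fun_prop) (fun y hy hyΩ => ?_) (fun y hy => ?_)
    (fun y _ => supersolAt_const P.one_le _ _) x (subset_closure hx)
  · have h_pos : 0 < η * r ^ 2 := by positivity
    norm_num at h_le
    linarith
  · have hyr : r ≤ ‖y - x‖ := not_lt.1 fun hlt => hyΩ (h_ball (mem_ball_iff_norm.2 hlt))
    rw [P.ψ_eq_zero y (P.mem_frontier_iff.2 ⟨hy, hyΩ⟩), mul_zero, zero_add, neg_mul, neg_mul,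
      neg_le_neg_iff]
    gcongr
  · refine ⟨_, _, ?_, ((P.isC2Solution.hasQuadExpansionAt y hy).const_mul 2).add
      ((hasQuadExpansionAt_norm_sub_sq x y).const_mul (-η))⟩
    convert h_mem y (subset_closure hy) using 1
    module

lemma ψ_nonpos {x : Euc n} (hx : x ∈ closure P.Ω) : P.ψ x ≤ 0 := by
  by_cases hxΩ : x ∈ P.Ω
  · exact (P.ψ_neg hxΩ).le
  · exact (P.ψ_eq_zero x (P.mem_frontier_iff.2 ⟨hx, hxΩ⟩)).le

lemma exists_gradient_eq_smul_fderiv : ∃ c > (0 : ℝ), ∀ p ∈ frontier P.Ω,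
    ∃ r ≥ c, P.G p = r • fderiv ℝ P.ρ p := by
  have hρ := P.isDefiningFunction
  obtain ⟨c, hc, δ, hδ, h_hopf⟩ := hρ.exists_le_mul_of_subsolAt P.one_le P.le_dim P.isBounded
    P.nonempty P.ψ_continuousOn (fun x hx => P.isC2Solution.subsolAt subset_closure hx)
    (fun x hx => (P.ψ_eq_zero x hx).le) fun x hx => P.ψ_neg hx
  refine ⟨c, hc, fun p hp => exists_smul_eq_of_forall_neg (hρ.fderiv_ne_zero p hp) fun v hv => ?_⟩
  have h_mem := hρ.eventually_mem_of_fderiv_neg hp hv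
  have hρ_near : ∀ᶠ s in 𝓝[>] (0 : ℝ), -δ < P.ρ (p + s • v) := by
    have h_cont : Continuous fun s : ℝ => P.ρ (p + s • v) := by
      have := hρ.contDiff.continuous
      fun_prop
    refine nhdsWithin_le_nhds ((h_cont.tendsto 0).eventually (lt_mem_nhds ?_))
    simpa [hρ.eq_zero_of_mem_frontier hp]
  refine apply_le_apply_of_hasFDerivWithinAt (v := v) (g' := c • fderiv ℝ P.ρ p)
    (P.isC2Solution.hasFDerivWithinAt p (frontier_subset_closure hp))
    (((hρ.contDiff.differentiable two_ne_zero) p).hasFDerivAt.const_mul c).hasFDerivWithinAt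
    (h_mem.mono fun s hs => subset_closure hs) (Eventually.of_forall fun s => mem_univ _) ?_ ?_
  · rw [P.ψ_eq_zero p hp, hρ.eq_zero_of_mem_frontier hp, mul_zero]
  · filter_upwards [h_mem, hρ_near] with s hs hsδ using h_hopf _ hs hsδ

lemma exists_le_norm_gradient : ∃ g₀ > (0 : ℝ), ∀ p ∈ frontier P.Ω, g₀ ≤ ‖P.G p‖ := by
  obtain ⟨c, hc, h_eq⟩ := P.exists_gradient_eq_smul_fderiv
  obtain ⟨m, hm, hm_le⟩ :=
    P.isDefiningFunction.exists_le_norm_fderiv P.isCompact_closure P.nonempty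
  refine ⟨c * m, by positivity, fun p hp => ?_⟩
  obtain ⟨r, hr, hG⟩ := h_eq p hp
  have hmp : m ≤ ‖fderiv ℝ P.ρ p‖ := hm_le p (frontier_subset_closure hp)
    (by simpa [P.isDefiningFunction.eq_zero_of_mem_frontier hp])
  have hr₀ : 0 ≤ r := hc.le.trans hr
  rw [hG, norm_smul, Real.norm_of_nonneg hr₀]
  gcongr

lemma eventually_mem_of_gradient_neg {p v : Euc n} (hp : p ∈ frontier P.Ω) (hv : P.G p v < 0) :
    ∀ᶠ s in 𝓝[>] (0 : ℝ), p + s • v ∈ P.Ω := by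
  obtain ⟨c, hc, h_eq⟩ := P.exists_gradient_eq_smul_fderiv
  obtain ⟨r, hr, hG⟩ := h_eq p hp
  refine P.isDefiningFunction.eventually_mem_of_fderiv_neg hp ?_
  rw [hG, _root_.smul_apply, smul_eq_mul] at hv
  exact (pos_iff_neg_of_mul_neg hv).1 (hc.trans_le hr)

end RingProblem

end

/-! ### Barriers for the solution on the ring -/

section

variable {n k : ℕ}

namespace RingProblem

variable (P : RingProblem n k)

lemma exists_closedBall_subset : ∃ R > P.ε₀, closedBall (0 : Euc n) R ⊆ P.Ω := by
  obtain ⟨δ, hδ, h_sub⟩ := (isCompact_closedBall (0 : Euc n) P.ε₀).exists_cthickening_subset_open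
    P.isOpen P.closedBall_subset
  rw [cthickening_closedBall hδ.le P.ε₀_pos.le] at h_sub
  exact ⟨δ + P.ε₀, by linarith, h_sub⟩

lemma exists_mul_ψ_le_neg_M :
    ∃ A ≥ (2 : ℝ), ∀ x ∈ closedBall (0 : Euc n) P.ε₀, A * P.ψ x ≤ -P.M := by
  obtain ⟨x, hx, hx_max⟩ := (isCompact_closedBall (0 : Euc n) P.ε₀).exists_isMaxOn
    ⟨0, by simp [P.ε₀_pos.le]⟩ (P.ψ_continuousOn.mono (P.closedBall_subset.trans subset_closure))
  have hψx : P.ψ x < 0 := P.ψ_neg (P.closedBall_subset hx)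
  have h_ratio : 0 < P.M / -P.ψ x := div_pos P.M_pos (neg_pos.2 hψx)
  have h_mul : P.M / -P.ψ x * P.ψ x = -P.M := by
    rw [div_neg, neg_mul, div_mul_cancel₀ _ hψx.ne]
  refine ⟨2 + P.M / -P.ψ x, by linarith, fun y hy => ?_⟩
  have hψy : P.ψ y ≤ P.ψ x := hx_max hy
  nlinarith

variable {P} {ε : ℝ} {x : Euc n}

lemma closure_annulus_subset : closure (P.annulus ε) ⊆ closure P.Ω := closure_mono sdiff_subset

lemma mem_annulus_iff : x ∈ P.annulus ε ↔ x ∈ P.Ω ∧ ε < ‖x‖ := by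
  simp [annulus]

lemma le_norm_of_mem_closure_annulus (hx : x ∈ closure (P.annulus ε)) : ε ≤ ‖x‖ := by
  have h_sub : closure (P.annulus ε) ⊆ {x | ε ≤ ‖x‖} :=
    closure_minimal (fun y hy => mem_ofPred.2 (mem_annulus_iff.1 hy).2.le)
      (isClosed_le continuous_const continuous_norm)
  exact h_sub hx

lemma mem_frontier_or_norm_eq (hx : x ∈ closure (P.annulus ε)) (hx' : x ∉ P.annulus ε) :
    x ∈ frontier P.Ω ∨ ‖x‖ = ε := by
  by_cases hxΩ : x ∈ P.Ω
  · refine Or.inr (le_antisymm (not_lt.1 fun h_lt => ?_) (le_norm_of_mem_closure_annulus hx))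
    exact hx' (mem_annulus_iff.2 ⟨hxΩ, h_lt⟩)
  · exact Or.inl (P.mem_frontier_iff.2 ⟨closure_annulus_subset hx, hxΩ⟩)

namespace IsRingSol

variable {u : Euc n → ℝ} {Gu : Euc n → Euc n →L[ℝ] ℝ} {Hu : Euc n → Bil n}

lemma subsolAt (h : P.IsRingSol ε u Gu Hu) (hx : x ∈ P.annulus ε) : SubsolAt k u x :=
  h.isC2Solution.subsolAt P.annulus_subset_outerClosedAnnulus hx

lemma supersolAt (h : P.IsRingSol ε u Gu Hu) (hx : x ∈ P.annulus ε) : SupersolAt k u x :=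
  h.isC2Solution.supersolAt P.one_le P.annulus_subset_outerClosedAnnulus hx

lemma mul_ψ_le (h : P.IsRingSol ε u Gu Hu) {A : ℝ} (hA : 1 ≤ A)
    (hA_le : ∀ x ∈ closedBall (0 : Euc n) P.ε₀, A * P.ψ x ≤ -P.M) :
    ∀ x ∈ closure (P.annulus ε), A * P.ψ x ≤ u x := by
  refine comparison_principle P.le_dim P.isOpen_annulus P.isBounded_annulus
    (continuousOn_const.mul (P.ψ_continuousOn.mono closure_annulus_subset)) h.continuousOn
    (fun x hx hx' => ?_)
    (fun x hx => (P.isC2Solution.subsolAt subset_closure hx.1).const_mul hA)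
    fun x hx => h.supersolAt hx
  rcases mem_frontier_or_norm_eq hx hx' with hx_outer | hx_inner
  · rw [h.eq_zero x hx_outer, P.ψ_eq_zero x hx_outer, mul_zero]
  · rw [h.eq_neg_M x hx_inner]
    exact hA_le x (by simpa [hx_inner] using h.mem_Ioo.2.le)

lemma le_ψ (h : P.IsRingSol ε u Gu Hu) : ∀ x ∈ closure (P.annulus ε), u x ≤ P.ψ x := by
  refine comparison_principle P.le_dim P.isOpen_annulus P.isBounded_annulus h.continuousOn
    (P.ψ_continuousOn.mono closure_annulus_subset) (fun x hx hx' => ?_)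
    (fun x hx => h.subsolAt hx)
    fun x hx => P.isC2Solution.supersolAt P.one_le subset_closure hx.1
  rcases mem_frontier_or_norm_eq hx hx' with hx_outer | hx_inner
  · rw [h.eq_zero x hx_outer, P.ψ_eq_zero x hx_outer]
  · rw [h.eq_neg_M x hx_inner]
    exact P.neg_M_le_ψ x (closure_annulus_subset hx)

lemma nonpos (h : P.IsRingSol ε u Gu Hu) (hx : x ∈ closure (P.annulus ε)) : u x ≤ 0 :=
  (h.le_ψ x hx).trans (P.ψ_nonpos (closure_annulus_subset hx))

lemma underSol_le (h : P.IsRingSol ε u Gu Hu) :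
    ∀ x ∈ closure (P.annulus ε), underSol k 0 ε P.M x ≤ u x := by
  refine comparison_principle P.le_dim P.isOpen_annulus P.isBounded_annulus
    (by unfold underSol; fun_prop) h.continuousOn (fun x hx hx' => ?_) (fun x _ => ?_)
    fun x hx => h.supersolAt hx
  · rcases mem_frontier_or_norm_eq hx hx' with hx_outer | hx_inner
    · rw [h.eq_zero x hx_outer]
      exact P.underSol_nonpos ε h.mem_Ioo x hx_outer
    · rw [h.eq_neg_M x hx_inner, underSol, sub_zero, hx_inner]
      linarith
  · have h_quad := ((hasQuadExpansionAt_norm_sub_sq 0 x).const_mul (1 / (2 * cnk n k))).add_const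
      (-(ε ^ 2 / (2 * cnk n k)) - P.M)
    refine ⟨_, _, ?_, h_quad.congr (Eventually.of_forall fun y => ?_)⟩
    · convert inv_cnk_smul_innerBil_mem_admissible P.one_le P.le_dim using 1
      rw [smul_smul]
      congr 1
      field_simp
    · simp only [underSol]
      ring

lemma neg_M_le (h : P.IsRingSol ε u Gu Hu) (hx : x ∈ closure (P.annulus ε)) : -P.M ≤ u x := by
  have hε := h.mem_Ioo.1
  have hc := cnk_pos P.le_dim
  have h_div : ε ^ 2 / (2 * cnk n k) ≤ ‖x - 0‖ ^ 2 / (2 * cnk n k) := by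
    rw [sub_zero]
    gcongr
    exact le_norm_of_mem_closure_annulus hx
  have h_le := h.underSol_le x hx
  rw [underSol] at h_le
  linarith

end IsRingSol

end RingProblem

lemma supersolAt_neg_mul_exp_norm_sq (hk : 1 ≤ k) {a β : ℝ} (ha : 0 ≤ a) (hβ : 0 ≤ β) {x : Euc n}
    (hx : (n : ℝ) ≤ 2 * β * ‖x‖ ^ 2) (α b : ℝ) :
    SupersolAt k (fun y => -a * Real.exp (-β * ‖y - 0‖ ^ 2 + α) + b) x := by
  refine (((hasQuadExpansionAt_norm_sub_sq 0 x).const_mul (-β)).add_const α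
    ).supersolAt_neg_mul_exp hk (fun v w => ?_) ?_ ha b
  · simp only [_root_.smul_apply, innerBil_apply, smul_eq_mul, real_inner_comm]
  · simp only [bilTrace_smul, bilTrace_innerBil, norm_smul, mul_pow, norm_neg, Real.norm_eq_abs,
      sq_abs, innerSL_apply_norm, sub_zero]
    nlinarith [mul_le_mul_of_nonneg_left hx hβ]

namespace RingProblem

variable {P : RingProblem n k} {ε : ℝ} {x : Euc n}

namespace IsRingSol

variable {u : Euc n → ℝ} {Gu : Euc n → Euc n →L[ℝ] ℝ} {Hu : Euc n → Bil n}

lemma le_neg_mul_exp (h : P.IsRingSol ε u Gu Hu) {R a α : ℝ}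
    (hR : closedBall (0 : Euc n) R ⊆ P.Ω) (ha : 0 ≤ a) (hα : (n : ℝ) ≤ 2 * α)
    (haM : P.M ≤ a * (1 - Real.exp (-(α / ε ^ 2) * R ^ 2 + α))) (hx : x ∈ ball 0 R)
    (hεx : ε < ‖x‖) :
    u x ≤ -a * Real.exp (-(α / ε ^ 2) * ‖x - 0‖ ^ 2 + α) + (a - P.M) := by
  have hε := h.mem_Ioo.1
  have hα₀ : 0 ≤ α := by linarith [n.cast_nonneg (α := ℝ)]
  set D := ball (0 : Euc n) R \ closedBall 0 ε
  have hD : D ⊆ P.annulus ε := sdiff_subset_sdiff_left (ball_subset_closedBall.trans hR)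
  refine comparison_principle P.le_dim (isOpen_ball.sdiff isClosed_closedBall)
    (isBounded_ball.subset sdiff_subset) (h.continuousOn.mono (closure_mono hD)) (by fun_prop)
    (fun y hy hyD => ?_) (fun y hy => h.subsolAt (hD hy))
    (fun y hy => supersolAt_neg_mul_exp_norm_sq P.one_le ha (by positivity) ?_ α _) x
    (subset_closure ⟨hx, by simpa⟩)
  · have hy_annulus := closure_mono hD hy
    have hyR : ‖y‖ ≤ R := by
      simpa using closure_minimal (sdiff_subset.trans ball_subset_closedBall)
        isClosed_closedBall hy
    rw [sub_zero]
    rcases (le_norm_of_mem_closure_annulus hy_annulus).eq_or_lt with hyε | hyε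
    · rw [h.eq_neg_M y hyε.symm, ← hyε, neg_mul (α / ε ^ 2),
        div_mul_cancel₀ α (pow_ne_zero 2 hε.ne'), neg_add_cancel, Real.exp_zero]
      linarith
    · have hyR_eq : ‖y‖ = R := hyR.antisymm (not_lt.1 fun hlt => hyD ⟨by simpa, by simpa⟩)
      rw [hyR_eq]
      linarith [h.nonpos hy_annulus]
  · have hεy : ε < ‖y‖ := (mem_annulus_iff.1 (hD hy)).2
    calc (n : ℝ) ≤ 2 * (α / ε ^ 2) * ε ^ 2 := by rwa [mul_assoc, div_mul_cancel₀ α (by positivity)]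
      _ ≤ 2 * (α / ε ^ 2) * ‖y‖ ^ 2 := by gcongr

end IsRingSol

lemma exists_le_neg_M_add (P : RingProblem n k) {R : ℝ} (hR : P.ε₀ < R)
    (hRΩ : closedBall (0 : Euc n) R ⊆ P.Ω) :
    ∃ C > (0 : ℝ), ∀ ε u Gu Hu, P.IsRingSol ε u Gu Hu → ∀ x ∈ ball (0 : Euc n) R, ε ≤ ‖x‖ →
      u x ≤ -P.M + C * (‖x‖ ^ 2 / ε ^ 2 - 1) := by
  have hM := P.M_pos
  have hε₀ := P.ε₀_pos
  set α : ℝ := n / 2 + 1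
  have hα : 0 < α := by positivity
  have hnα : (n : ℝ) ≤ 2 * α := by
    simp only [α]
    linarith
  set q := 1 - Real.exp (-(α * (R ^ 2 / P.ε₀ ^ 2 - 1)))
  have hq : 0 < q := by
    have h_ratio : 1 < R ^ 2 / P.ε₀ ^ 2 := by
      rw [one_lt_div (by positivity)]
      gcongr
    exact sub_pos.2 (Real.exp_lt_one_iff.2 (neg_lt_zero.2 (mul_pos hα (sub_pos.2 h_ratio))))
  refine ⟨P.M / q * α, by positivity, fun ε u Gu Hu hu x hx hεx => ?_⟩
  obtain ⟨hε, hε_lt⟩ := hu.mem_Ioo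
  rcases hεx.eq_or_lt with hεx | hεx
  · rw [hu.eq_neg_M x hεx.symm, ← hεx, div_self (by positivity), sub_self, mul_zero, add_zero]
  have hqM : P.M ≤ P.M / q * (1 - Real.exp (-(α / ε ^ 2) * R ^ 2 + α)) := by
    have h_exp : -(α / ε ^ 2) * R ^ 2 + α ≤ -(α * (R ^ 2 / P.ε₀ ^ 2 - 1)) := by
      have h_ratio : α * (R ^ 2 / P.ε₀ ^ 2) ≤ α * (R ^ 2 / ε ^ 2) := by gcongr
      linarith [mul_div_assoc α (R ^ 2) (ε ^ 2), div_mul_eq_mul_div α (ε ^ 2) (R ^ 2)]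
    calc P.M = P.M / q * q := (div_mul_cancel₀ _ hq.ne').symm
      _ ≤ _ := mul_le_mul_of_nonneg_left (sub_le_sub_left (Real.exp_le_exp.2 h_exp) 1)
        (by positivity)
  have h_le := hu.le_neg_mul_exp hRΩ (by positivity) hnα hqM hx hεx
  refine h_le.trans ?_
  have h_convex := mul_le_mul_of_nonneg_left
    (Real.add_one_le_exp (-(α / ε ^ 2) * ‖x - 0‖ ^ 2 + α)) (show 0 ≤ P.M / q by positivity)
  rw [sub_zero] at h_convex ⊢
  calc -(P.M / q) * Real.exp (-(α / ε ^ 2) * ‖x‖ ^ 2 + α) + (P.M / q - P.M)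
      ≤ -P.M - P.M / q * (-(α / ε ^ 2) * ‖x‖ ^ 2 + α) := by linarith
    _ = -P.M + P.M / q * α * (‖x‖ ^ 2 / ε ^ 2 - 1) := by ring

end RingProblem

end

/-! ### The gradient bound -/

section

section ExpIsometry

variable {E : Type*} [NormedAddCommGroup E] [InnerProductSpace ℝ E] [CompleteSpace E]
  {W : E →L[ℝ] E}

lemma hasDerivAt_exp_smul_apply (W : E →L[ℝ] E) (x : E) (t : ℝ) :
    HasDerivAt (fun t : ℝ => NormedSpace.exp (t • W) x) (W (NormedSpace.exp (t • W) x)) t := by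
  simpa using (hasDerivAt_exp_smul_const' (𝕂 := ℝ) W t).clm_apply (hasDerivAt_const t x)

lemma norm_exp_smul_apply (hW : ∀ x, ⟪W x, x⟫ = 0) (t : ℝ) (x : E) :
    ‖NormedSpace.exp (t • W) x‖ = ‖x‖ := by
  have h_deriv (s : ℝ) : HasDerivAt (fun s : ℝ => ‖NormedSpace.exp (s • W) x‖ ^ 2) 0 s := by
    have h := (hasDerivAt_exp_smul_apply W x s).norm_sq
    rwa [real_inner_comm, hW, mul_zero] at h
  have h_const := is_const_of_deriv_eq_zero (fun s => (h_deriv s).differentiableAt)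
    (fun s => (h_deriv s).deriv) t 0
  rw [zero_smul ℝ W, NormedSpace.exp_zero, one_apply_eq_self] at h_const
  exact (pow_left_inj₀ (norm_nonneg _) (norm_nonneg _) two_ne_zero).1 h_const

/-- The rotation `exp (t W)` generated by a skew-symmetric operator `W`. -/
def expIsometry (W : E →L[ℝ] E) (hW : ∀ x, ⟪W x, x⟫ = 0) (t : ℝ) : E →ₗᵢ[ℝ] E :=
  ⟨(NormedSpace.exp (t • W) : E →L[ℝ] E).toLinearMap, norm_exp_smul_apply hW t⟩

variable (hW : ∀ x, ⟪W x, x⟫ = 0)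

lemma expIsometry_zero_apply (x : E) : expIsometry W hW 0 x = x := by
  change NormedSpace.exp ((0 : ℝ) • W) x = x
  rw [zero_smul ℝ W, NormedSpace.exp_zero, one_apply_eq_self]

lemma hasDerivAt_expIsometry_apply (x : E) (t : ℝ) :
    HasDerivAt (fun t => expIsometry W hW t x) (W (expIsometry W hW t x)) t :=
  hasDerivAt_exp_smul_apply W x t

lemma norm_expIsometry_apply_sub_le (x : E) (t : ℝ) :
    ‖expIsometry W hW t x - x‖ ≤ |t| * ‖W‖ * ‖x‖ := by
  have h := convex_univ.norm_image_sub_le_of_norm_hasDerivWithin_le (C := ‖W‖ * ‖x‖)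
    (fun s _ => (hasDerivAt_expIsometry_apply hW x s).hasDerivWithinAt)
    (fun s _ => (W.le_opNorm _).trans_eq (by rw [LinearIsometry.norm_map]))
    (mem_univ (0 : ℝ)) (mem_univ t)
  rw [expIsometry_zero_apply, sub_zero, Real.norm_eq_abs] at h
  linarith

lemma norm_expIsometry_apply_sub_sub_le (x : E) (t : ℝ) :
    ‖expIsometry W hW t x - x - t • W x‖ ≤ t ^ 2 * ‖W‖ ^ 2 * ‖x‖ := by
  have h_bound : ∀ s ∈ uIcc 0 t,
      ‖W (expIsometry W hW s x) - W x‖ ≤ |t| * ‖W‖ ^ 2 * ‖x‖ := fun s hs => by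
    have hst : |s| ≤ |t| := by simpa using abs_sub_left_of_mem_uIcc hs
    rw [← map_sub]
    calc ‖W (expIsometry W hW s x - x)‖ ≤ ‖W‖ * ‖expIsometry W hW s x - x‖ := W.le_opNorm _
      _ ≤ ‖W‖ * (|s| * ‖W‖ * ‖x‖) := by
        gcongr
        exact norm_expIsometry_apply_sub_le hW x s
      _ ≤ ‖W‖ * (|t| * ‖W‖ * ‖x‖) := by gcongr
      _ = |t| * ‖W‖ ^ 2 * ‖x‖ := by ring
  have h := (convex_uIcc 0 t).norm_image_sub_le_of_norm_hasDerivWithin_le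
    (f := fun s => expIsometry W hW s x - s • W x) (fun s _ =>
      ((hasDerivAt_expIsometry_apply hW x s).sub
        (by simpa using (hasDerivAt_id s).smul_const (W x))).hasDerivWithinAt)
    h_bound left_mem_uIcc right_mem_uIcc
  rw [expIsometry_zero_apply, zero_smul, sub_zero, sub_zero, Real.norm_eq_abs,
    sub_right_comm] at h
  refine h.trans_eq ?_
  rw [← sq_abs t]
  ring

end ExpIsometry

lemma le_of_hasDerivAt_of_eventually_le {f : ℝ → ℝ} {f' C : ℝ} (hf : HasDerivAt f f' 0)
    (hf₀ : f 0 = 0) (h_le : ∀ᶠ t in 𝓝[>] (0 : ℝ), f t ≤ C * t) : f' ≤ C := by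
  refine le_of_tendsto hf.tendsto_slope_zero_right ?_
  filter_upwards [h_le, self_mem_nhdsWithin] with t ht (ht₀ : 0 < t)
  rwa [zero_add, hf₀, sub_zero, smul_eq_mul, inv_mul_le_iff₀ ht₀, mul_comm t]

lemma one_sub_inv_sq_le {c : ℝ} (hc : 0 < c) : 1 - (c ^ 2)⁻¹ ≤ 2 * (c - 1) := by
  have hc₂ : 0 < c ^ 2 := by positivity
  rw [sub_le_iff_le_add, ← sub_le_iff_le_add', ← mul_le_mul_iff_left₀ hc₂,
    inv_mul_cancel₀ hc₂.ne']
  nlinarith [mul_nonneg (by linarith : 0 ≤ 2 * c + 1) (sq_nonneg (c - 1))]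

lemma norm_smul_isometry_sub_le {E : Type*} [NormedAddCommGroup E] [NormedSpace ℝ E]
    (O : E →ₗᵢ[ℝ] E) (c : ℝ) (x : E) : ‖c • O x - x‖ ≤ |c - 1| * ‖x‖ + ‖O x - x‖ :=
  calc ‖c • O x - x‖ = ‖(c - 1) • O x + (O x - x)‖ := by congr 1; module
    _ ≤ ‖(c - 1) • O x‖ + ‖O x - x‖ := norm_add_le _ _
    _ = |c - 1| * ‖x‖ + ‖O x - x‖ := by rw [norm_smul, O.norm_map, Real.norm_eq_abs]

variable {n k : ℕ}

lemma SubsolAt.comp_isometry {f : Euc n → ℝ} {T : Euc n → Euc n} {x : Euc n}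
    (O : Euc n →ₗᵢ[ℝ] Euc n) {c : ℝ} (hc : c ≠ 0) (hT : ∀ h, T (x + h) = T x + c • O h)
    (hf : SubsolAt k f (T x)) : SubsolAt k (fun y => (c ^ 2)⁻¹ * f (T y)) x := by
  obtain ⟨ℓ, B, hB, h_quad⟩ := hf
  refine ⟨_, _, ?_, (h_quad.comp_affine (L := c • O.toContinuousLinearMap) hT).const_mul _⟩
  convert bilinearComp_mem_admissible hB O using 1
  ext v w
  simp
  field_simp

namespace RingProblem

variable (P : RingProblem n k)

lemma exists_ψ_lipschitz : ∃ L > (0 : ℝ), ∀ x ∈ closure P.Ω, ∀ y ∈ closure P.Ω,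
    ‖P.ψ y - P.ψ x‖ ≤ L * ‖y - x‖ := by
  obtain ⟨L, hL⟩ := P.isCompact_closure.exists_bound_of_continuousOn
    P.isC2Solution.continuousOn_gradient
  refine ⟨|L| + 1, by positivity, fun x hx y hy => ?_⟩
  exact P.convex.closure.norm_image_sub_le_of_norm_hasFDerivWithin_le
    P.isC2Solution.hasFDerivWithinAt (fun z hz => (hL z hz).trans (by linarith [le_abs_self L]))
    hx hy

lemma exists_neg_mul_norm_sub_le : ∃ C > (0 : ℝ), ∀ ε u Gu Hu, P.IsRingSol ε u Gu Hu →
    ∀ x ∈ closure (P.annulus ε), ∀ y ∈ frontier P.Ω, -(C * ‖y - x‖) ≤ u x := by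
  obtain ⟨A, hA, hA_le⟩ := P.exists_mul_ψ_le_neg_M
  obtain ⟨L, hL, hψ⟩ := P.exists_ψ_lipschitz
  refine ⟨A * L, by positivity, fun ε u Gu Hu hu x hx y hy => ?_⟩
  have h := hψ x (closure_annulus_subset hx) y (frontier_subset_closure hy)
  rw [P.ψ_eq_zero y hy, zero_sub, norm_neg, Real.norm_eq_abs] at h
  calc -(A * L * ‖y - x‖) = A * -(L * ‖y - x‖) := by ring
    _ ≤ A * P.ψ x := mul_le_mul_of_nonneg_left (abs_le.1 h).1 (by linarith)
    _ ≤ u x := hu.mul_ψ_le (by linarith) hA_le x hx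

lemma exists_inv_sq_mul_le_neg_M_add : ∃ C > (0 : ℝ), ∃ l > (1 : ℝ), ∀ ε u Gu Hu,
    P.IsRingSol ε u Gu Hu → ∀ c ∈ Ico 1 l, ∀ y, ‖y‖ = c * ε →
      (c ^ 2)⁻¹ * u y ≤ -P.M + C * (c - 1) := by
  obtain ⟨R, hR, hRΩ⟩ := P.exists_closedBall_subset
  obtain ⟨C, hC, hC_le⟩ := P.exists_le_neg_M_add hR hRΩ
  have hM := P.M_pos
  have hε₀ := P.ε₀_pos
  refine ⟨2 * (P.M + C), by positivity, R / P.ε₀, (one_lt_div hε₀).2 hR,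
    fun ε u Gu Hu hu c hc y hy => ?_⟩
  obtain ⟨hε, hε_lt⟩ := hu.mem_Ioo
  have hc₀ : 0 < c := one_pos.trans_le hc.1
  have hyR : ‖y‖ < R := by
    rw [hy]
    exact (mul_le_mul_of_nonneg_left hε_lt.le hc₀.le).trans_lt ((lt_div_iff₀ hε₀).1 hc.2)
  have hu_le := hC_le ε u Gu Hu hu y (by simpa) (by rw [hy]; nlinarith [hc.1])
  rw [hy, mul_pow, mul_div_cancel_right₀ _ (by positivity)] at hu_le
  calc (c ^ 2)⁻¹ * u y ≤ (c ^ 2)⁻¹ * (-P.M + C * (c ^ 2 - 1)) := by gcongr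
    _ = -P.M + (P.M + C) * (1 - (c ^ 2)⁻¹) := by
      field_simp
      ring
    _ ≤ -P.M + (P.M + C) * (2 * (c - 1)) := by
      gcongr
      exact one_sub_inv_sq_le hc₀
    _ = -P.M + 2 * (P.M + C) * (c - 1) := by ring

lemma exists_inv_sq_mul_le_add_of_notMem : ∃ C > (0 : ℝ), ∃ l > (1 : ℝ), ∀ ε u Gu Hu,
    P.IsRingSol ε u Gu Hu → ∀ c ∈ Ioo 0 l, ∀ x ∈ closure (P.annulus ε),
      ∀ y ∈ closure (P.annulus ε), ‖y‖ = c * ‖x‖ → ∀ θ, |c - 1| ≤ θ → ‖y - x‖ ≤ θ * ‖x‖ →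
        x ∉ P.annulus ε ∨ y ∉ P.annulus ε → (c ^ 2)⁻¹ * u y ≤ u x + C * θ := by
  obtain ⟨C₁, hC₁, l, hl, h_inner⟩ := P.exists_inv_sq_mul_le_neg_M_add
  obtain ⟨C₂, hC₂, h_outer⟩ := P.exists_neg_mul_norm_sub_le
  obtain ⟨R, hR, hR_le⟩ := P.isBounded.closure.exists_pos_norm_le
  have hM := P.M_pos
  refine ⟨C₁ + C₂ * R + 2 * P.M, by positivity, l, hl,
    fun ε u Gu Hu hu c hc x hx y hy hxy θ hcθ hyx h_bdry => ?_⟩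
  have hc₀ := hc.1
  have hθ : 0 ≤ θ := (abs_nonneg _).trans hcθ
  have hc_le : c - 1 ≤ θ := (le_abs_self _).trans hcθ
  have h₁ : 0 ≤ C₁ * θ := by positivity
  have h₂ : 0 ≤ C₂ * R * θ := by positivity
  have h₃ : 0 ≤ 2 * P.M * θ := by positivity
  rw [add_mul, add_mul]
  rcases h_bdry with hx' | hy'
  · rcases mem_frontier_or_norm_eq hx hx' with hx_outer | hx_inner
    · rw [hu.eq_zero x hx_outer]
      linarith [mul_nonpos_of_nonneg_of_nonpos (inv_nonneg.2 (sq_nonneg c)) (hu.nonpos hy)]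
    · rw [hu.eq_neg_M x hx_inner]
      rw [hx_inner] at hxy
      have hc₁ : 1 ≤ c := by
        have h := le_norm_of_mem_closure_annulus hy
        rwa [hxy, le_mul_iff_one_le_left hu.mem_Ioo.1] at h
      linarith [h_inner ε u Gu Hu hu c ⟨hc₁, hc.2⟩ y hxy, mul_le_mul_of_nonneg_left hc_le hC₁.le]
  · rcases mem_frontier_or_norm_eq hy hy' with hy_outer | hy_inner
    · have h_dist : C₂ * ‖y - x‖ ≤ C₂ * (θ * R) := by
        have hxR := hR_le x (closure_annulus_subset hx)
        exact mul_le_mul_of_nonneg_left (hyx.trans (by gcongr)) hC₂.le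
      rw [hu.eq_zero y hy_outer, mul_zero]
      linarith [h_outer ε u Gu Hu hu x hx y hy_outer]
    · rw [hu.eq_neg_M y hy_inner]
      have h := mul_le_mul_of_nonneg_left ((one_sub_inv_sq_le hc₀).trans
        (mul_le_mul_of_nonneg_left hc_le zero_le_two)) hM.le
      linarith [hu.neg_M_le hx]

lemma exists_inv_sq_mul_apply_smul_isometry_le : ∃ C > (0 : ℝ), ∃ l > (1 : ℝ), ∀ ε u Gu Hu,
    P.IsRingSol ε u Gu Hu → ∀ c ∈ Ioo 0 l, ∀ (O : Euc n →ₗᵢ[ℝ] Euc n) (κ : ℝ), 0 ≤ κ →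
      (∀ x, ‖O x - x‖ ≤ κ * ‖x‖) → ∀ x ∈ P.annulus ε, c • O x ∈ P.annulus ε →
        (c ^ 2)⁻¹ * u (c • O x) ≤ u x + C * (|c - 1| + κ) := by
  obtain ⟨C, hC, l, hl, h_bdry⟩ := P.exists_inv_sq_mul_le_add_of_notMem
  refine ⟨C, hC, l, hl, fun ε u Gu Hu hu c hc O κ hκ hO x hx hx' => ?_⟩
  have hT : Continuous fun x => c • O x := O.continuous.const_smul c
  set D := P.annulus ε ∩ (fun x => c • O x) ⁻¹' P.annulus ε
  have hD : closure D ⊆ closure (P.annulus ε) := closure_mono inter_subset_left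
  have hTD : MapsTo (fun x => c • O x) (closure D) (closure (P.annulus ε)) :=
    MapsTo.closure (fun y hy => hy.2) hT
  refine comparison_principle (f := fun y => (c ^ 2)⁻¹ * u (c • O y)) P.le_dim
    (P.isOpen_annulus.inter (P.isOpen_annulus.preimage hT))
    (P.isBounded_annulus.subset inter_subset_left)
    (continuousOn_const.mul (hu.continuousOn.comp hT.continuousOn hTD))
    ((hu.continuousOn.mono hD).add continuousOn_const) (fun y hy hyD => ?_)
    (fun y hy => SubsolAt.comp_isometry (T := fun y => c • O y) O hc.1.ne' (fun h => ?_)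
      (hu.subsolAt hy.2))
    (fun y hy => (hu.supersolAt hy.1).add_const _) x (subset_closure ⟨hx, hx'⟩)
  · refine h_bdry ε u Gu Hu hu c hc y (hD hy) _ (hTD hy) ?_ _ (by linarith) ?_
      (not_and_or.1 hyD)
    · rw [norm_smul, O.norm_map, Real.norm_of_nonneg hc.1.le]
    · linarith [norm_smul_isometry_sub_le O c y, hO y]
  · rw [map_add, smul_add]

end RingProblem

section Skew

variable {E : Type*} [NormedAddCommGroup E] [InnerProductSpace ℝ E]

lemma exists_smul_add_skew_eq {x : E} (hx : x ≠ 0) (v : E) :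
    ∃ (s : ℝ) (W : E →L[ℝ] E), (∀ z, ⟪W z, z⟫ = 0) ∧ s • x + W x = v ∧ |s| ≤ ‖v‖ / ‖x‖ ∧
      ‖W‖ ≤ 2 * (‖v‖ / ‖x‖) := by
  have hx₀ : 0 < ‖x‖ := norm_pos_iff.2 hx
  refine ⟨⟪v, x⟫ / ‖x‖ ^ 2,
    (‖x‖ ^ 2)⁻¹ • ((innerSL ℝ x).smulRight v - (innerSL ℝ v).smulRight x), fun z => ?_, ?_, ?_, ?_⟩
  · simp [inner_smul_left, inner_sub_left, mul_comm]
  · simp [smul_sub, smul_smul, div_eq_inv_mul, hx₀.ne']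
  · rw [abs_div, abs_of_pos (by positivity : 0 < ‖x‖ ^ 2), div_le_div_iff₀ (by positivity) hx₀]
    calc |⟪v, x⟫| * ‖x‖ ≤ ‖v‖ * ‖x‖ * ‖x‖ := by
          gcongr
          exact abs_real_inner_le_norm v x
      _ = ‖v‖ * ‖x‖ ^ 2 := by ring
  · rw [norm_smul, norm_inv, norm_pow, norm_norm, inv_mul_le_iff₀ (by positivity)]
    calc ‖(innerSL ℝ x).smulRight v - (innerSL ℝ v).smulRight x‖
        ≤ ‖(innerSL ℝ x).smulRight v‖ + ‖(innerSL ℝ v).smulRight x‖ := norm_sub_le _ _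
      _ = ‖x‖ ^ 2 * (2 * (‖v‖ / ‖x‖)) := by
        simp only [ContinuousLinearMap.norm_smulRight_apply, innerSL_apply_norm]
        field_simp
        ring

lemma hasDerivAt_inv_sq_mul_comp_smul {u : E → ℝ} {u' : E →L[ℝ] ℝ} {x w : E}
    (hu : HasFDerivAt u u' x) {γ : ℝ → E} (hγ₀ : γ 0 = x) (hγ : HasDerivAt γ w 0) (s : ℝ) :
    HasDerivAt (fun t => ((1 + t * s) ^ 2)⁻¹ * u ((1 + t * s) • γ t))
      (u' (s • x + w) - 2 * s * u x) 0 := by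
  have h_scale : HasDerivAt (fun t : ℝ => 1 + t * s) s 0 := by
    simpa using ((hasDerivAt_id (0 : ℝ)).mul_const s).const_add 1
  have hu' : HasFDerivAt u u' ((1 + 0 * s) • γ 0) := by simpa [hγ₀] using hu
  have h_inv : HasDerivAt (fun t : ℝ => ((1 + t * s) ^ 2)⁻¹) _ 0 :=
    (h_scale.pow 2).inv (by simp)
  refine (h_inv.mul (hu'.comp_hasDerivAt (0 : ℝ) (h_scale.smul hγ))).congr_deriv ?_
  simp [hγ₀]
  ring

end Skew

namespace RingProblem

variable (P : RingProblem n k)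

lemma mem_annulus_of_le_norm {P : RingProblem n k} {ε : ℝ} (hε : ε < P.ε₀) {x : Euc n}
    (hx : x ∈ P.Ω) (hx' : P.ε₀ ≤ ‖x‖) : x ∈ P.annulus ε :=
  mem_annulus_iff.2 ⟨hx, hε.trans_le hx'⟩

lemma exists_gradient_apply_le : ∃ C > (0 : ℝ), ∀ ε u Gu Hu, P.IsRingSol ε u Gu Hu →
    ∀ x ∈ P.annulus ε, ∀ (s : ℝ) (W : Euc n →L[ℝ] Euc n), (∀ z, ⟪W z, z⟫ = 0) →
      Gu x (s • x + W x) ≤ 2 * s * u x + C * (|s| + ‖W‖) := by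
  obtain ⟨C, hC, l, hl, h_le⟩ := P.exists_inv_sq_mul_apply_smul_isometry_le
  refine ⟨C, hC, fun ε u Gu Hu hu x hx s W hW => ?_⟩
  have h_nhds : P.annulus ε ∈ 𝓝 x := P.isOpen_annulus.mem_nhds hx
  have hu_diff : HasFDerivAt u (Gu x) x :=
    (hu.isC2Solution.hasFDerivWithinAt x (P.annulus_subset_outerClosedAnnulus hx)).hasFDerivAt
      (mem_of_superset h_nhds P.annulus_subset_outerClosedAnnulus)
  have h_rot := hasDerivAt_expIsometry_apply hW x 0
  rw [expIsometry_zero_apply] at h_rot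
  have h_deriv := (hasDerivAt_inv_sq_mul_comp_smul hu_diff (expIsometry_zero_apply hW x) h_rot
    s).sub_const (u x)
  rw [← sub_le_iff_le_add']
  refine le_of_hasDerivAt_of_eventually_le h_deriv (by simp [expIsometry_zero_apply hW x]) ?_
  have h_scale : Tendsto (fun t : ℝ => 1 + t * s) (𝓝 0) (𝓝 1) :=
    Continuous.tendsto' (by fun_prop) 0 1 (by simp)
  have h_path : Tendsto (fun t => (1 + t * s) • expIsometry W hW t x) (𝓝 0) (𝓝 x) := by
    have h := h_scale.smul h_rot.continuousAt.tendsto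
    rwa [expIsometry_zero_apply, one_smul] at h
  filter_upwards [nhdsWithin_le_nhds (h_path h_nhds),
    nhdsWithin_le_nhds (h_scale (Ioo_mem_nhds one_pos hl)), self_mem_nhdsWithin] with t ht_mem
    ht_scale (ht : 0 < t)
  have h := h_le ε u Gu Hu hu (1 + t * s) ht_scale (expIsometry W hW t) (t * ‖W‖)
    (by positivity) (fun z => by simpa [abs_of_pos ht] using norm_expIsometry_apply_sub_le hW z t)
    x hx ht_mem
  rw [add_sub_cancel_left, abs_mul, abs_of_pos ht] at h
  linarith

lemma exists_norm_gradient_le : ∃ L > (0 : ℝ), ∀ ε u Gu Hu, P.IsRingSol ε u Gu Hu →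
    ∀ x ∈ P.Ω, P.ε₀ ≤ ‖x‖ → ‖Gu x‖ ≤ L := by
  obtain ⟨C, hC, h_le⟩ := P.exists_gradient_apply_le
  have hM := P.M_pos
  have hε₀ := P.ε₀_pos
  refine ⟨(3 * C + 2 * P.M) / P.ε₀, by positivity, fun ε u Gu Hu hu x hx hxε => ?_⟩
  have hx_annulus := mem_annulus_of_le_norm hu.mem_Ioo.2 hx hxε
  have h_bound (v : Euc n) : Gu x v ≤ (3 * C + 2 * P.M) / P.ε₀ * ‖v‖ := by
    obtain ⟨s, W, hW, rfl, hs, hW_norm⟩ :=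
      exists_smul_add_skew_eq (norm_pos_iff.1 (hε₀.trans_le hxε)) v
    set r := ‖s • x + W x‖ / ‖x‖
    have hr : r ≤ ‖s • x + W x‖ / P.ε₀ := div_le_div_of_nonneg_left (norm_nonneg _) hε₀ hxε
    have hsu : 2 * s * u x ≤ 2 * (r * P.M) := by
      have hu_abs : |u x| ≤ P.M := abs_le.2
        ⟨hu.neg_M_le (subset_closure hx_annulus),
          (hu.nonpos (subset_closure hx_annulus)).trans hM.le⟩
      rw [mul_assoc]
      refine mul_le_mul_of_nonneg_left ((le_abs_self _).trans ?_) zero_le_two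
      rw [abs_mul]
      exact mul_le_mul hs hu_abs (abs_nonneg _) (by positivity)
    calc Gu x (s • x + W x) ≤ 2 * s * u x + C * (|s| + ‖W‖) := h_le ε u Gu Hu hu x hx_annulus s W hW
      _ ≤ 2 * (r * P.M) + C * (r + 2 * r) := by gcongr
      _ = (3 * C + 2 * P.M) * r := by ring
      _ ≤ (3 * C + 2 * P.M) * (‖s • x + W x‖ / P.ε₀) := by gcongr
      _ = (3 * C + 2 * P.M) / P.ε₀ * ‖s • x + W x‖ := by ring
  refine ContinuousLinearMap.opNorm_le_bound _ (by positivity) fun v => abs_le.2 ⟨?_, h_bound v⟩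
  have h_neg := h_bound (-v)
  rw [map_neg, norm_neg] at h_neg
  linarith

end RingProblem

end

/-! ### Rigid motions and tangent Killing fields -/

section

section RigidMotion

variable {E : Type*} [NormedAddCommGroup E] [InnerProductSpace ℝ E] [CompleteSpace E]

/-- The rigid motion `x ↦ p + t τ + exp(t W) (x - p)`, whose velocity at time `t = 0` is the Killing
field `x ↦ τ + W (x - p)`. -/
def rigidMotion (p τ : E) (W : E →L[ℝ] E) (hW : ∀ x, ⟪W x, x⟫ = 0) (t : ℝ) (x : E) : E :=
  p + t • τ + expIsometry W hW t (x - p)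

variable {p τ : E} {W : E →L[ℝ] E} (hW : ∀ x, ⟪W x, x⟫ = 0)

lemma rigidMotion_zero (x : E) : rigidMotion p τ W hW 0 x = x := by
  rw [rigidMotion, expIsometry_zero_apply, zero_smul, add_zero, add_sub_cancel]

lemma rigidMotion_add (t : ℝ) (x h : E) :
    rigidMotion p τ W hW t (x + h) = rigidMotion p τ W hW t x + expIsometry W hW t h := by
  rw [rigidMotion, rigidMotion, add_sub_right_comm, map_add, ← add_assoc]

lemma continuous_rigidMotion (t : ℝ) : Continuous (rigidMotion p τ W hW t) :=
  continuous_const.add ((expIsometry W hW t).continuous.comp (continuous_id.sub continuous_const))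

lemma hasDerivAt_rigidMotion (x : E) :
    HasDerivAt (fun t => rigidMotion p τ W hW t x) (τ + W (x - p)) 0 := by
  have h_trans : HasDerivAt (fun t : ℝ => p + t • τ) τ 0 := by
    simpa using ((hasDerivAt_id (0 : ℝ)).smul_const τ).const_add p
  have h_rot := hasDerivAt_expIsometry_apply hW (x - p) 0
  rw [expIsometry_zero_apply] at h_rot
  exact h_trans.add h_rot

lemma norm_rigidMotion_sub_center_le (t : ℝ) (x : E) :
    ‖rigidMotion p τ W hW t x - p‖ ≤ |t| * ‖τ‖ + ‖x - p‖ := by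
  rw [rigidMotion, add_assoc, add_sub_cancel_left]
  refine (norm_add_le _ _).trans_eq ?_
  rw [norm_smul, Real.norm_eq_abs, LinearIsometry.norm_map]

lemma norm_rigidMotion_sub_le (t : ℝ) (x : E) :
    ‖rigidMotion p τ W hW t x - x‖ ≤ |t| * (‖τ‖ + ‖W‖ * ‖x - p‖) := by
  calc ‖rigidMotion p τ W hW t x - x‖
      = ‖t • τ + (expIsometry W hW t (x - p) - (x - p))‖ := by
        rw [rigidMotion]
        congr 1
        abel
    _ ≤ |t| * ‖τ‖ + |t| * ‖W‖ * ‖x - p‖ := by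
        refine norm_add_le_of_le ?_ (norm_expIsometry_apply_sub_le hW _ t)
        rw [norm_smul, Real.norm_eq_abs]
    _ = |t| * (‖τ‖ + ‖W‖ * ‖x - p‖) := by ring

lemma norm_rigidMotion_sub_sub_le (t : ℝ) (x : E) :
    ‖rigidMotion p τ W hW t x - x - t • (τ + W (x - p))‖ ≤ t ^ 2 * ‖W‖ ^ 2 * ‖x - p‖ := by
  convert norm_expIsometry_apply_sub_sub_le hW (x - p) t using 2
  rw [rigidMotion, smul_add]
  abel

end RigidMotion

lemma norm_sub_sub_apply_le {E F : Type*} [NormedAddCommGroup E] [NormedSpace ℝ E]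
    [NormedAddCommGroup F] [NormedSpace ℝ F] {S : Set E} (hS : Convex ℝ S) {f : E → F}
    {f' : E → E →L[ℝ] F} (hf : ∀ x ∈ S, HasFDerivWithinAt f (f' x) S x) {C : ℝ} (hC : 0 ≤ C)
    {p x : E} (hf' : ∀ y ∈ S, ‖f' y - f' p‖ ≤ C * ‖y - p‖) (hp : p ∈ S) (hx : x ∈ S) :
    ‖f x - f p - f' p (x - p)‖ ≤ C * ‖x - p‖ ^ 2 := by
  have h := (hS.inter (convex_closedBall p ‖x - p‖)).norm_image_sub_le_of_norm_hasFDerivWithin_le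
    (f := fun y => f y - f' p y) (C := C * ‖x - p‖)
    (fun y hy => ((hf y hy.1).sub (f' p).hasFDerivWithinAt).mono inter_subset_left)
    (fun y hy => (hf' y hy.1).trans
      (mul_le_mul_of_nonneg_left (by simpa [dist_eq_norm] using hy.2) hC))
    ⟨hp, by simp⟩ ⟨hx, by simp [dist_eq_norm]⟩
  rw [sub_sub_sub_comm, ← map_sub] at h
  exact h.trans_eq (by ring)

variable {n k : ℕ}

namespace RingProblem

/-- `C` bounds the derivatives of `ψ` and the remainders of the Taylor expansions of `ψ` and of its
gradient on `Ω̄`. -/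
structure IsTaylorBound (P : RingProblem n k) (C : ℝ) : Prop where
  pos : 0 < C
  norm_gradient_le : ∀ p ∈ closure P.Ω, ‖P.G p‖ ≤ C
  norm_hessian_le : ∀ p ∈ closure P.Ω, ‖P.H p‖ ≤ C
  norm_gradient_sub_le : ∀ p ∈ closure P.Ω, ∀ x ∈ closure P.Ω, ‖P.G x - P.G p‖ ≤ C * ‖x - p‖
  norm_gradient_sub_sub_le : ∀ p ∈ closure P.Ω, ∀ x ∈ closure P.Ω,
    ‖P.G x - P.G p - P.H p (x - p)‖ ≤ C * ‖x - p‖ ^ 2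
  abs_ψ_sub_sub_le : ∀ p ∈ closure P.Ω, ∀ x ∈ closure P.Ω,
    |P.ψ x - P.ψ p - P.G p (x - p)| ≤ C * ‖x - p‖ ^ 2

/-- The Killing field `Z x = τ + W (x - p)`, with `W` skew-symmetric, is tangent to `∂Ω` to second
order at the boundary point `p`, in the sense that `Zψ = κψ + O(|x - p|²)`. The number `K` bounds
`W` and `κ`. -/
structure IsTangentKillingField (P : RingProblem n k) (K : ℝ) (p τ : Euc n)
    (W : Euc n →L[ℝ] Euc n) (κ : ℝ) : Prop where
  mem_frontier : p ∈ frontier P.Ω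
  norm_le_one : ‖τ‖ ≤ 1
  gradient_apply_eq_zero : P.G p τ = 0
  skew : ∀ x, ⟪W x, x⟫ = 0
  norm_le : ‖W‖ ≤ K
  abs_le : |κ| ≤ K
  hessian_add_gradient : ∀ d, P.H p d τ + P.G p (W d) = κ * P.G p d

variable {P : RingProblem n k} {K C t κ : ℝ} {p τ x : Euc n} {W : Euc n →L[ℝ] Euc n}

lemma exists_isTaylorBound (P : RingProblem n k) : ∃ C, P.IsTaylorBound C := by
  obtain ⟨C₁, hC₁⟩ := P.isCompact_closure.exists_bound_of_continuousOn
    P.isC2Solution.continuousOn_gradient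
  obtain ⟨C₂, hC₂⟩ := P.isCompact_closure.exists_bound_of_continuousOn
    (E := Euc n →L[ℝ] Euc n →L[ℝ] ℝ) P.isC2Solution.continuousOn_hessian
  set C := max (max C₁ C₂) (max P.hessianLip 1)
  have hC : 0 < C := one_pos.trans_le (le_max_of_le_right (le_max_right _ _))
  have h_hessian : ∀ p ∈ closure P.Ω, ‖P.H p‖ ≤ C := fun p hp =>
    (hC₂ p hp).trans (le_max_of_le_left (le_max_right _ _))
  have h_gradient : ∀ p ∈ closure P.Ω, ∀ x ∈ closure P.Ω, ‖P.G x - P.G p‖ ≤ C * ‖x - p‖ :=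
    fun p hp x hx => P.convex.closure.norm_image_sub_le_of_norm_hasFDerivWithin_le
      P.isC2Solution.hasFDerivWithinAt_gradient h_hessian hp hx
  refine ⟨C, hC, fun p hp => (hC₁ p hp).trans (le_max_of_le_left (le_max_left _ _)), h_hessian,
    h_gradient, fun p hp x hx => ?_, fun p hp x hx => ?_⟩
  · refine norm_sub_sub_apply_le P.convex.closure P.isC2Solution.hasFDerivWithinAt_gradient hC.le
      (fun y hy => (P.norm_hessian_sub_le p hp y hy).trans ?_) hp hx
    gcongr
    exact le_max_of_le_right (le_max_left _ _)
  · exact norm_sub_sub_apply_le P.convex.closure P.isC2Solution.hasFDerivWithinAt hC.le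
      (h_gradient p hp) hp hx

namespace IsTangentKillingField

lemma nonneg (h : P.IsTangentKillingField K p τ W κ) : 0 ≤ K := (norm_nonneg W).trans h.norm_le

protected lemma neg (h : P.IsTangentKillingField K p τ W κ) :
    P.IsTangentKillingField K p (-τ) (-W) (-κ) where
  mem_frontier := h.mem_frontier
  norm_le_one := by rw [norm_neg]; exact h.norm_le_one
  gradient_apply_eq_zero := by rw [map_neg, h.gradient_apply_eq_zero, neg_zero]
  skew x := by rw [_root_.neg_apply, inner_neg_left, h.skew, neg_zero]
  norm_le := by rw [norm_neg]; exact h.norm_le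
  abs_le := by rw [abs_neg]; exact h.abs_le
  hessian_add_gradient d := by
    rw [_root_.neg_apply, map_neg, map_neg, neg_mul, ← h.hessian_add_gradient d]
    ring

lemma gradient_apply_le (h : P.IsTangentKillingField K p τ W κ) (hC : P.IsTaylorBound C)
    (hx : x ∈ closure P.Ω) :
    P.G x (τ + W (x - p)) ≤ K * -P.ψ x + C * (1 + 2 * K) * ‖x - p‖ ^ 2 := by
  have hC₀ := hC.pos
  have hp := frontier_subset_closure h.mem_frontier
  set d := x - p
  have hW : ‖W d‖ ≤ K * ‖d‖ := W.le_of_opNorm_le h.norm_le d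
  have h_trans : (P.G x - P.G p - P.H p d) τ ≤ C * ‖d‖ ^ 2 := calc
    _ ≤ ‖P.G x - P.G p - P.H p d‖ * ‖τ‖ :=
        (le_abs_self _).trans ((P.G x - P.G p - P.H p d).le_opNorm τ)
    _ ≤ C * ‖d‖ ^ 2 * 1 := mul_le_mul (hC.norm_gradient_sub_sub_le p hp x hx) h.norm_le_one
      (norm_nonneg _) (by positivity)
    _ = C * ‖d‖ ^ 2 := mul_one _
  have h_rot : (P.G x - P.G p) (W d) ≤ C * K * ‖d‖ ^ 2 := calc
    _ ≤ ‖P.G x - P.G p‖ * ‖W d‖ := (le_abs_self _).trans ((P.G x - P.G p).le_opNorm _)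
    _ ≤ C * ‖d‖ * (K * ‖d‖) := mul_le_mul (hC.norm_gradient_sub_le p hp x hx) hW
      (norm_nonneg _) (by positivity)
    _ = C * K * ‖d‖ ^ 2 := by ring
  have h_tangent : κ * P.G p d ≤ K * (-P.ψ x + C * ‖d‖ ^ 2) := by
    have h_taylor := _root_.abs_le.1 (hC.abs_ψ_sub_sub_le p hp x hx)
    rw [P.ψ_eq_zero p h.mem_frontier, sub_zero] at h_taylor
    have hψ := P.ψ_nonpos hx
    refine (le_abs_self _).trans ?_
    rw [abs_mul]
    exact mul_le_mul h.abs_le (_root_.abs_le.2 ⟨by linarith, by linarith⟩) (abs_nonneg _) h.nonneg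
  calc P.G x (τ + W d) = (P.G x - P.G p - P.H p d) τ + P.G p τ + (P.G x - P.G p) (W d)
        + (P.H p d τ + P.G p (W d)) := by
        simp only [map_add, _root_.sub_apply]
        ring
    _ ≤ C * ‖d‖ ^ 2 + 0 + C * K * ‖d‖ ^ 2 + K * (-P.ψ x + C * ‖d‖ ^ 2) := by
        rw [h.gradient_apply_eq_zero, h.hessian_add_gradient]
        gcongr
    _ = K * -P.ψ x + C * (1 + 2 * K) * ‖d‖ ^ 2 := by ring

lemma neg_ψ_le (h : P.IsTangentKillingField K p τ W κ) (hC : P.IsTaylorBound C) (ht : 0 ≤ t)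
    (htK : t * K ≤ 1 / 2) (hx : x ∈ closure P.Ω) (hxp : ‖x - p‖ ≤ 1)
    (hy : rigidMotion p τ W h.skew t x ∈ frontier P.Ω) :
    -P.ψ x ≤ t * (2 * C * (1 + 2 * K) * ‖x - p‖ ^ 2) +
      2 * C * (K ^ 2 + (1 + K) ^ 2) * t ^ 2 := by
  have hC₀ := hC.pos
  have hK := h.nonneg
  have hψ := P.ψ_nonpos hx
  set y := rigidMotion p τ W h.skew t x
  have h_taylor : -P.ψ x - P.G x (y - x) ≤ C * (t * (1 + K)) ^ 2 := by
    have h_abs := hC.abs_ψ_sub_sub_le x hx y (frontier_subset_closure hy)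
    rw [P.ψ_eq_zero y hy, zero_sub] at h_abs
    have h_move : ‖y - x‖ ≤ t * (1 + K) := calc
      ‖y - x‖ ≤ |t| * (‖τ‖ + ‖W‖ * ‖x - p‖) := norm_rigidMotion_sub_le h.skew t x
      _ ≤ t * (1 + K * 1) := by
        rw [abs_of_nonneg ht]
        gcongr
        exacts [h.norm_le_one, h.norm_le]
      _ = t * (1 + K) := by rw [mul_one]
    calc -P.ψ x - P.G x (y - x) ≤ C * ‖y - x‖ ^ 2 := (le_abs_self _).trans h_abs
      _ ≤ C * (t * (1 + K)) ^ 2 := by gcongr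
  have h_remainder : P.G x (y - x - t • (τ + W (x - p))) ≤ C * (t ^ 2 * K ^ 2) := calc
    _ ≤ ‖P.G x‖ * ‖y - x - t • (τ + W (x - p))‖ := (le_abs_self _).trans ((P.G x).le_opNorm _)
    _ ≤ C * (t ^ 2 * ‖W‖ ^ 2 * ‖x - p‖) := mul_le_mul (hC.norm_gradient_le x hx)
      (norm_rigidMotion_sub_sub_le h.skew t x) (norm_nonneg _) hC₀.le
    _ ≤ C * (t ^ 2 * K ^ 2 * 1) := by
      gcongr
      exact h.norm_le
    _ = C * (t ^ 2 * K ^ 2) := by rw [mul_one]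
  rw [map_sub, map_smul, smul_eq_mul] at h_remainder
  have h_field := mul_le_mul_of_nonneg_left (h.gradient_apply_le hC hx) ht
  have h_absorb : t * K * -P.ψ x ≤ 1 / 2 * -P.ψ x :=
    mul_le_mul_of_nonneg_right htK (neg_nonneg.2 hψ)
  linarith

end IsTangentKillingField

end RingProblem

end

/-! ### Comparison with rotated copies -/

section

variable {n k : ℕ}

lemma add_smul_sub_smul_notMem_strictlyAdmissible {B Z : Bil n} {b : ℝ} (hb : 0 ≤ b)
    (hB : B ∉ strictlyAdmissible k n) (hZ : Z ∈ admissible k n) :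
    (1 + b) • B - b • Z ∉ strictlyAdmissible k n := by
  rintro ⟨s, hs, B', hB', h_eq⟩
  have hs₀ : 0 < s := one_pos.trans hs
  have hsb : 0 < s + b := by linarith
  have hb₁ : 0 < 1 + b := by linarith
  refine hB ⟨(s + b) / (1 + b), (one_lt_div hb₁).2 (by linarith),
    (s / (s + b)) • B' + (b / (s + b)) • Z,
    convex_admissible k n hB' hZ (by positivity) (by positivity) (by field_simp), ?_⟩
  have h_sum : (1 + b) • B = s • B' + b • Z := by
    rw [← sub_eq_iff_eq_add, h_eq]
  rw [← inv_smul_smul₀ hb₁.ne' B, h_sum]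
  match_scalars <;> field_simp

namespace RingProblem

/-- The distance `2δ` from `∂Ω` is too short to reach the ball of radius `ε₀`. -/
structure IsCollarRadius (P : RingProblem n k) (δ : ℝ) : Prop where
  pos : 0 < δ
  le_one : δ ≤ 1
  le_norm : ∀ p ∈ frontier P.Ω, ∀ x, ‖x - p‖ ≤ 2 * δ → P.ε₀ ≤ ‖x‖

/-- The barrier for the tangential derivatives of `u` at the boundary point `p`. -/
def barrier (P : RingProblem n k) (A γ : ℝ) (p : Euc n) (u : Euc n → ℝ) (x : Euc n) : ℝ :=
  u x - A * P.ψ x + γ * ‖x - p‖ ^ 2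

lemma exists_isCollarRadius (P : RingProblem n k) : ∃ δ, P.IsCollarRadius δ := by
  obtain ⟨R, hR, hR_sub⟩ := P.exists_closedBall_subset
  refine ⟨min 1 ((R - P.ε₀) / 2), lt_min one_pos (by linarith), min_le_left _ _,
    fun p hp x hx => ?_⟩
  have hp_norm : R < ‖p‖ := by
    by_contra! h
    exact (P.mem_frontier_iff.1 hp).2 (hR_sub (by simpa using h))
  have h_tri := norm_sub_norm_le p x
  rw [norm_sub_rev] at h_tri
  have h_min := min_le_right 1 ((R - P.ε₀) / 2)
  linarith

variable {P : RingProblem n k} {A C K L b c δ ε γ η κ t : ℝ} {p τ x y : Euc n}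
  {W : Euc n →L[ℝ] Euc n} {u : Euc n → ℝ} {Gu : Euc n → Euc n →L[ℝ] ℝ} {Hu : Euc n → Bil n}

namespace IsCollarRadius

lemma norm_le (hδ : P.IsCollarRadius δ) (hp : p ∈ frontier P.Ω) (hx : ‖x - p‖ ≤ δ) :
    P.ε₀ ≤ ‖x‖ := hδ.le_norm p hp x (by linarith [hδ.pos])

lemma mem_outerClosedAnnulus (hδ : P.IsCollarRadius δ) (hε : ε < P.ε₀) (hp : p ∈ frontier P.Ω)
    (hx : x ∈ closure P.Ω) (hxp : ‖x - p‖ ≤ 2 * δ) : x ∈ P.outerClosedAnnulus ε :=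
  ⟨hx, by simpa using hε.trans_le (hδ.le_norm p hp x hxp)⟩

lemma norm_rigidMotion_sub_le (hδ : P.IsCollarRadius δ) (hX : P.IsTangentKillingField K p τ W κ)
    (ht : t ∈ Ioo 0 δ) (hx : ‖x - p‖ ≤ δ) :
    ‖rigidMotion p τ W hX.skew t x - p‖ ≤ 2 * δ ∧
      ‖rigidMotion p τ W hX.skew t x - x‖ ≤ t * (1 + K) := by
  have h_center := norm_rigidMotion_sub_center_le hX.skew (p := p) (τ := τ) t x
  have h_move := KHessian.norm_rigidMotion_sub_le hX.skew (p := p) (τ := τ) t x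
  rw [abs_of_pos ht.1] at h_center h_move
  constructor
  · linarith [mul_le_mul_of_nonneg_left hX.norm_le_one ht.1.le, ht.2]
  · refine h_move.trans (mul_le_mul_of_nonneg_left (add_le_add hX.norm_le_one ?_) ht.1.le)
    exact (mul_le_mul hX.norm_le (hx.trans hδ.le_one) (norm_nonneg _) hX.nonneg).trans_eq
      (mul_one K)

end IsCollarRadius

namespace IsRingSol

lemma mul_norm_sub_sq_le_barrier (h : P.IsRingSol ε u Gu Hu) (hA : 1 ≤ A)
    (hA_le : ∀ x ∈ closedBall (0 : Euc n) P.ε₀, A * P.ψ x ≤ -P.M)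
    (hx : x ∈ closure (P.annulus ε)) : γ * ‖x - p‖ ^ 2 ≤ P.barrier A γ p u x :=
  le_add_of_nonneg_left (sub_nonneg.2 (h.mul_ψ_le hA hA_le x hx))

lemma supersolAt_add_barrier (h : P.IsRingSol ε u Gu Hu) (hA : 2 ≤ A) (hb : 0 ≤ b)
    (hη : (2 : ℝ) • (P.H x - η • innerBil n) ∈ admissible k n) (hx : x ∈ P.annulus ε) (c : ℝ) :
    SupersolAt k (fun y => u y + b * P.barrier A (A * η / 2) p u y + c) x := by
  have hxV := P.annulus_subset_outerClosedAnnulus hx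
  have h_quad := (((h.isC2Solution.hasQuadExpansionAt x hx).const_mul (1 + b)).add
    ((P.isC2Solution.hasQuadExpansionAt x hx.1).const_mul (-(b * A)))).add
    ((hasQuadExpansionAt_norm_sub_sq p x).const_mul (b * (A * η / 2))) |>.add_const c
  have hZ : (A / 2) • (2 : ℝ) • (P.H x - η • innerBil n) ∈ admissible k n :=
    smul_mem_admissible hη (by linarith)
  refine ⟨_, _, ?_, fun v w => ?_, h_quad.congr (Eventually.of_forall fun y => ?_)⟩
  · convert add_smul_sub_smul_notMem_strictlyAdmissible hb
      (h.isC2Solution.hessian_notMem_strictlyAdmissible P.one_le hxV) hZ using 2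
    module
  · simp only [_root_.add_apply, _root_.smul_apply, innerBil_apply, real_inner_comm v w,
      h.isC2Solution.hessian_symm hxV v w,
      P.isC2Solution.hessian_symm (subset_closure hx.1) v w]
  · simp only [barrier]
    ring

lemma subsolAt_comp_rigidMotion (h : P.IsRingSol ε u Gu Hu) (hW : ∀ x, ⟪W x, x⟫ = 0)
    (hx : rigidMotion p τ W hW t x ∈ P.annulus ε) :
    SubsolAt k (fun y => u (rigidMotion p τ W hW t y)) x := by
  simpa using (h.subsolAt hx).comp_isometry (T := rigidMotion p τ W hW t) (expIsometry W hW t)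
    one_ne_zero fun v => by rw [one_smul, rigidMotion_add]

lemma apply_sub_apply_le (h : P.IsRingSol ε u Gu Hu)
    (hL : ∀ x ∈ P.Ω, P.ε₀ ≤ ‖x‖ → ‖Gu x‖ ≤ L) (hδ : P.IsCollarRadius δ) (hp : p ∈ frontier P.Ω)
    (hx : x ∈ P.Ω) (hxp : ‖x - p‖ ≤ 2 * δ) (hy : y ∈ P.Ω) (hyp : ‖y - p‖ ≤ 2 * δ) :
    u y - u x ≤ L * ‖y - x‖ := by
  have h_mem : P.Ω ∩ closedBall p (2 * δ) ⊆ P.outerClosedAnnulus ε := fun z hz =>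
    hδ.mem_outerClosedAnnulus h.mem_Ioo.2 hp (subset_closure hz.1)
      (by simpa [dist_eq_norm] using hz.2)
  refine (le_abs_self _).trans ((P.convex.inter (convex_closedBall p (2 * δ))
    ).norm_image_sub_le_of_norm_hasFDerivWithin_le (f := u) (f' := Gu)
    (fun z hz => (h.isC2Solution.hasFDerivWithinAt z (h_mem hz)).mono h_mem)
    (fun z hz => hL z hz.1 (hδ.le_norm p hp z (by simpa [dist_eq_norm] using hz.2)))
    ⟨hx, by simpa [dist_eq_norm]⟩ ⟨hy, by simpa [dist_eq_norm]⟩)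

lemma apply_rigidMotion_le_of_mem_frontier (h : P.IsRingSol ε u Gu Hu) (hA : 1 ≤ A)
    (hA_le : ∀ x ∈ closedBall (0 : Euc n) P.ε₀, A * P.ψ x ≤ -P.M) (hC : P.IsTaylorBound C)
    (hX : P.IsTangentKillingField K p τ W κ) (ht : 0 ≤ t) (htK : t * K ≤ 1 / 2) (hb : 0 ≤ b)
    (hbγ : A * (2 * C * (1 + 2 * K)) ≤ b * γ) (hx : x ∈ closure (P.annulus ε))
    (hxp : ‖x - p‖ ≤ 1) (hy : rigidMotion p τ W hX.skew t x ∈ frontier P.Ω) :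
    u (rigidMotion p τ W hX.skew t x) ≤ u x + t * (b * P.barrier A γ p u x) +
      A * (2 * C * (K ^ 2 + (1 + K) ^ 2)) * t ^ 2 := by
  have h_barrier : t * (A * (2 * C * (1 + 2 * K)) * ‖x - p‖ ^ 2) ≤
      t * (b * P.barrier A γ p u x) := by
    refine mul_le_mul_of_nonneg_left ?_ ht
    calc A * (2 * C * (1 + 2 * K)) * ‖x - p‖ ^ 2 ≤ b * γ * ‖x - p‖ ^ 2 := by gcongr
      _ = b * (γ * ‖x - p‖ ^ 2) := mul_assoc _ _ _
      _ ≤ b * P.barrier A γ p u x :=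
        mul_le_mul_of_nonneg_left (h.mul_norm_sub_sq_le_barrier hA hA_le hx) hb
  have h_ψ := mul_le_mul_of_nonneg_left
    (hX.neg_ψ_le hC ht htK (closure_annulus_subset hx) hxp hy) (zero_le_one.trans hA)
  have h_u := h.mul_ψ_le hA hA_le x hx
  rw [h.eq_zero _ hy]
  linarith

lemma apply_rigidMotion_le_of_norm_eq (h : P.IsRingSol ε u Gu Hu) (hA : 1 ≤ A)
    (hA_le : ∀ x ∈ closedBall (0 : Euc n) P.ε₀, A * P.ψ x ≤ -P.M) (hL₀ : 0 ≤ L)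
    (hL : ∀ x ∈ P.Ω, P.ε₀ ≤ ‖x‖ → ‖Gu x‖ ≤ L) (hδ : P.IsCollarRadius δ)
    (hX : P.IsTangentKillingField K p τ W κ) (ht : t ∈ Ioo 0 δ) (hb : 0 ≤ b)
    (hbγ : L * (1 + K) ≤ b * γ * δ ^ 2) (hx : x ∈ P.Ω) (hxp : ‖x - p‖ = δ)
    (hy : rigidMotion p τ W hX.skew t x ∈ P.Ω) :
    u (rigidMotion p τ W hX.skew t x) ≤ u x + t * (b * P.barrier A γ p u x) := by
  set y := rigidMotion p τ W hX.skew t x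
  have hp := hX.mem_frontier
  obtain ⟨hyp, hyx⟩ := hδ.norm_rigidMotion_sub_le hX ht hxp.le
  have hx_closure : x ∈ closure (P.annulus ε) := subset_closure
    (mem_annulus_of_le_norm h.mem_Ioo.2 hx (hδ.norm_le hp hxp.le))
  rw [← sub_le_iff_le_add']
  calc u y - u x ≤ L * ‖y - x‖ :=
        h.apply_sub_apply_le hL hδ hp hx (by linarith [hδ.pos]) hy hyp
    _ ≤ L * (t * (1 + K)) := by gcongr
    _ = t * (L * (1 + K)) := by ring
    _ ≤ t * (b * γ * δ ^ 2) := mul_le_mul_of_nonneg_left hbγ ht.1.le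
    _ = t * (b * (γ * ‖x - p‖ ^ 2)) := by rw [hxp, mul_assoc b]
    _ ≤ t * (b * P.barrier A γ p u x) := mul_le_mul_of_nonneg_left (mul_le_mul_of_nonneg_left
        (h.mul_norm_sub_sq_le_barrier hA hA_le hx_closure) hb) ht.1.le

lemma apply_rigidMotion_le_of_notMem (h : P.IsRingSol ε u Gu Hu) (hA : 1 ≤ A)
    (hA_le : ∀ x ∈ closedBall (0 : Euc n) P.ε₀, A * P.ψ x ≤ -P.M) (hC : P.IsTaylorBound C)
    (hL₀ : 0 ≤ L) (hL : ∀ x ∈ P.Ω, P.ε₀ ≤ ‖x‖ → ‖Gu x‖ ≤ L) (hδ : P.IsCollarRadius δ)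
    (hX : P.IsTangentKillingField K p τ W κ) (ht : t ∈ Ioo 0 δ) (htK : t * K ≤ 1 / 2)
    (hb : 0 ≤ b) (hγ : 0 ≤ γ) (hbγ : A * (2 * C * (1 + 2 * K)) ≤ b * γ)
    (hbγδ : L * (1 + K) ≤ b * γ * δ ^ 2) (hx : x ∈ closure P.Ω) (hxp : ‖x - p‖ ≤ δ)
    (hy : rigidMotion p τ W hX.skew t x ∈ closure P.Ω)
    (hxy : ¬(x ∈ P.Ω ∧ ‖x - p‖ < δ ∧ rigidMotion p τ W hX.skew t x ∈ P.Ω)) :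
    u (rigidMotion p τ W hX.skew t x) ≤ u x + t * (b * P.barrier A γ p u x) +
      A * (2 * C * (K ^ 2 + (1 + K) ^ 2)) * t ^ 2 := by
  set y := rigidMotion p τ W hX.skew t x
  have hp := hX.mem_frontier
  have ht₀ := ht.1.le
  have h_error : 0 ≤ A * (2 * C * (K ^ 2 + (1 + K) ^ 2)) * t ^ 2 := by
    have hC₀ := hC.pos
    positivity
  have h_closure {z : Euc n} (hz : z ∈ closure P.Ω) (hzp : ‖z - p‖ ≤ 2 * δ) :
      z ∈ closure (P.annulus ε) := P.outerClosedAnnulus_subset_closure_annulus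
    (hδ.mem_outerClosedAnnulus h.mem_Ioo.2 hp hz hzp)
  have hx_closure := h_closure hx (by linarith [hδ.pos])
  by_cases hyΩ : y ∈ P.Ω
  · by_cases hxΩ : x ∈ P.Ω
    · have hxp_eq : ‖x - p‖ = δ := hxp.eq_of_not_lt fun h_lt => hxy ⟨hxΩ, h_lt, hyΩ⟩
      exact le_add_of_le_of_nonneg
        (h.apply_rigidMotion_le_of_norm_eq hA hA_le hL₀ hL hδ hX ht hb hbγδ hxΩ hxp_eq hyΩ) h_error
    · have h_barrier : 0 ≤ P.barrier A γ p u x := le_trans (by positivity)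
        (h.mul_norm_sub_sq_le_barrier hA hA_le hx_closure)
      rw [h.eq_zero x (P.mem_frontier_iff.2 ⟨hx, hxΩ⟩)]
      exact (h.nonpos (h_closure hy (hδ.norm_rigidMotion_sub_le hX ht hxp).1)).trans
        (by positivity)
  · exact h.apply_rigidMotion_le_of_mem_frontier hA hA_le hC hX ht₀ htK hb hbγ hx_closure
      (hxp.trans hδ.le_one) (P.mem_frontier_iff.2 ⟨hy, hyΩ⟩)

lemma apply_rigidMotion_le (h : P.IsRingSol ε u Gu Hu) (hA : 2 ≤ A)
    (hA_le : ∀ x ∈ closedBall (0 : Euc n) P.ε₀, A * P.ψ x ≤ -P.M) (hC : P.IsTaylorBound C)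
    (hL₀ : 0 ≤ L) (hL : ∀ x ∈ P.Ω, P.ε₀ ≤ ‖x‖ → ‖Gu x‖ ≤ L) (hδ : P.IsCollarRadius δ)
    (hη₀ : 0 ≤ η)
    (hη : ∀ x ∈ closure P.Ω, (2 : ℝ) • (P.H x - η • innerBil n) ∈ admissible k n)
    (hX : P.IsTangentKillingField K p τ W κ) (ht : t ∈ Ioo 0 δ) (htK : t * K ≤ 1 / 2)
    (hb : 0 ≤ b) (hbη : A * (2 * C * (1 + 2 * K)) ≤ b * (A * η / 2))
    (hbηδ : L * (1 + K) ≤ b * (A * η / 2) * δ ^ 2) (hx : x ∈ P.Ω) (hxp : ‖x - p‖ < δ)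
    (hy : rigidMotion p τ W hX.skew t x ∈ P.Ω) :
    u (rigidMotion p τ W hX.skew t x) ≤ u x + t * (b * P.barrier A (A * η / 2) p u x) +
      A * (2 * C * (K ^ 2 + (1 + K) ^ 2)) * t ^ 2 := by
  set T := rigidMotion p τ W hX.skew t
  have hp := hX.mem_frontier
  have hT : Continuous T := continuous_rigidMotion hX.skew t
  set D : Set (Euc n) := (P.Ω ∩ ball p δ) ∩ T ⁻¹' P.Ω
  have hD_closure {z : Euc n} (hz : z ∈ closure D) :
      z ∈ closure P.Ω ∧ ‖z - p‖ ≤ δ ∧ T z ∈ closure P.Ω := by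
    refine ⟨closure_mono (inter_subset_left.trans inter_subset_left) hz, ?_, ?_⟩
    · simpa [dist_eq_norm] using
        closure_ball_subset_closedBall (closure_mono (fun y hy => hy.1.2) hz)
    · exact (show MapsTo T D P.Ω from fun y hy => hy.2).closure hT hz
  have h_closure {z : Euc n} (hz : z ∈ closure P.Ω) (hzp : ‖z - p‖ ≤ 2 * δ) :
      z ∈ P.outerClosedAnnulus ε := hδ.mem_outerClosedAnnulus h.mem_Ioo.2 hp hz hzp
  have h_cont : ContinuousOn u (closure D) := h.isC2Solution.continuousOn.mono fun z hz =>
    h_closure (hD_closure hz).1 (by linarith [(hD_closure hz).2.1, hδ.pos])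
  have h_move {z : Euc n} (hz : z ∈ closure D) : ‖T z - p‖ ≤ 2 * δ :=
    (hδ.norm_rigidMotion_sub_le hX ht (hD_closure hz).2.1).1
  have h_cont_comp : ContinuousOn (fun z => u (T z)) (closure D) :=
    h.isC2Solution.continuousOn.comp hT.continuousOn fun z hz =>
      h_closure (hD_closure hz).2.2 (h_move hz)
  have h_cont_ψ := P.ψ_continuousOn.mono fun z hz => (hD_closure hz).1
  refine (comparison_principle P.le_dim (f := fun z => u (T z))
    (g := fun z => u z + t * b * P.barrier A (A * η / 2) p u z +
      A * (2 * C * (K ^ 2 + (1 + K) ^ 2)) * t ^ 2)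
    ((P.isOpen.inter isOpen_ball).inter (P.isOpen.preimage hT))
    (P.isBounded.subset (inter_subset_left.trans inter_subset_left)) h_cont_comp
    (by unfold barrier; fun_prop) (fun z hz hzD => ?_) (fun z hz => ?_) (fun z hz => ?_) x
    (subset_closure ⟨⟨hx, by simpa [dist_eq_norm]⟩, hy⟩)).trans_eq (by rw [mul_assoc t])
  · rw [mul_assoc t]
    obtain ⟨hzΩ, hzp, hTz⟩ := hD_closure hz
    exact h.apply_rigidMotion_le_of_notMem (one_le_two.trans hA) hA_le hC hL₀ hL hδ hX ht htK hb
      (by positivity) hbη hbηδ hzΩ hzp hTz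
      fun hz' => hzD ⟨⟨hz'.1, by simpa [dist_eq_norm] using hz'.2.1⟩, hz'.2.2⟩
  · exact h.subsolAt_comp_rigidMotion hX.skew (mem_annulus_of_le_norm h.mem_Ioo.2 hz.2
      (hδ.le_norm p hp _ (h_move (subset_closure hz))))
  · exact h.supersolAt_add_barrier hA (mul_nonneg ht.1.le hb) (hη z (subset_closure hz.1.1))
      (mem_annulus_of_le_norm h.mem_Ioo.2 hz.1.1
        (hδ.norm_le hp (hD_closure (subset_closure hz)).2.1)) _

end IsRingSol

lemma exists_apply_rigidMotion_le (P : RingProblem n k) (hA : 2 ≤ A)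
    (hA_le : ∀ x ∈ closedBall (0 : Euc n) P.ε₀, A * P.ψ x ≤ -P.M) (hδ : P.IsCollarRadius δ)
    (hK : 0 ≤ K) :
    ∃ b ≥ (0 : ℝ), ∃ γ C, ∃ t₀ > (0 : ℝ), ∀ ε u Gu Hu, P.IsRingSol ε u Gu Hu →
      ∀ p τ W κ, ∀ hX : P.IsTangentKillingField K p τ W κ, ∀ t ∈ Ioo 0 t₀, ∀ x ∈ P.Ω,
        ‖x - p‖ < δ → rigidMotion p τ W hX.skew t x ∈ P.Ω →
          u (rigidMotion p τ W hX.skew t x) ≤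
            u x + t * (b * P.barrier A γ p u x) + C * t ^ 2 := by
  obtain ⟨C, hC⟩ := P.exists_isTaylorBound
  obtain ⟨L, hL₀, hL⟩ := P.exists_norm_gradient_le
  obtain ⟨η, hη₀, hη⟩ := P.exists_two_smul_hessian_sub_mem_admissible
  have hC₀ := hC.pos
  have hδ₀ := hδ.pos
  have hA₀ : 0 < A := two_pos.trans_le hA
  set q := A * (2 * C * (1 + 2 * K)) + L * (1 + K) / δ ^ 2
  have hq : q / (A * η / 2) * (A * η / 2) = q := by field_simp
  refine ⟨q / (A * η / 2), by positivity, A * η / 2, _, min δ (1 / (2 * (K + 1))),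
    by positivity, fun ε u Gu Hu hu p τ W κ hX t ht x hx hxp hy =>
      hu.apply_rigidMotion_le hA hA_le hC hL₀.le (hL ε u Gu Hu hu) hδ hη₀.le hη hX
        ⟨ht.1, ht.2.trans_le (min_le_left _ _)⟩ ?_ (by positivity) ?_ ?_ hx hxp hy⟩
  · have htK := (ht.2.trans_le (min_le_right _ _)).le
    rw [le_div_iff₀ (by positivity)] at htK
    linarith [ht.1]
  · rw [hq]
    exact le_add_of_nonneg_right (by positivity)
  · rw [hq, ← div_le_iff₀ (by positivity)]
    exact le_add_of_nonneg_left (by positivity)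

end RingProblem

end

/-! ### Mixed second derivatives at the outer boundary -/

section

lemma exists_mem_Icc_smul_eq_of_forall_neg {E : Type*} [NormedAddCommGroup E] [NormedSpace ℝ E]
    {a b : E →L[ℝ] ℝ} {c C : ℝ} (ha : a ≠ 0)
    (h : ∀ v, a v < 0 → C * a v ≤ b v ∧ b v ≤ c * a v) : ∃ r ∈ Icc c C, b = r • a := by
  obtain ⟨r, hr, h_eq⟩ := exists_smul_eq_of_forall_neg ha fun v hv => (h v hv).2
  obtain ⟨r', hr', h_eq'⟩ := exists_smul_eq_of_forall_neg (b := -b) (c := -C) ha fun v hv => by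
    rw [_root_.neg_apply, neg_mul]
    exact neg_le_neg (h v hv).1
  have h_neg : r' = -r := smul_left_injective ℝ ha (by simp only [← h_eq', h_eq, neg_smul])
  exact ⟨r, ⟨hr, by linarith⟩, h_eq⟩

lemma inner_map_eq_neg_inner_map {E : Type*} [NormedAddCommGroup E] [InnerProductSpace ℝ E]
    {W : E →L[ℝ] E} (hW : ∀ x, ⟪W x, x⟫ = 0) (x y : E) : ⟪W x, y⟫ = -⟪x, W y⟫ := by
  have h := hW (x + y)
  rw [map_add, inner_add_left, inner_add_right, inner_add_right, hW, hW] at h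
  rw [real_inner_comm (W y) x]
  linarith

namespace RingProblem

variable {n k : ℕ} {P : RingProblem n k} {A K b γ δ ε κ : ℝ} {p τ v : Euc n}
  {W : Euc n →L[ℝ] Euc n} {u : Euc n → ℝ} {Gu : Euc n → Euc n →L[ℝ] ℝ} {Hu : Euc n → Bil n}

lemma gradient_ne_zero (P : RingProblem n k) (hp : p ∈ frontier P.Ω) : P.G p ≠ 0 := by
  obtain ⟨g₀, hg₀, h_le⟩ := P.exists_le_norm_gradient
  exact norm_pos_iff.1 (hg₀.trans_le (h_le p hp))

lemma exists_isTangentKillingField (P : RingProblem n k) :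
    ∃ K ≥ (0 : ℝ), ∀ p ∈ frontier P.Ω, ∀ τ, ‖τ‖ ≤ 1 → P.G p τ = 0 →
      ∃ W κ, P.IsTangentKillingField K p τ W κ := by
  obtain ⟨C, hC⟩ := P.exists_isTaylorBound
  obtain ⟨g₀, hg₀, hg₀_le⟩ := P.exists_le_norm_gradient
  have hC₀ := hC.pos
  refine ⟨2 * (C / g₀), by positivity, fun p hp τ hτ hGτ => ?_⟩
  have hp' := frontier_subset_closure hp
  set g := (InnerProductSpace.toDual ℝ (Euc n)).symm (P.G p) with hg
  set h := (InnerProductSpace.toDual ℝ (Euc n)).symm (P.H p τ) with hh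
  have hg_norm : g₀ ≤ ‖g‖ := by
    rw [hg, LinearIsometryEquiv.norm_map]
    exact hg₀_le p hp
  have hh_norm : ‖h‖ ≤ C := by
    rw [hh, LinearIsometryEquiv.norm_map]
    exact ((P.H p).le_of_opNorm_le_of_le (hC.norm_hessian_le p hp') hτ).trans_eq (mul_one C)
  have h_ratio : ‖h‖ / ‖g‖ ≤ C / g₀ := by gcongr
  obtain ⟨s, W, hW, h_eq, hs, hW_norm⟩ :=
    exists_smul_add_skew_eq (norm_pos_iff.1 (hg₀.trans_le hg_norm)) h
  refine ⟨W, s, hp, hτ, hGτ, hW, hW_norm.trans (by gcongr), ?_, fun d => ?_⟩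
  · linarith [show 0 ≤ C / g₀ by positivity]
  · have hG_apply (v : Euc n) : P.G p v = ⟪g, v⟫ := (InnerProductSpace.toDual_symm_apply).symm
    have hH_apply : P.H p τ d = ⟪h, d⟫ := (InnerProductSpace.toDual_symm_apply).symm
    rw [P.isC2Solution.hessian_symm hp', hH_apply, ← h_eq, hG_apply, hG_apply, inner_add_left,
      inner_map_eq_neg_inner_map hW, inner_smul_left]
    simp

lemma exists_gradient_apply_le_barrier (P : RingProblem n k) (hA : 2 ≤ A)
    (hA_le : ∀ x ∈ closedBall (0 : Euc n) P.ε₀, A * P.ψ x ≤ -P.M) (hδ : P.IsCollarRadius δ)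
    (hK : 0 ≤ K) :
    ∃ b ≥ (0 : ℝ), ∃ γ, ∀ ε u Gu Hu, P.IsRingSol ε u Gu Hu → ∀ p τ W κ,
      P.IsTangentKillingField K p τ W κ → ∀ x ∈ P.Ω, ‖x - p‖ < δ →
        Gu x (τ + W (x - p)) ≤ b * P.barrier A γ p u x := by
  obtain ⟨b, hb, γ, C, t₀, ht₀, h_move⟩ := P.exists_apply_rigidMotion_le hA hA_le hδ hK
  refine ⟨b, hb, γ, fun ε u Gu Hu hu p τ W κ hX x hx hxp => ?_⟩
  have hx_annulus := mem_annulus_of_le_norm hu.mem_Ioo.2 hx (hδ.norm_le hX.mem_frontier hxp.le)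
  have hu_deriv : HasFDerivAt u (Gu x) x :=
    (hu.isC2Solution.hasFDerivWithinAt x (P.annulus_subset_outerClosedAnnulus hx_annulus)
      ).hasFDerivAt (mem_of_superset (P.isOpen_annulus.mem_nhds hx_annulus)
        P.annulus_subset_outerClosedAnnulus)
  have hT := hasDerivAt_rigidMotion (p := p) (τ := τ) hX.skew x
  have hT_zero := rigidMotion_zero (p := p) (τ := τ) hX.skew x
  have hT_mem : ∀ᶠ t in 𝓝[>] (0 : ℝ), rigidMotion p τ W hX.skew t x ∈ P.Ω := by
    refine nhdsWithin_le_nhds (hT.continuousAt.eventually_mem ?_)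
    rw [hT_zero]
    exact P.isOpen.mem_nhds hx
  have hu_comp : HasDerivAt (fun t => u (rigidMotion p τ W hX.skew t x) - u x - C * t ^ 2)
      (Gu x (τ + W (x - p))) 0 := by
    have hu_deriv₀ : HasFDerivAt u (Gu x) (rigidMotion p τ W hX.skew 0 x) := by rwa [hT_zero]
    have h_sq : HasDerivAt (fun t : ℝ => C * t ^ 2) 0 0 := by
      simpa using (hasDerivAt_pow 2 (0 : ℝ)).const_mul C
    exact (((hu_deriv₀.comp_hasDerivAt (0 : ℝ) hT).sub_const (u x)).sub h_sq).congr_deriv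
      (sub_zero _)
  refine le_of_hasDerivAt_of_eventually_le hu_comp (by simp [hT_zero]) ?_
  filter_upwards [hT_mem, Ioo_mem_nhdsGT ht₀] with t ht_mem ht
  linarith [h_move ε u Gu Hu hu p τ W κ hX t ht x hx hxp ht_mem]

namespace IsRingSol

lemma eventually_mem_outerClosedAnnulus (h : P.IsRingSol ε u Gu Hu) (hp : p ∈ frontier P.Ω)
    (hv : P.G p v < 0) : ∀ᶠ s in 𝓝[>] (0 : ℝ), p + s • v ∈ P.outerClosedAnnulus ε := by
  have h_ray : Tendsto (fun s : ℝ => p + s • v) (𝓝[>] 0) (𝓝 p) := by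
    have h_cont : Continuous fun s : ℝ => p + s • v := by fun_prop
    simpa using (h_cont.tendsto 0).mono_left nhdsWithin_le_nhds
  filter_upwards [P.eventually_mem_of_gradient_neg hp hv, h_ray.eventually_mem
    (isClosed_closedBall.isOpen_compl.mem_nhds
      (P.mem_outerClosedAnnulus_of_mem_frontier h.mem_Ioo.2 hp).2)] with s hsΩ hs
  exact ⟨subset_closure hsΩ, hs⟩

lemma exists_gradient_eq_smul (h : P.IsRingSol ε u Gu Hu) (hA : 1 ≤ A)
    (hA_le : ∀ x ∈ closedBall (0 : Euc n) P.ε₀, A * P.ψ x ≤ -P.M) (hp : p ∈ frontier P.Ω) :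
    ∃ r ∈ Icc 1 A, Gu p = r • P.G p := by
  have hu := h.isC2Solution.hasFDerivWithinAt p
    (P.mem_outerClosedAnnulus_of_mem_frontier h.mem_Ioo.2 hp)
  have hψ := P.isC2Solution.hasFDerivWithinAt p (frontier_subset_closure hp)
  refine exists_mem_Icc_smul_eq_of_forall_neg (P.gradient_ne_zero hp) fun v hv => ?_
  have h_mem := h.eventually_mem_outerClosedAnnulus hp hv
  have h_mem_closure : ∀ᶠ s in 𝓝[>] (0 : ℝ), p + s • v ∈ closure P.Ω :=
    h_mem.mono fun s hs => hs.1
  constructor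
  · refine apply_le_apply_of_hasFDerivWithinAt (f' := A • P.G p) (hψ.const_mul A) hu
      h_mem_closure h_mem ?_ ?_
    · rw [P.ψ_eq_zero p hp, h.eq_zero p hp, mul_zero]
    · filter_upwards [h_mem] with s hs
      exact h.mul_ψ_le hA hA_le _ (P.outerClosedAnnulus_subset_closure_annulus hs)
  · rw [one_mul]
    refine apply_le_apply_of_hasFDerivWithinAt hu hψ h_mem h_mem_closure ?_ ?_
    · rw [P.ψ_eq_zero p hp, h.eq_zero p hp]
    · filter_upwards [h_mem] with s hs
      exact h.le_ψ _ (P.outerClosedAnnulus_subset_closure_annulus hs)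

lemma hessian_apply_add_gradient_apply_le (h : P.IsRingSol ε u Gu Hu) (hδ : 0 < δ)
    (hp : p ∈ frontier P.Ω) (hτ : Gu p τ = 0)
    (h_le : ∀ x ∈ P.Ω, ‖x - p‖ < δ → Gu x (τ + W (x - p)) ≤ b * P.barrier A γ p u x)
    (hv : P.G p v < 0) : Hu p v τ + Gu p (W v) ≤ b * (Gu p v - A * P.G p v) := by
  have hpV := P.mem_outerClosedAnnulus_of_mem_frontier h.mem_Ioo.2 hp
  have h_mem := h.eventually_mem_outerClosedAnnulus hp hv
  have h_barrier : HasFDerivWithinAt (fun x => b * P.barrier A γ p u x)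
      (b • (Gu p - A • P.G p)) (P.outerClosedAnnulus ε) p := by
    have h_sq : HasFDerivAt (fun x : Euc n => γ * ‖x - p‖ ^ 2) (0 : Euc n →L[ℝ] ℝ) p := by
      simpa using ((hasFDerivAt_id p).sub_const p).norm_sq.const_mul γ
    simpa [barrier] using (((h.isC2Solution.hasFDerivWithinAt p hpV).sub
      (((P.isC2Solution.hasFDerivWithinAt p (frontier_subset_closure hp)).mono
        sdiff_subset).const_mul A)).add h_sq.hasFDerivWithinAt).const_mul b
  have h_field : HasFDerivWithinAt (fun x => Gu x (τ + W (x - p)))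
      ((Hu p).flip τ + (Gu p).comp W) (P.outerClosedAnnulus ε) p := by
    refine ((h.isC2Solution.hasFDerivWithinAt_gradient p hpV).clm_apply
      ((W.hasFDerivAt.comp p ((hasFDerivAt_id p).sub_const p)).const_add τ
        ).hasFDerivWithinAt).congr_fderiv ?_
    ext d
    simp [add_comm]
  have h_near : ∀ᶠ s in 𝓝[>] (0 : ℝ), ‖p + s • v - p‖ < δ := by
    have h_cont : Continuous fun s : ℝ => ‖p + s • v - p‖ := by fun_prop
    exact nhdsWithin_le_nhds ((h_cont.tendsto 0).eventually (gt_mem_nhds (by simpa)))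
  refine apply_le_apply_of_hasFDerivWithinAt h_field h_barrier h_mem h_mem ?_ ?_
  · simp [barrier, hτ, h.eq_zero p hp, P.ψ_eq_zero p hp]
  · filter_upwards [P.eventually_mem_of_gradient_neg hp hv, h_near] with s hs hsδ
    exact h_le _ hs hsδ

end IsRingSol

lemma IsTangentKillingField.hessian_apply_sub_le (hX : P.IsTangentKillingField K p τ W κ)
    (h : P.IsRingSol ε u Gu Hu) (hδ : 0 < δ) (hb : 0 ≤ b) {r : ℝ} (hr : r ∈ Icc 1 A)
    (hGu : Gu p = r • P.G p)
    (h_le : ∀ x ∈ P.Ω, ‖x - p‖ < δ → Gu x (τ + W (x - p)) ≤ b * P.barrier A γ p u x)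
    (hv : P.G p v < 0) :
    Hu p v τ - r * P.H p v τ ≤ -(b * A + A * K) * P.G p v := by
  have h_hess := h.hessian_apply_add_gradient_apply_le hδ hX.mem_frontier
    (by simp [hGu, hX.gradient_apply_eq_zero]) h_le hv
  simp only [hGu, _root_.smul_apply, smul_eq_mul] at h_hess
  have h_rel := hX.hessian_add_gradient v
  have h_coeff : -(b * A + A * K) ≤ b * (r - A) - r * κ := by
    have hκ : r * κ ≤ A * K :=
      mul_le_mul_of_nonneg hr.2 (_root_.abs_le.1 hX.abs_le).2 (by linarith [hr.1]) hX.nonneg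
    have hbr : 0 ≤ b * r := mul_nonneg hb (by linarith [hr.1])
    linarith
  calc Hu p v τ - r * P.H p v τ ≤ (b * (r - A) - r * κ) * P.G p v := by
        linear_combination h_hess - r * h_rel
    _ ≤ -(b * A + A * K) * P.G p v := mul_le_mul_of_nonpos_right h_coeff hv.le

lemma exists_abs_hessian_sub_le (P : RingProblem n k) :
    ∃ C ≥ (0 : ℝ), ∃ A, ∀ ε u Gu Hu, P.IsRingSol ε u Gu Hu → ∀ p ∈ frontier P.Ω, ∃ r ∈ Icc 1 A,
      ∀ τ, ‖τ‖ ≤ 1 → P.G p τ = 0 → ∀ v, |Hu p v τ - r * P.H p v τ| ≤ C * |P.G p v| := by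
  obtain ⟨K, hK, h_field⟩ := P.exists_isTangentKillingField
  obtain ⟨A, hA, hA_le⟩ := P.exists_mul_ψ_le_neg_M
  obtain ⟨δ, hδ⟩ := P.exists_isCollarRadius
  obtain ⟨b, hb, γ, h_le⟩ := P.exists_gradient_apply_le_barrier hA hA_le hδ hK
  have hA₁ : 1 ≤ A := one_le_two.trans hA
  refine ⟨b * A + A * K, by positivity, A, fun ε u Gu Hu h p hp => ?_⟩
  obtain ⟨r, hr, hGu⟩ := h.exists_gradient_eq_smul hA₁ hA_le hp
  refine ⟨r, hr, fun τ hτ hGτ v => ?_⟩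
  obtain ⟨W, κ, hX⟩ := h_field p hp τ hτ hGτ
  obtain ⟨q, hq, h_eq⟩ := exists_mem_Icc_smul_eq_of_forall_neg (c := -(b * A + A * K))
    (C := b * A + A * K) (b := (Hu p).flip τ - r • (P.H p).flip τ) (P.gradient_ne_zero hp)
    fun v hv => by
      have h_upper := hX.hessian_apply_sub_le h hδ.pos hb hr hGu (h_le ε u Gu Hu h _ _ _ _ hX) hv
      have h_lower := hX.neg.hessian_apply_sub_le h hδ.pos hb hr hGu
        (h_le ε u Gu Hu h _ _ _ _ hX.neg) hv
      simp only [map_neg, mul_neg, sub_neg_eq_add] at h_lower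
      simp only [_root_.sub_apply, _root_.smul_apply, ContinuousLinearMap.flip_apply, smul_eq_mul]
      exact ⟨by linarith, h_upper⟩
  have hv : Hu p v τ - r * P.H p v τ = q * P.G p v := DFunLike.congr_fun h_eq v
  rw [hv, abs_mul]
  gcongr
  exact _root_.abs_le.2 hq

end RingProblem

end

/-! ### The double normal derivative -/

section

section NormalComponent

variable {E : Type*} [NormedAddCommGroup E] [InnerProductSpace ℝ E]

lemma exists_norm_eq_one_and_apply_eq_norm_mul_inner [CompleteSpace E] {ℓ : E →L[ℝ] ℝ}
    (hℓ : ℓ ≠ 0) : ∃ ν : E, ‖ν‖ = 1 ∧ ∀ v, ℓ v = ‖ℓ‖ * ⟪ν, v⟫ := by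
  set g := (InnerProductSpace.toDual ℝ E).symm ℓ with hg
  have hg_norm : ‖g‖ = ‖ℓ‖ := LinearIsometryEquiv.norm_map _ _
  have hg_ne : g ≠ 0 := by rwa [hg, ne_eq, EmbeddingLike.map_eq_zero_iff]
  refine ⟨NormedSpace.normalize g, NormedSpace.norm_normalize_eq_one_iff.2 hg_ne, fun v => ?_⟩
  rw [← hg_norm, ← real_inner_smul_left, NormedSpace.norm_smul_normalize, hg,
    InnerProductSpace.toDual_symm_apply]

variable {X : E →L[ℝ] E →L[ℝ] ℝ} {ν : E} {K m : ℝ}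

lemma norm_sub_inner_smul_le (hν : ‖ν‖ = 1) (v : E) : ‖v - ⟪ν, v⟫ • ν‖ ≤ ‖v‖ := by
  refine le_of_sq_le_sq ?_ (norm_nonneg v)
  rw [norm_sub_sq_real, inner_smul_right, norm_smul, hν, mul_one, Real.norm_eq_abs, sq_abs,
    real_inner_comm]
  linarith [sq_nonneg ⟪v, ν⟫]

lemma abs_apply_sub_inner_mul_inner_mul_le (hν : ‖ν‖ = 1) (hX_symm : ∀ v w, X v w = X w v)
    (hK : 0 ≤ K) (hX : ∀ τ, ⟪ν, τ⟫ = 0 → ∀ v, |X v τ| ≤ K * |⟪ν, v⟫| * ‖τ‖) (v w : E) :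
    |X v w - ⟪ν, v⟫ * ⟪ν, w⟫ * X ν ν| ≤ K * (|⟪ν, v⟫| * ‖w‖ + |⟪ν, w⟫| * ‖v‖) := by
  have hνν : ⟪ν, ν⟫ = 1 := by rw [real_inner_self_eq_norm_sq, hν, one_pow]
  have h_tangent : ∀ v z, |X z (v - ⟪ν, v⟫ • ν)| ≤ K * |⟪ν, z⟫| * ‖v‖ := fun v z =>
    (hX _ (by rw [inner_sub_right, inner_smul_right, hνν, mul_one, sub_self]) z).trans
      (by gcongr; exact norm_sub_inner_smul_le hν v)
  have h_split : X v w - ⟪ν, v⟫ * ⟪ν, w⟫ * X ν ν =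
      X v (w - ⟪ν, w⟫ • ν) + ⟪ν, w⟫ * X ν (v - ⟪ν, v⟫ • ν) := by
    simp only [map_sub, map_smul, smul_eq_mul, hX_symm ν v]
    ring
  have hv := h_tangent v ν
  rw [hνν, abs_one, mul_one] at hv
  calc |X v w - ⟪ν, v⟫ * ⟪ν, w⟫ * X ν ν|
      ≤ |X v (w - ⟪ν, w⟫ • ν)| + |⟪ν, w⟫| * |X ν (v - ⟪ν, v⟫ • ν)| := by
        rw [h_split, ← abs_mul]
        exact abs_add_le _ _
    _ ≤ K * |⟪ν, v⟫| * ‖w‖ + |⟪ν, w⟫| * (K * ‖v‖) := by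
        gcongr
        exact h_tangent w v
    _ = K * (|⟪ν, v⟫| * ‖w‖ + |⟪ν, w⟫| * ‖v‖) := by ring

lemma norm_le_of_abs_apply_sub_inner_mul_inner_mul_le (hν : ‖ν‖ = 1) (hK : 0 ≤ K)
    (hX : ∀ v w, |X v w - ⟪ν, v⟫ * ⟪ν, w⟫ * m| ≤ K * (|⟪ν, v⟫| * ‖w‖ + |⟪ν, w⟫| * ‖v‖)) :
    ‖X‖ ≤ 2 * K + |m| := by
  have hν_le : ∀ v, |⟪ν, v⟫| ≤ ‖v‖ := fun v => by
    simpa [hν] using abs_real_inner_le_norm ν v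
  refine X.opNorm_le_bound₂ (by positivity) fun v w => ?_
  calc ‖X v w‖ ≤ |X v w - ⟪ν, v⟫ * ⟪ν, w⟫ * m| + |⟪ν, v⟫ * ⟪ν, w⟫ * m| :=
        (congrArg abs (sub_add_cancel _ _).symm).trans_le (abs_add_le _ _)
    _ ≤ K * (‖v‖ * ‖w‖ + ‖w‖ * ‖v‖) + ‖v‖ * ‖w‖ * |m| := by
        refine add_le_add ((hX v w).trans ?_) ?_
        · gcongr <;> exact hν_le _
        · rw [abs_mul, abs_mul]
          gcongr <;> exact hν_le _
    _ = (2 * K + |m|) * ‖v‖ * ‖w‖ := by ring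

end NormalComponent

variable {n k : ℕ} {B H : Bil n} {ν : Euc n} {K C A η b₀ m r : ℝ}

lemma bilTrace_le_of_apply_self_le (hν : ‖ν‖ = 1) {c : ℝ}
    (hB : ∀ v, B v v ≤ m * ⟪ν, v⟫ ^ 2 + c * ‖v‖ ^ 2) : bilTrace B ≤ m + n * c := by
  have h := mul_le_bilTrace (η := -c)
    (B := m • tensorBil (innerSL ℝ ν) (innerSL ℝ ν) + (-1 : ℝ) • B) fun v => by
      simp only [_root_.add_apply, _root_.smul_apply, tensorBil_apply, innerSL_apply_apply,
        smul_eq_mul]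
      linarith [hB v]
  rw [bilTrace_add, bilTrace_smul, bilTrace_smul, bilTrace_tensorBil_self, innerSL_apply_norm,
    hν] at h
  linarith

lemma lt_of_notMem_strictlyAdmissible (hkn : k ≤ n) (hB : B ∉ strictlyAdmissible k n)
    (hB_symm : ∀ v w, B v w = B w v) (hr : 1 ≤ r) (hη : 0 < η)
    (hH : (2 : ℝ) • (H - η • innerBil n) ∈ admissible k n)
    (hb₀ : ∀ b ≥ b₀, (η / 3) • innerBil n + b • tensorBil (innerSL ℝ ν) (innerSL ℝ ν)
      ∈ admissible k n)
    (h_le : ∀ v, m * ⟪ν, v⟫ ^ 2 - 2 * K * (|⟪ν, v⟫| * ‖v‖) ≤ B v v - r * H v v) :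
    m < 2 * K ^ 2 / η + 3 / 2 * b₀ := by
  by_contra! hm
  refine hB (mem_strictlyAdmissible_of_smul_add_smul_le hkn hH
    (hb₀ (2 / 3 * (m - 2 * K ^ 2 / η)) (by linarith)) hB_symm (a := r / 2) (b := 3 / 2)
    (by positivity) (by norm_num) (by linarith) fun v => ?_)
  have h_young : 2 * K * (|⟪ν, v⟫| * ‖v‖) ≤ η / 2 * ‖v‖ ^ 2 + 2 * K ^ 2 / η * ⟪ν, v⟫ ^ 2 := by
    have h_sq : η / 2 * ‖v‖ ^ 2 + 2 * K ^ 2 / η * ⟪ν, v⟫ ^ 2 - 2 * K * (|⟪ν, v⟫| * ‖v‖) =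
        (η * ‖v‖ - 2 * K * |⟪ν, v⟫|) ^ 2 / (2 * η) := by
      rw [← sq_abs ⟪ν, v⟫]
      field_simp
      ring
    rw [← sub_nonneg, h_sq]
    positivity
  have h_scale : η * ‖v‖ ^ 2 ≤ r * (η * ‖v‖ ^ 2) := le_mul_of_one_le_left (by positivity) hr
  simp only [_root_.smul_apply, _root_.add_apply, _root_.sub_apply, innerBil_apply,
    tensorBil_apply, innerSL_apply_apply, smul_eq_mul, real_inner_self_eq_norm_sq]
  linarith [h_le v]

lemma neg_le_of_mem_admissible (hk : 1 ≤ k) (hB : B ∈ admissible k n) (hν : ‖ν‖ = 1) (hK : 0 ≤ K)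
    (hH : ‖H‖ ≤ C) (hr : 0 ≤ r) (hrA : r ≤ A)
    (h_le : ∀ v, B v v - r * H v v ≤ m * ⟪ν, v⟫ ^ 2 + 2 * K * (|⟪ν, v⟫| * ‖v‖)) :
    -(n * (2 * K + A * C)) ≤ m := by
  have h_trace := bilTrace_le_of_apply_self_le (B := B) (m := m) (c := 2 * K + A * C) hν
    fun v => by
      have hν_le : |⟪ν, v⟫| ≤ ‖v‖ := by simpa [hν] using abs_real_inner_le_norm ν v
      have h_mixed : 2 * K * (|⟪ν, v⟫| * ‖v‖) ≤ 2 * K * (‖v‖ * ‖v‖) := by gcongr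
      have hH_le : r * H v v ≤ A * (C * ‖v‖ * ‖v‖) := by
        have hHv : H v v ≤ C * ‖v‖ * ‖v‖ :=
          (le_abs_self _).trans ((H.le_opNorm₂ v v).trans (by gcongr))
        have hC : 0 ≤ C := (norm_nonneg H).trans hH
        exact (mul_le_mul_of_nonneg_left hHv hr).trans (by gcongr)
      linarith [h_le v]
  linarith [one_le_bilTrace hk hB]

lemma exists_norm_le_of_abs_sub_mul_apply_le (hk : 1 ≤ k) (hkn : k ≤ n) (hη : 0 < η) (hK : 0 ≤ K)
    (A C : ℝ) : ∃ C', ∀ (B H : Bil n) (r : ℝ) (ν : Euc n), B ∈ admissibleLevel k n →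
      (∀ v w, H v w = H w v) → ‖H‖ ≤ C → (2 : ℝ) • (H - η • innerBil n) ∈ admissible k n →
      r ∈ Icc 1 A → ‖ν‖ = 1 →
      (∀ τ, ⟪ν, τ⟫ = 0 → ∀ v, |B v τ - r * H v τ| ≤ K * |⟪ν, v⟫| * ‖τ‖) → ‖B‖ ≤ C' := by
  obtain ⟨b₀, -, hb₀⟩ := exists_smul_innerBil_add_tensorBil_mem_admissible (k := k) hkn
    (show 0 < η / 3 by positivity)
  refine ⟨2 * K + max (2 * K ^ 2 / η + 3 / 2 * b₀) (n * (2 * K + A * C)) + A * C,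
    fun B H r ν hB hH_symm hHC hH hr hν h_mixed => ?_⟩
  have hB_symm := symm_of_mem_admissible (admissibleLevel_subset_admissible hB)
  have hr₀ : 0 ≤ r := zero_le_one.trans hr.1
  set X := B - r • H
  have hX : ∀ v w, X v w = B v w - r * H v w := fun v w => rfl
  have h_normal := abs_apply_sub_inner_mul_inner_mul_le hν
    (fun v w => by rw [hX, hX, hB_symm, hH_symm]) hK h_mixed
  have h_upper : X ν ν < 2 * K ^ 2 / η + 3 / 2 * b₀ :=
    lt_of_notMem_strictlyAdmissible hkn (notMem_strictlyAdmissible_of_mem_admissibleLevel hk hB)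
      hB_symm hr.1 hη hH (hb₀ _ (by rw [innerSL_apply_norm, hν])) fun v => by
        linarith [(abs_le.1 (h_normal v v)).1, hX v v]
  have h_lower : -(n * (2 * K + A * C)) ≤ X ν ν :=
    neg_le_of_mem_admissible hk (admissibleLevel_subset_admissible hB) hν hK hHC hr₀ hr.2
      fun v => by linarith [(abs_le.1 (h_normal v v)).2, hX v v]
  have h_abs : |X ν ν| ≤ max (2 * K ^ 2 / η + 3 / 2 * b₀) (n * (2 * K + A * C)) :=
    abs_le'.2 ⟨h_upper.le.trans (le_max_left _ _), (neg_le.1 h_lower).trans (le_max_right _ _)⟩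
  calc ‖B‖ = ‖X + r • H‖ := by rw [sub_add_cancel]
    _ ≤ ‖X‖ + ‖r • H‖ := norm_add_le X (r • H)
    _ ≤ ‖X‖ + r * ‖H‖ := by
        gcongr
        exact (H.opNorm_smul_le r).trans_eq (by rw [Real.norm_of_nonneg hr₀])
    _ ≤ (2 * K + |X ν ν|) + A * C :=
        add_le_add (norm_le_of_abs_apply_sub_inner_mul_inner_mul_le hν hK h_normal)
          (mul_le_mul hr.2 hHC (norm_nonneg H) (hr₀.trans hr.2))
    _ ≤ _ := by gcongr

lemma RingProblem.exists_norm_hessian_le (P : RingProblem n k) :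
    ∃ C, ∀ ε u Gu Hu, P.IsRingSol ε u Gu Hu → ∀ p ∈ frontier P.Ω, ‖Hu p‖ ≤ C := by
  obtain ⟨K, hK, A, h_mixed⟩ := P.exists_abs_hessian_sub_le
  obtain ⟨C, hC⟩ := P.exists_isTaylorBound
  obtain ⟨η, hη, h_shrink⟩ := P.exists_two_smul_hessian_sub_mem_admissible
  have hC₀ := hC.pos
  obtain ⟨C', h_norm⟩ := exists_norm_le_of_abs_sub_mul_apply_le (K := K * C) P.one_le P.le_dim hη
    (by positivity) A C
  refine ⟨C', fun ε u Gu Hu h p hp => ?_⟩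
  have hp_closure := frontier_subset_closure hp
  obtain ⟨r, hr, h_tangent⟩ := h_mixed ε u Gu Hu h p hp
  obtain ⟨ν, hν, hGν⟩ :=
    exists_norm_eq_one_and_apply_eq_norm_mul_inner (P.gradient_ne_zero hp)
  refine h_norm (Hu p) (P.H p) r ν
    (h.isC2Solution.hessian_mem p (P.mem_outerClosedAnnulus_of_mem_frontier h.mem_Ioo.2 hp))
    (P.isC2Solution.hessian_symm hp_closure) (hC.norm_hessian_le p hp_closure)
    (h_shrink p hp_closure) hr hν fun τ hτ v => ?_
  set e := NormedSpace.normalize τ with he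
  have hτ_eq : τ = ‖τ‖ • e := (NormedSpace.norm_smul_normalize τ).symm
  have he_norm : ‖e‖ ≤ 1 := by
    rcases eq_or_ne τ 0 with rfl | hτ_ne
    · simp [he]
    · exact (NormedSpace.norm_normalize_eq_one_iff.2 hτ_ne).le
  have he_tangent : P.G p e = 0 := by
    rw [hGν, he, NormedSpace.normalize, inner_smul_right, hτ, mul_zero, mul_zero]
  calc |Hu p v τ - r * P.H p v τ| = ‖τ‖ * |Hu p v e - r * P.H p v e| := by
        nth_rw 1 2 [hτ_eq]
        rw [map_smul, map_smul, smul_eq_mul, smul_eq_mul, mul_left_comm, ← mul_sub, abs_mul,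
          abs_norm]
    _ ≤ ‖τ‖ * (K * (C * |⟪ν, v⟫|)) := by
        grw [h_tangent e he_norm he_tangent v, hGν, abs_mul, abs_of_nonneg (norm_nonneg (P.G p)),
          hC.norm_gradient_le p hp_closure]
    _ = K * C * |⟪ν, v⟫| * ‖τ‖ := by ring

lemma norm_toEuclideanCLM_bilMatrix_le (B : Bil n) :
    ‖Matrix.toEuclideanCLM (𝕜 := ℝ) (bilMatrix B)‖ ≤ ‖B‖ := by
  refine ContinuousLinearMap.opNorm_le_bound _ (norm_nonneg B) fun y => ?_
  set T := Matrix.toEuclideanCLM (𝕜 := ℝ) (bilMatrix B)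
  have h_inner : ⟪T y, T y⟫ = B (T y) y := by
    rw [bil_apply_eq_dotProduct, EuclideanSpace.inner_eq_star_dotProduct, dotProduct_comm]
    simp [T]
  have h_sq : ‖T y‖ * ‖T y‖ ≤ ‖B‖ * ‖y‖ * ‖T y‖ :=
    calc ‖T y‖ * ‖T y‖ = B (T y) y := by rw [← real_inner_self_eq_norm_mul_norm, h_inner]
      _ ≤ ‖B‖ * ‖T y‖ * ‖y‖ := (le_abs_self _).trans (B.le_opNorm₂ _ _)
      _ = ‖B‖ * ‖y‖ * ‖T y‖ := by ring
  rcases (norm_nonneg (T y)).eq_or_lt with h_zero | h_pos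
  · rw [← h_zero]
    positivity
  · exact le_of_mul_le_mul_right h_sq h_pos

end

/-! ### The main estimate -/

section

lemma exists_norm_fderivWithin_fderivWithin_sub_le {E F : Type*} [NormedAddCommGroup E]
    [NormedSpace ℝ E] [NormedAddCommGroup F] [NormedSpace ℝ F] {f : E → F} {S : Set E}
    (hS : IsCompact S) (hS_convex : Convex ℝ S) (hS_unique : UniqueDiffOn ℝ S)
    (hf : ContDiffOn ℝ 3 f S) :
    ∃ L, ∀ x ∈ S, ∀ y ∈ S,
      ‖fderivWithin ℝ (fderivWithin ℝ f S) S y - fderivWithin ℝ (fderivWithin ℝ f S) S x‖ ≤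
        L * ‖y - x‖ := by
  have hf₁ : ContDiffOn ℝ 2 (fderivWithin ℝ f S) S := hf.fderivWithin hS_unique (by norm_num)
  have hf₂ : ContDiffOn ℝ 1 (fderivWithin ℝ (fderivWithin ℝ f S) S) S :=
    hf₁.fderivWithin hS_unique (by norm_num)
  obtain ⟨L, hL⟩ := hS.exists_bound_of_continuousOn
    (hf₂.continuousOn_fderivWithin hS_unique le_rfl)
  exact ⟨L, fun x hx y hy => hS_convex.norm_image_sub_le_of_norm_fderivWithin_le
    (hf₂.differentiableOn one_ne_zero) hL hx hy⟩

lemma exists_ringProblem {n k : ℕ} (hk : 1 ≤ k) (hkn : k ≤ n) {Ω₁ : Set (Euc n)}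
    (hΩ_convex : Convex ℝ Ω₁) (hΩ_bdd : IsBounded Ω₁) (hΩ_smooth : HasSmoothBoundary Ω₁) {ε₀ : ℝ}
    (hε₀ : 0 < ε₀) (hε₀_ball : closedBall (0 : Euc n) ε₀ ⊆ Ω₁) {ψ : Euc n → ℝ}
    (hψ : IsSol22 k Ω₁ ψ) {M : ℝ} (hM : 0 < M) (hMψ : ∀ x ∈ closure Ω₁, -M ≤ ψ x)
    (hM_sub : ∀ ε ∈ Ioo (0 : ℝ) ε₀, ∀ x ∈ frontier Ω₁, underSol k 0 ε M x ≤ 0) :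
    ∃ P : RingProblem n k, P.Ω = Ω₁ ∧ P.ε₀ = ε₀ ∧ P.M = M := by
  obtain ⟨ρ, hρ, hΩρ, hdρ⟩ := hΩ_smooth
  obtain ⟨hψ_smooth, hψ_eq, hψ_zero⟩ := hψ
  have hρΩ : IsDefiningFunction ρ Ω₁ := ⟨contDiff_infty.1 hρ 2, hΩρ, hdρ⟩
  have h_unique := uniqueDiffOn_closure hρΩ.isOpen hΩ_convex
    ⟨0, hε₀_ball (mem_closedBall_self hε₀.le)⟩
  obtain ⟨L, hL⟩ := exists_norm_fderivWithin_fderivWithin_sub_le hΩ_bdd.isCompact_closure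
    hΩ_convex.closure h_unique (contDiffOn_infty.1 hψ_smooth 3)
  exact ⟨{
    one_le := hk
    le_dim := hkn
    Ω := Ω₁
    convex := hΩ_convex
    isBounded := hΩ_bdd
    ρ := ρ
    isDefiningFunction := hρΩ
    ε₀ := ε₀
    ε₀_pos := hε₀
    closedBall_subset := hε₀_ball
    ψ := ψ
    G := _
    H := _
    isC2Solution := isC2Solution_of_contDiffOn hρΩ.isOpen subset_closure subset_rfl h_unique
      (contDiffOn_infty.1 hψ_smooth 2) hψ_eq
    hessianLip := L
    norm_hessian_sub_le := hL
    ψ_eq_zero := hψ_zero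
    M := M
    M_pos := hM
    neg_M_le_ψ := hMψ
    underSol_nonpos := hM_sub }, rfl, rfl, rfl⟩

lemma underSol_le_underSol {n k : ℕ} {M M' : ℝ} (hM : M ≤ M') (x₀ : Euc n) (ε : ℝ) (x : Euc n) :
    underSol k x₀ ε M' x ≤ underSol k x₀ ε M x :=
  sub_le_sub_left hM _

end

end KHessian

/-- `C²` boundary estimates on `∂Ω₁`, uniform in `ε`. -/
theorem statement12 {n k : ℕ} (hk : 1 ≤ k) (hkn : k ≤ n)
    (Ω₁ : Set (Euc n)) (hΩo : IsOpen Ω₁) (hΩconv : Convex ℝ Ω₁)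
    (hΩb : IsBounded Ω₁) (hΩs : HasSmoothBoundary Ω₁)
    (ε₀ : ℝ) (hε₀ : 0 < ε₀) (hball : closedBall (0 : Euc n) ε₀ ⊆ Ω₁)
    (ψ : Euc n → ℝ) (hψ : IsSol22 k Ω₁ ψ)
    (M₁ : ℝ) (hM₁ : 0 < M₁) (hM₁ψ : ∀ x ∈ closure Ω₁, -ψ x < M₁)
    (hM₁sub : ∀ ε ∈ Ioo (0:ℝ) ε₀, ∀ x ∈ frontier Ω₁, underSol k (0 : Euc n) ε M₁ x ≤ 0)
    (M : ℝ) (hM : M₁ < M)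
 :
    ∃ C : ℝ, 0 < C ∧ ∀ ε ∈ Ioo (0:ℝ) ε₀, ∀ u : Euc n → ℝ,
      IsSol k Ω₁ (0 : Euc n) ε M u → ∀ p ∈ frontier Ω₁,
        hessOpNormWithin u (ringSet Ω₁ (0 : Euc n) ε) p < C := by
  obtain ⟨P, rfl, rfl, rfl⟩ := KHessian.exists_ringProblem hk hkn hΩconv hΩb hΩs hε₀ hball hψ
    (hM₁.trans hM) (fun x hx => by linarith [hM₁ψ x hx]) fun ε hε x hx =>
      (KHessian.underSol_le_underSol hM.le 0 ε x).trans (hM₁sub ε hε x hx)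
  obtain ⟨C, hC⟩ := P.exists_norm_hessian_le
  refine ⟨max C 0 + 1, by positivity, fun ε hε u hu p hp => ?_⟩
  obtain ⟨Gu, Hu, h_sol, h_hess⟩ := P.exists_isRingSol hε hu
  calc hessOpNormWithin u (ringSet P.Ω 0 ε) p ≤ ‖Hu p‖ := by
        rw [hessOpNormWithin, h_hess p hp]
        exact KHessian.norm_toEuclideanCLM_bilMatrix_le (Hu p)
    _ ≤ C := hC ε u Gu Hu h_sol p hp
    _ < max C 0 + 1 := lt_add_of_le_of_pos (le_max_left C 0) one_pos
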